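/- Let n, d ∈ ℕ, q ∈ ℕ∪{0}, K, d⋆, d* ∈ ℕ, β, r, α ∈ (0,∞), τ ∈ (0,∞], s ∈ [0,∞), ν ∈ [0,∞), a, b ∈ (0,∞), and G ∈ (0,∞), N ∈ [1,∞), S ∈ (0,∞], B ∈ (0,∞). Assume d* ≤ d, d*·q ≤ K·q, and not both α < 1 and τ ≥ 1. Set e := β·(min{1,β})^q. Let f̂_n^NN be an empirical φ_h-risk minimizer over F^NN_d(G,N,S,B,∞) based on an i.i.d. sample of size n from P. Then there exist constants c1 ∈ [3,∞) depending only on (d⋆,d*,β,r,q,K,τ,s,a), c2 ∈ (0,∞) depending only on (d,d⋆,d*,β,r,q,K,τ,s,α,ν,a,b), and c3 ∈ (0,∞) depending only on (d⋆,d*,β,r,q), such that whenever c1 ≤ n, c3·log n ≤ G ≤ b·log n, a·(n/(log n)³)^{d*/(d*+(s+2)e)} ≤ N ≤ b·(n/(log n)³)^{d*/(d*+(s+2)e)}, 1 ≤ B ≤ b·n^ν, and a·(log n)·(n/(log n)³)^{d*/(d*+(s+2)e)} ≤ S ≤ b·(log n)·(n/(log n)³)^{d*/(d*+(s+2)e)},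 one has sup{E_{P^⊗n}[E_P(f̂_n^NN)] : P ∈ H^{d,β,r}_{q,K,d*,d⋆} ∩ T^{d,s}_{α,τ}} ≤ c2·((log n)³/n)^{(s+1)e/(d*+(s+2)e)}. -/

import Mathlib

open MeasureTheory ENNReal Set

noncomputable section

namespace ZZS

/-! ## Basic geometry -/

/-- The closed unit cube `[0,1]^m`. -/
def cube (m : ℕ) : Set (Fin m → ℝ) := Set.univ.pi fun _ => Set.Icc (0 : ℝ) 1

/-- The open unit cube `(0,1)^m`. -/
def cubeo (m : ℕ) : Set (Fin m → ℝ) := Set.univ.pi fun _ => Set.Ioo (0 : ℝ) 1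

/-- The label set `{-1, 1} ⊆ ℝ`. -/
def labels : Set ℝ := {-1, 1}

/-- Euclidean distance on `Fin m → ℝ`. -/
def e2 {m : ℕ} (x z : Fin m → ℝ) : ℝ := Real.sqrt (∑ i, (x i - z i) ^ 2)

/-! ## Multi-index partial derivatives and Hölder balls -/

/-- Iterated partial derivative along a list of coordinate directions. -/
def pderivList {m : ℕ} : List (Fin m) → ((Fin m → ℝ) → ℝ) → (Fin m → ℝ) → ℝ
  | [], f => f
  | i :: l, f => pderivList l fun x => fderiv ℝ f x (Pi.single i 1)

/-- The canonical list of directions attached to a multi-index. -/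
def idxList {m : ℕ} (u : Fin m → ℕ) : List (Fin m) :=
  (List.finRange m).flatMap fun i => List.replicate (u i) i

/-- The partial derivative `D^u f` for a multi-index `u`. -/
def Dm {m : ℕ} (u : Fin m → ℕ) (f : (Fin m → ℝ) → ℝ) : (Fin m → ℝ) → ℝ :=
  pderivList (idxList u) f

/-- The order `‖u‖₁` of a multi-index `u`. -/
def mord {m : ℕ} (u : Fin m → ℕ) : ℕ := ∑ i, u i

/-- The Hölder-`β` norm of `f`, suprema taken over the set `S` (value in `ℝ≥0∞`). -/
def holderNormOn (m : ℕ) (β : ℝ) (S : Set (Fin m → ℝ)) (f : (Fin m → ℝ) → ℝ) : ℝ≥0∞ :=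
  (⨆ (u : Fin m → ℕ) (_ : (mord u : ℝ) < β) (x ∈ S), ENNReal.ofReal |Dm u f x|) +
    ⨆ (u : Fin m → ℕ) (_ : (⌈β⌉ : ℝ) - 1 ≤ (mord u : ℝ) ∧ (mord u : ℝ) < β)
      (x ∈ S) (z ∈ S) (_ : x ≠ z),
      ENNReal.ofReal |Dm u f x - Dm u f z| /
        ENNReal.ofReal (e2 x z) ^ (β + 1 - (⌈β⌉ : ℝ))

/-- `⌈β - 1⌉`, the number of derivatives required for Hölder-`β` smoothness. -/
def smoothOrder (β : ℝ) : ℕ := ⌈β - 1⌉₊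

/-- The Hölder ball `B^β_r([0,1]^m)`:  `⌈β-1⌉`-times continuously differentiable functions on
the interior of the cube (with uniformly continuous derivatives, so that they extend
continuously), with Hölder-`β` norm at most `r`. -/
def HolderBall (m : ℕ) (β r : ℝ) : Set ((Fin m → ℝ) → ℝ) :=
  {f | ContinuousOn f (cube m) ∧
    ContDiffOn ℝ (smoothOrder β : ℕ∞) f (cubeo m) ∧
    (∀ u : Fin m → ℕ, (mord u : ℝ) < β → UniformContinuousOn (Dm u f) (cubeo m)) ∧
    holderNormOn m β (cubeo m) f ≤ ENNReal.ofReal r}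

/-! ## Compositional function classes -/

/-- `G^H_m(dstar, β, r)`: Hölder-`β` functions of `dstar` of the `m` coordinates. -/
def GH (m dstar : ℕ) (β r : ℝ) : Set ((Fin m → ℝ) → ℝ) :=
  {f | ∃ (e : Fin dstar → Fin m) (g : (Fin dstar → ℝ) → ℝ),
    StrictMono e ∧ g ∈ HolderBall dstar β r ∧ ∀ x ∈ cube m, f x = g fun j => x (e j)}

/-- `G^M_m(dmax)`: maxima of at most `dmax` coordinates. -/
def GM (m dmax : ℕ) : Set ((Fin m → ℝ) → ℝ) :=
  {f | ∃ (I : Finset (Fin m)) (hI : I.Nonempty), I.card ≤ dmax ∧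
    ∀ x ∈ cube m, f x = I.sup' hI fun i => x i}

/-- The compositional class `G^CHOM_d(q, K, dmax, dstar, β, r)`. -/
def GCHOM (K dmax dstar : ℕ) (β r : ℝ) : ℕ → (d : ℕ) → Set ((Fin d → ℝ) → ℝ)
  | 0, d => {f | ∃ h ∈ GH d dstar β r ∪ GM d dmax, ∀ x ∈ cube d, f x = h x}
  | q + 1, d =>
    {f | ∃ (H : (Fin d → ℝ) → Fin K → ℝ) (g : (Fin K → ℝ) → ℝ),
      (∀ j, (fun x => H x j) ∈ GH d dstar β r ∪ GM d dmax) ∧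
      (∀ x ∈ cube d, H x ∈ cube K) ∧
      g ∈ GCHOM K dmax dstar β r q K ∧ ∀ x ∈ cube d, f x = g (H x)}

/-- The compositional class `G^CH_d(q, K, dstar, β, r)` (no max-value components). -/
def GCH (K dstar : ℕ) (β r : ℝ) : ℕ → (d : ℕ) → Set ((Fin d → ℝ) → ℝ)
  | 0, d => {f | ∃ h ∈ GH d dstar β r, ∀ x ∈ cube d, f x = h x}
  | q + 1, d =>
    {f | ∃ (H : (Fin d → ℝ) → Fin K → ℝ) (g : (Fin K → ℝ) → ℝ),
      (∀ j, (fun x => H x j) ∈ GH d dstar β r) ∧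
      (∀ x ∈ cube d, H x ∈ cube K) ∧
      g ∈ GCH K dstar β r q K ∧ ∀ x ∈ cube d, f x = g (H x)}

/-! ## Losses, risks, and data distributions -/

/-- The sign function (`sgn 0 = 1`). -/
def sgn (t : ℝ) : ℝ := if 0 ≤ t then 1 else -1

/-- The hinge loss. -/
def hinge (t : ℝ) : ℝ := max 0 (1 - t)

/-- The truncation operator `T_F`. -/
def trunc (F t : ℝ) : ℝ := min F (max (-F) t)

/-- The joint distribution `P_{η,Q}` on `[0,1]^d × {-1,1}` with input marginal `Q` and
conditional class probability function `η`. -/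
def jointMeasure {d : ℕ} (η : (Fin d → ℝ) → ℝ) (Q : Measure (Fin d → ℝ)) :
    Measure ((Fin d → ℝ) × ℝ) :=
  Q.bind fun x =>
    ENNReal.ofReal (η x) • Measure.dirac (x, (1 : ℝ)) +
      ENNReal.ofReal (1 - η x) • Measure.dirac (x, (-1 : ℝ))

/-- The 0-1 risk (misclassification error). -/
def risk01 {d : ℕ} (P : Measure ((Fin d → ℝ) × ℝ)) (f : (Fin d → ℝ) → ℝ) : ℝ :=
  (P {p | sgn (f p.1) ≠ p.2}).toReal

/-- The infimum of the 0-1 risk over all measurable functions. -/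
def bayes01 {d : ℕ} (P : Measure ((Fin d → ℝ) × ℝ)) : ℝ :=
  ⨅ g : {g : (Fin d → ℝ) → ℝ // Measurable g}, risk01 P g.1

/-- The excess 0-1 risk. -/
def excess01 {d : ℕ} (P : Measure ((Fin d → ℝ) × ℝ)) (f : (Fin d → ℝ) → ℝ) : ℝ :=
  risk01 P f - bayes01 P

/-- The `φ`-risk. -/
def riskPhi {d : ℕ} (φ : ℝ → ℝ) (P : Measure ((Fin d → ℝ) × ℝ)) (f : (Fin d → ℝ) → ℝ) : ℝ :=
  ∫ p, φ (p.2 * f p.1) ∂P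

/-- The infimum of the `φ`-risk over all measurable functions. -/
def bayesPhi {d : ℕ} (φ : ℝ → ℝ) (P : Measure ((Fin d → ℝ) × ℝ)) : ℝ :=
  ⨅ g : {g : (Fin d → ℝ) → ℝ // Measurable g}, riskPhi φ P g.1

/-- The excess `φ`-risk. -/
def excessPhi {d : ℕ} (φ : ℝ → ℝ) (P : Measure ((Fin d → ℝ) × ℝ)) (f : (Fin d → ℝ) → ℝ) : ℝ :=
  riskPhi φ P f - bayesPhi φ P

/-- A Borel probability measure on `[0,1]^d × {-1,1}`, presented by its input marginal `Q`
(a Borel probability measure concentrated on the cube) and its conditional class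
probability function `η` (measurable, `[0,1]`-valued);  the measure itself is
`jointMeasure η Q`. -/
structure DataDist (d : ℕ) where
  η : (Fin d → ℝ) → ℝ
  Q : Measure (Fin d → ℝ)
  η_meas : Measurable η
  η_mem : ∀ x, η x ∈ Set.Icc (0 : ℝ) 1
  Q_prob : IsProbabilityMeasure Q
  Q_cube : Q (cube d) = 1

/-- The measure on `[0,1]^d × {-1,1}` associated with a `DataDist`. -/
def DataDist.P {d : ℕ} (D : DataDist d) : Measure ((Fin d → ℝ) × ℝ) := jointMeasure D.η D.Q

/-- `x ^ s` for `s ∈ [0,∞]`, with the conventions `x ^ ∞ = 0` for `x < 1` and `1 ^ ∞ = 1`. -/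
def rpowE (x : ℝ≥0∞) (s : ℝ≥0∞) : ℝ≥0∞ :=
  if s = ∞ then (if x < 1 then 0 else if x = 1 then 1 else ∞) else x ^ s.toReal

/-- The Tsybakov noise class `T^{d,s}_{α,τ}` (noise exponent `s ∈ [0,∞]`,
threshold `τ ∈ (0,∞]`). -/
def Tsybakov (d : ℕ) (s : ℝ≥0∞) (α : ℝ) (τ : ℝ≥0∞) : Set (DataDist d) :=
  {P | ∀ t : ℝ, 0 < t → ENNReal.ofReal t ≤ τ →
    P.Q ({x | |2 * P.η x - 1| ≤ t} ∩ cube d) ≤ ENNReal.ofReal α * rpowE (ENNReal.ofReal t) s}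

/-- The class `H^{d,β,r}_{q,K,dstar,dmax}`: distributions whose conditional class probability
agrees a.s. with a member of `G^CHOM`. -/
def HCHOM (d q K dstar dmax : ℕ) (β r : ℝ) : Set (DataDist d) :=
  {P | ∃ f ∈ GCHOM K dmax dstar β r q d, ∀ᵐ x ∂P.Q, P.η x = f x}

/-- `M_{Λ,d}`: Borel probability measures on `[0,1]^d` with a `[0,Λ]`-valued density with
respect to Lebesgue measure. -/
def MLam (d : ℕ) (Λ : ℝ) : Set (Measure (Fin d → ℝ)) :=
  {Q | ∃ g : (Fin d → ℝ) → ℝ, Measurable g ∧ (∀ x, g x ∈ Set.Icc 0 Λ) ∧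
    Q = (volume.restrict (cube d)).withDensity fun x => ENNReal.ofReal (g x)}

/-- The class `H^{d,β,r,Λ}_{q,K,dstar}`: joint laws `P_{η,Q}` with `η ∈ G^CH` (valued in
`[0,1]`) and `Q ∈ M_{Λ,d}`. -/
def HCHL (d q K dstar : ℕ) (β r Λ : ℝ) : Set (DataDist d) :=
  {P | (∃ f ∈ GCH K dstar β r q d, (∀ x ∈ cube d, f x ∈ Set.Icc (0 : ℝ) 1) ∧
      ∀ᵐ x ∂P.Q, P.η x = f x) ∧ P.Q ∈ MLam d Λ}

/-- The class `H^{d,β,r}_{q,K,dstar}`: joint laws `P_{η,Q}` with `η ∈ G^CH` (valued in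
`[0,1]`) and `Q` an arbitrary Borel probability measure on the cube. -/
def HCH (d q K dstar : ℕ) (β r : ℝ) : Set (DataDist d) :=
  {P | ∃ f ∈ GCH K dstar β r q d, (∀ x ∈ cube d, f x ∈ Set.Icc (0 : ℝ) 1) ∧
    ∀ᵐ x ∂P.Q, P.η x = f x}

/-! ## Samples and estimators -/

/-- The law of an i.i.d. sample of size `n` from `μ`. -/
def iid {α : Type*} [MeasurableSpace α] (μ : Measure α) : (n : ℕ) → Measure (Fin n → α)
  | 0 => Measure.dirac fun i => i.elim0
  | n + 1 => (iid μ n).bind fun p => μ.map fun a => Fin.snoc p a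

/-- An estimator: a rule assigning to each sample of size `n` a function `[0,1]^d → ℝ`. -/
def Estimator (d n : ℕ) := (Fin n → (Fin d → ℝ) × ℝ) → (Fin d → ℝ) → ℝ

/-- (Joint) measurability of an estimator. -/
def Estimator.Meas {d n : ℕ} (A : Estimator d n) : Prop :=
  Measurable fun p : (Fin n → (Fin d → ℝ) × ℝ) × (Fin d → ℝ) => A p.1 p.2

/-- The expected excess 0-1 risk `E_{P^{⊗n}}[E_P(f̂_n)]` of an estimator. -/
def expectedExcess01 {d : ℕ} (P : Measure ((Fin d → ℝ) × ℝ)) {n : ℕ} (A : Estimator d n) : ℝ :=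
  ∫ ω, excess01 P (A ω) ∂iid P n

/-- The covering number `N(F, γ)` (uniform norm over `Ω`), valued in `ℝ≥0∞`. -/
def coveringNumber {X : Type*} (Ω : Set X) (F : Set (X → ℝ)) (γ : ℝ) : ℝ≥0∞ :=
  ⨅ (A : Finset (X → ℝ))
    (_ : ↑A ⊆ F ∧ ∀ f ∈ F, ∃ g ∈ A, ∀ x ∈ Ω, |f x - g x| ≤ γ),
    (A.card : ℝ≥0∞)

/-- `f` is an empirical `φ`-risk minimizer over `F` for the sample `ω`. -/
def IsERM {d n : ℕ} (φ : ℝ → ℝ) (F : Set ((Fin d → ℝ) → ℝ))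
    (ω : Fin n → (Fin d → ℝ) × ℝ) (f : (Fin d → ℝ) → ℝ) : Prop :=
  f ∈ F ∧ ∀ g ∈ F,
    (n : ℝ)⁻¹ * ∑ i, φ ((ω i).2 * f ((ω i).1)) ≤ (n : ℝ)⁻¹ * ∑ i, φ ((ω i).2 * g ((ω i).1))

/-! ## ReLU neural networks -/

/-- A feedforward ReLU network with input dimension `d`. -/
structure ReLUNet (d : ℕ) where
  L : ℕ
  width : ℕ → ℕ
  W : (i : ℕ) → Fin (width (i + 1)) → Fin (width i) → ℝ
  v : (i : ℕ) → Fin (width i) → ℝ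
  h0 : width 0 = d
  hL : width (L + 1) = 1

/-- The `i`-th intermediate layer output `W_i σ_{v_i} ⋯ W_1 σ_{v_1} W_0 x`. -/
def ReLUNet.layer {d : ℕ} (net : ReLUNet d) (x : Fin (net.width 0) → ℝ) :
    (i : ℕ) → Fin (net.width (i + 1)) → ℝ
  | 0 => fun j => ∑ k, net.W 0 j k * x k
  | i + 1 => fun j => ∑ k, net.W (i + 1) j k * max 0 (net.layer x i k - net.v (i + 1) k)

/-- The real-valued function computed by a ReLU network. -/
def ReLUNet.eval {d : ℕ} (net : ReLUNet d) (x : Fin d → ℝ) : ℝ :=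
  net.layer (fun j => x (Fin.cast net.h0 j)) net.L (Fin.cast net.hL.symm 0)

/-- The class `F^NN_d(G, N, S, B, Fb)` of ReLU networks with depth `≤ G`, widths `≤ N`,
at most `S` nonzero parameters, parameter magnitudes `≤ B`, and uniform norm on the cube
`≤ Fb`. -/
def FNN (d : ℕ) (G N : ℝ) (S : ℝ≥0∞) (B : ℝ) (Fb : ℝ≥0∞) : Set ((Fin d → ℝ) → ℝ) :=
  {f | ∃ net : ReLUNet d,
    (∀ x, f x = net.eval x) ∧
    (net.L : ℝ) ≤ G ∧
    (∀ i ≤ net.L + 1, (net.width i : ℝ) ≤ N) ∧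
    ((∑ i ∈ Finset.range (net.L + 1),
        (Nat.card {p : Fin (net.width (i + 1)) × Fin (net.width i) // net.W i p.1 p.2 ≠ 0}
          : ℝ≥0∞)) +
      ∑ i ∈ Finset.range net.L,
        (Nat.card {j : Fin (net.width (i + 1)) // net.v (i + 1) j ≠ 0} : ℝ≥0∞)) ≤ S ∧
    (∀ i ≤ net.L, ∀ j k, |net.W i j k| ≤ B) ∧
    (∀ i, 1 ≤ i → i ≤ net.L → ∀ j, |net.v i j| ≤ B) ∧
    ∀ x ∈ cube d, ENNReal.ofReal |f x| ≤ Fb}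

/-! ## Kullback–Leibler divergence -/

open Classical in
/-- The Kullback–Leibler divergence. -/
def KL {X : Type*} [MeasurableSpace X] (P Q : Measure X) : ℝ≥0∞ :=
  if P ≪ Q ∧ Integrable (fun x => Real.log (P.rnDeriv Q x).toReal) P then
    ENNReal.ofReal (∫ x, Real.log (P.rnDeriv Q x).toReal ∂P)
  else ∞

/-- The exponent `e / (dstar/(s+1) + (1 + 1/(s+1))·e)` of the minimax rate, for noise
exponent `s ∈ [0,∞]` (equal to `1` when `s = ∞`). -/
def rateExp (dstar : ℕ) (e : ℝ) (s : ℝ≥0∞) : ℝ :=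
  if s = ∞ then 1
  else e / ((dstar : ℝ) / (s.toReal + 1) + (1 + 1 / (s.toReal + 1)) * e)

/-!
An empirical hinge risk minimizer is controlled by an approximation error, a noise term and the
metric entropy of the network class, and the proof balances the three.

*Approximation.* On a grid of mesh `δ`, a Hölder function is within `O(δ ^ β)` of a localized sum
of Taylor polynomials, which a ReLU network with `O(δ ^ (-dstar))` neurons per layer and
logarithmic depth approximates to the same accuracy; maxima are exact. Composing these networks
approximates `η` up to a margin `t ≍ δ ^ (β * min 1 β ^ q)`, the Hölder exponents below one being
paid at each composition. Clipping `(2η - 1) / t` at `±1` then gives a network with values in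
`[-1,1]` that equals the Bayes classifier wherever `t < |2η - 1|`, so by the noise condition its
excess hinge risk is `O(t ^ (s + 1))`.

*Estimation.* Truncating a function to `[-1,1]` does not increase its hinge risk, and for
truncated `f` the excess hinge risk is `∫ |f - bayes| |2η - 1|`, which bounds the excess 0-1 risk.
The second moment of the hinge loss difference is at most this excess divided by `t`, plus the
mass of the low-noise set `|2η - 1| ≤ t`. Hence a Laplace transform bound over a finite net of the
class gives an oracle inequality whose stochastic error is entropy divided by `n t`, plus
`O(t ^ (s + 1))`.

*Balancing.* The entropy is at most a constant times `(log n) ^ 3 * δ ^ (-dstar)`, and the choice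
`δ ^ (-1) = (n / (log n) ^ 3) ^ (1 / (dstar + (s + 2) e))`, `t = δ ^ e` makes all errors of order
`t ^ (s + 1)`.
-/

/-! ## Sparse ReLU layers -/

/-- The indicator of `t ≠ 0`, summed to count the nonzero parameters of a layer. -/
def indNonzero (t : ℝ) : ℕ := if t = 0 then 0 else 1

lemma indNonzero_zero : indNonzero 0 = 0 := by simp [indNonzero]

lemma indNonzero_le_one (t : ℝ) : indNonzero t ≤ 1 := by
  unfold indNonzero; split_ifs <;> simp

/-- The family `G` arises from the family `F` by one ReLU layer with weights and shifts in
`[-1,1]`, at most `w` output units and at most `w` nonzero parameters. -/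
def SparseLayer {X κ μ : Type*} [Fintype κ] [Fintype μ] (w : ℕ) (F : κ → X → ℝ)
    (G : μ → X → ℝ) : Prop :=
  ∃ (W : μ → κ → ℝ) (v : μ → ℝ), (∀ j k, |W j k| ≤ 1) ∧ (∀ j, |v j| ≤ 1) ∧
    Fintype.card μ ≤ w ∧ ∑ j, (indNonzero (v j) + ∑ k, indNonzero (W j k)) ≤ w ∧
    ∀ j x, G j x = max 0 (∑ k, W j k * F k x - v j)

/-- The family `F` is computed from the inputs `inp` by `L + 1` sparse layers of size `w`. -/
def SparseNet {X ι : Type*} [Fintype ι] (inp : ι → X → ℝ) (w : ℕ) :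
    ℕ → ∀ {κ : Type} [Fintype κ], (κ → X → ℝ) → Prop
  | 0, _, _, F => SparseLayer w inp F
  | L + 1, _, _, F => ∃ (μ : Type) (_ : Fintype μ) (H : μ → X → ℝ),
      SparseNet inp w L H ∧ SparseLayer w H F

namespace SparseLayer

variable {X κ μ κ' μ' : Type*} [Fintype κ] [Fintype μ] [Fintype κ'] [Fintype μ'] {w w' : ℕ}
  {F : κ → X → ℝ} {F' : κ' → X → ℝ} {G : μ → X → ℝ} {G' : μ' → X → ℝ}

lemma mono (h : SparseLayer w F G) (hw : w ≤ w') : SparseLayer w' F G := by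
  obtain ⟨W, v, hW, hv, hμ, hnz, hG⟩ := h
  exact ⟨W, v, hW, hv, hμ.trans hw, hnz.trans hw, hG⟩

lemma nonneg (h : SparseLayer w F G) (j : μ) (x : X) : 0 ≤ G j x := by
  obtain ⟨W, v, -, -, -, -, hG⟩ := h
  exact hG j x ▸ le_max_left _ _

lemma card_le (h : SparseLayer w F G) : Fintype.card μ ≤ w := by
  obtain ⟨_, _, _, _, hμ, _⟩ := h
  exact hμ

lemma of_dense (W : μ → κ → ℝ) (v : μ → ℝ) (hW : ∀ j k, |W j k| ≤ 1) (hv : ∀ j, |v j| ≤ 1)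
    (hw : Fintype.card μ * (1 + Fintype.card κ) ≤ w)
    (hG : ∀ j x, G j x = max 0 (∑ k, W j k * F k x - v j)) : SparseLayer w F G := by
  refine ⟨W, v, hW, hv, (Nat.le_mul_of_pos_right _ (by omega)).trans hw, le_trans ?_ hw, hG⟩
  calc ∑ j, (indNonzero (v j) + ∑ k, indNonzero (W j k))
      ≤ ∑ _j : μ, (1 + ∑ _k : κ, 1) := by gcongr <;> exact indNonzero_le_one _
    _ = Fintype.card μ * (1 + Fintype.card κ) := by simp

lemma select (hF : ∀ k x, 0 ≤ F k x) (e : μ → κ) (hw : Fintype.card μ ≤ w) :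
    SparseLayer w F fun j => F (e j) := by
  classical
  refine ⟨fun j k => if k = e j then 1 else 0, 0, fun j k => ?_, by simp, hw,
    le_trans (le_of_eq ?_) hw, fun j x => by simp [hF]⟩
  · dsimp only; split_ifs <;> simp
  · simp [indNonzero, Finset.sum_ite_eq']

lemma of_isEmpty [IsEmpty μ] : SparseLayer 0 F G :=
  ⟨isEmptyElim, isEmptyElim, isEmptyElim, isEmptyElim, by simp, by simp, isEmptyElim⟩

lemma reindex (h : SparseLayer w F G) (e : μ' ≃ μ) : SparseLayer w F fun j => G (e j) := by
  obtain ⟨W, v, hW, hv, hμ, hnz, hG⟩ := h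
  refine ⟨fun j => W (e j), fun j => v (e j), fun j => hW _, fun j => hv _, ?_, ?_,
    fun j => hG _⟩
  · rwa [Fintype.card_congr e]
  · rwa [e.sum_comp fun j => indNonzero (v j) + ∑ k, indNonzero (W j k)]

lemma stack (h : SparseLayer w F G) (h' : SparseLayer w' F G') :
    SparseLayer (w + w') F (Sum.elim G G') := by
  obtain ⟨W, v, hW, hv, hμ, hnz, hG⟩ := h
  obtain ⟨W', v', hW', hv', hμ', hnz', hG'⟩ := h'
  refine ⟨Sum.elim W W', Sum.elim v v', ?_, ?_, ?_, ?_, ?_⟩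
  · rintro (j | j) k <;> simp [hW, hW']
  · rintro (j | j) <;> simp [hv, hv']
  · rw [Fintype.card_sum]; omega
  · simp only [Fintype.sum_sum_type, Sum.elim_inl, Sum.elim_inr]; omega
  · rintro (j | j) x <;> simp [hG, hG']

lemma par (h : SparseLayer w F G) (h' : SparseLayer w' F' G') :
    SparseLayer (w + w') (Sum.elim F F') (Sum.elim G G') := by
  obtain ⟨W, v, hW, hv, hμ, hnz, hG⟩ := h
  obtain ⟨W', v', hW', hv', hμ', hnz', hG'⟩ := h'
  refine ⟨Sum.elim (fun j => Sum.elim (W j) 0) (fun j => Sum.elim 0 (W' j)), Sum.elim v v',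
    ?_, ?_, ?_, ?_, ?_⟩
  · rintro (j | j) (k | k) <;> simp [hW, hW']
  · rintro (j | j) <;> simp [hv, hv']
  · rw [Fintype.card_sum]; omega
  · simp only [Fintype.sum_sum_type, Sum.elim_inl, Sum.elim_inr, Pi.zero_apply,
      indNonzero_zero, Finset.sum_const_zero, add_zero, zero_add]
    omega
  · rintro (j | j) x <;> simp [hG, hG']

end SparseLayer

namespace SparseNet

variable {X ι : Type*} {κ μ κ' J : Type} [Fintype ι] [Fintype κ] [Fintype μ] [Fintype κ']
  [Fintype J] {inp : ι → X → ℝ} {w w' L L' : ℕ} {F : κ → X → ℝ} {G : μ → X → ℝ}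

lemma mono (h : SparseNet inp w L F) (hw : w ≤ w') : SparseNet inp w' L F := by
  induction L generalizing κ with
  | zero => exact SparseLayer.mono h hw
  | succ L ih =>
    obtain ⟨μ, _, H, hH, hF⟩ := h
    exact ⟨μ, _, H, ih hH, hF.mono hw⟩

lemma nonneg (h : SparseNet inp w L F) (j : κ) (x : X) : 0 ≤ F j x := by
  cases L with
  | zero => exact SparseLayer.nonneg h j x
  | succ L => obtain ⟨μ, _, H, _, hF⟩ := h; exact hF.nonneg j x

lemma card_le (h : SparseNet inp w L F) : Fintype.card κ ≤ w := by
  cases L with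
  | zero => exact SparseLayer.card_le h
  | succ L => obtain ⟨μ, _, H, _, hF⟩ := h; exact hF.card_le

lemma step (h : SparseNet inp w L F) (hG : SparseLayer w F G) : SparseNet inp w (L + 1) G :=
  ⟨κ, _, F, h, hG⟩

lemma trans (h : SparseNet inp w L F) (h' : SparseNet F w L' G) :
    SparseNet inp w (L + L' + 1) G := by
  induction L' generalizing μ with
  | zero => exact h.step h'
  | succ L' ih =>
    obtain ⟨ν, _, H, hH, hG⟩ := h'
    exact ⟨ν, _, H, ih hH, hG⟩

lemma reindex (h : SparseNet inp w L F) (e : κ' ≃ κ) :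
    SparseNet inp w L fun j => F (e j) := by
  cases L with
  | zero => exact SparseLayer.reindex h e
  | succ L => obtain ⟨μ, _, H, hH, hF⟩ := h; exact ⟨μ, _, H, hH, hF.reindex e⟩

lemma par (h : SparseNet inp w L F) (h' : SparseNet inp w' L G) :
    SparseNet inp (w + w') L (Sum.elim F G) := by
  induction L generalizing κ μ with
  | zero => exact SparseLayer.stack h h'
  | succ L ih =>
    obtain ⟨ν, _, H, hH, hF⟩ := h
    obtain ⟨ν', _, H', hH', hG⟩ := h'
    exact ⟨ν ⊕ ν', inferInstance, Sum.elim H H', ih hH hH', hF.par hG⟩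

lemma pad (h : SparseNet inp w L F) (hL : L ≤ L') : SparseNet inp w L' F := by
  induction L', hL using Nat.le_induction with
  | base => exact h
  | succ n _ ih => exact ih.step (SparseLayer.select ih.nonneg id ih.card_le)

lemma select (h : SparseNet inp w L F) (e : μ → κ) (hw : Fintype.card μ ≤ w) :
    SparseNet inp w (L + 1) fun j => F (e j) :=
  h.step (SparseLayer.select h.nonneg e hw)

lemma of_select (hinp : ∀ i x, 0 ≤ inp i x) (e : κ → ι) (hw : Fintype.card κ ≤ w)
    (h : SparseNet (fun j => inp (e j)) w L G) : SparseNet inp w (L + 1) G := by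
  have hsel : SparseNet inp w 0 fun j => inp (e j) := SparseLayer.select hinp e hw
  simpa using hsel.trans h

lemma of_isEmpty [IsEmpty κ] : SparseNet inp 0 L F := by
  induction L with
  | zero => exact SparseLayer.of_isEmpty
  | succ L ih => exact ih.step SparseLayer.of_isEmpty

lemma pi (f : J → X → ℝ) (h : ∀ j, SparseNet inp w L fun _ : Unit => f j) :
    SparseNet inp (Fintype.card J * w) L f := by
  refine Fintype.induction_empty_option (P := fun J _ => ∀ f : J → X → ℝ,
    (∀ j, SparseNet inp w L fun _ : Unit => f j) → SparseNet inp (Fintype.card J * w) L f)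
    (fun α β _ e ih f h => ?_) (fun f _ => ?_) (fun α _ ih f h => ?_) J f h
  · let _ : Fintype α := Fintype.ofEquiv β e.symm
    have hre := (ih (fun a => f (e a)) fun a => h _).reindex e.symm
    rw [← Fintype.card_congr e]
    simpa using hre
  · simpa using of_isEmpty
  · have hopt := ((ih (fun a => f (some a)) fun a => h _).par (h none)).reindex
      (Equiv.optionEquivSumPUnit α)
    rw [Fintype.card_option, add_mul, one_mul]
    convert hopt using 2 with j
    rcases j with _ | j <;> rfl

end SparseNet

/-! ## Elementary ReLU modules -/

lemma eq_max_zero {a b : ℝ} (ha : 0 ≤ a) (h : b = a) : a = max 0 b := by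
  rw [h, max_eq_right ha]

/-- The tent map of `[0,1]`, whose iterates generate the parabola `y - y²`. -/
def tentMap (y : ℝ) : ℝ := 1 - |2 * y - 1|

lemma tentMap_mem {y : ℝ} (hy : y ∈ Icc (0 : ℝ) 1) : tentMap y ∈ Icc (0 : ℝ) 1 := by
  have habs : |2 * y - 1| ≤ 1 := abs_le.2 ⟨by linarith [hy.1], by linarith [hy.2]⟩
  exact ⟨sub_nonneg.2 habs, sub_le_self _ (abs_nonneg _)⟩

lemma sub_sq_eq_tentMap (y : ℝ) :
    y - y ^ 2 = tentMap y / 4 + (tentMap y - tentMap y ^ 2) / 4 := by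
  have habs : |2 * y - 1| ^ 2 = (2 * y - 1) ^ 2 := sq_abs _
  unfold tentMap
  linarith

lemma tentMap_eq_max (y : ℝ) :
    tentMap y = 1 - 2 * max 0 (y - 1 / 2) - 2 * max 0 (1 / 2 - y) := by
  unfold tentMap
  rcases le_total (1 / 2) y with h | h
  · rw [abs_of_nonneg (by linarith), max_eq_right (by linarith), max_eq_left (by linarith)]
    ring
  · rw [abs_of_nonpos (by linarith), max_eq_left (by linarith), max_eq_right (by linarith)]
    ring

section Modules

variable {X : Type*}

lemma sparseNet_tentMap_step {y A x : X → ℝ} {c : ℝ} (hy : ∀ t, y t ∈ Icc (0 : ℝ) 1)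
    (hA : ∀ t, 0 ≤ A t) (hx : ∀ t, 0 ≤ x t) (hc₀ : 0 ≤ c) (hc₁ : c ≤ 1) :
    SparseNet ![y, A, x] 24 1
      ![fun t => tentMap (y t), fun t => A t + c * tentMap (y t), x] := by
  let pos : X → ℝ := fun t => max 0 (y t - 1 / 2)
  let neg : X → ℝ := fun t => max 0 (1 / 2 - y t)
  have split : SparseLayer 24 ![y, A, x] ![pos, pos, neg, neg, A, x] := by
    refine .of_dense ![![1, 0, 0], ![1, 0, 0], ![-1, 0, 0], ![-1, 0, 0], ![0, 1, 0],
      ![0, 0, 1]] ![1 / 2, 1 / 2, -1 / 2, -1 / 2, 0, 0] (fun j k => ?_) (fun j => ?_) (by simp)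
      fun j t => ?_
    · fin_cases j <;> fin_cases k <;> simp
    · fin_cases j <;> norm_num [abs_le]
    · fin_cases j <;> simp [Fin.sum_univ_succ, pos, neg, hA, hx]
      all_goals congr 1; ring
  have combine : SparseLayer 24 ![pos, pos, neg, neg, A, x]
      ![fun t => tentMap (y t), fun t => A t + c * tentMap (y t), x] := by
    refine .of_dense ![![-1, -1, -1, -1, 0, 0], ![-c, -c, -c, -c, 1, 0], ![0, 0, 0, 0, 0, 1]]
      ![-1, -c, 0] (fun j k => ?_) (fun j => ?_) (by simp) fun j t => ?_
    · fin_cases j <;> fin_cases k <;> simp [abs_of_nonneg hc₀, hc₁]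
    · fin_cases j <;> simp [abs_of_nonneg hc₀, hc₁]
    · have htent : 0 ≤ tentMap (y t) := (tentMap_mem (hy t)).1
      fin_cases j
      · refine eq_max_zero htent ?_
        simp [Fin.sum_univ_succ, tentMap_eq_max, pos, neg]; ring
      · refine eq_max_zero (add_nonneg (hA t) (mul_nonneg hc₀ htent)) ?_
        simp [Fin.sum_univ_succ, tentMap_eq_max, pos, neg]; ring
      · simp [Fin.sum_univ_succ, hx]
  exact ⟨_, _, _, split, combine⟩

lemma exists_sparseNet_sub_sq (x : X → ℝ) (hx : ∀ t, x t ∈ Icc (0 : ℝ) 1) (s : ℕ) :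
    ∃ y A : X → ℝ, SparseNet (fun _ : Unit => x) 24 (2 * s) ![y, A, x] ∧
      (∀ t, y t ∈ Icc (0 : ℝ) 1) ∧
      ∀ t, x t - x t ^ 2 = A t + (y t - y t ^ 2) / 4 ^ s := by
  induction s with
  | zero =>
    refine ⟨x, 0, ?_, hx, by simp⟩
    refine SparseLayer.of_dense ![fun _ => 1, fun _ => 0, fun _ => 1] 0 (fun j k => ?_)
      (by simp) (by simp) fun j t => ?_
    · fin_cases j <;> simp
    · fin_cases j <;> simp [(hx t).1]
  | succ s ih =>
    obtain ⟨y, A, hnet, hy, hA⟩ := ih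
    refine ⟨fun t => tentMap (y t), fun t => A t + (4 ^ (s + 1))⁻¹ * tentMap (y t),
      hnet.trans (sparseNet_tentMap_step hy (hnet.nonneg 1) (fun t => (hx t).1) (by positivity)
        (inv_le_one_of_one_le₀ (one_le_pow₀ (by norm_num)))), fun t => tentMap_mem (hy t),
      fun t => ?_⟩
    rw [hA, sub_sq_eq_tentMap (y t)]
    field_simp
    ring

/-- Clipping to `[0,1]`. -/
def clip01 (t : ℝ) : ℝ := min 1 (max 0 t)

lemma clip01_mem (t : ℝ) : clip01 t ∈ Icc (0 : ℝ) 1 :=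
  ⟨le_min zero_le_one (le_max_left _ _), min_le_left _ _⟩

lemma clip01_of_mem {t : ℝ} (h : t ∈ Icc (0 : ℝ) 1) : clip01 t = t := by
  rw [clip01, max_eq_right h.1, min_eq_right h.2]

lemma abs_clip01_sub_le (s t : ℝ) : |clip01 s - clip01 t| ≤ |s - t| := by
  unfold clip01
  calc |min 1 (max 0 s) - min 1 (max 0 t)|
      ≤ max |1 - 1| |max 0 s - max 0 t| := abs_min_sub_min_le_max _ _ _ _
    _ = |max 0 s - max 0 t| := by simp
    _ ≤ max |0 - 0| |s - t| := abs_max_sub_max_le_max _ _ _ _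
    _ = |s - t| := by simp

lemma clip01_eq_max (t : ℝ) : clip01 t = max 0 (1 - max 0 (1 - t)) := by
  unfold clip01; grind

lemma sparseNet_clip01 (z : X → ℝ) :
    SparseNet (fun _ : Unit => z) 2 1 fun _ : Unit => fun t => clip01 (z t) := by
  have flip : ∀ z : X → ℝ, SparseLayer 2 (fun _ : Unit => z)
      fun _ : Unit => fun t => max 0 (1 - z t) := fun z =>
    .of_dense (fun _ _ => -1) (fun _ => -1) (by simp) (by simp) (by simp) fun _ t => by
      simp [neg_add_eq_sub]
  simp only [clip01_eq_max]
  exact ⟨Unit, _, _, flip z, flip _⟩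

lemma sparseNet_half_add_half_abs_sub {p q : X → ℝ} (hp : ∀ t, 0 ≤ p t) (hq : ∀ t, 0 ≤ q t) :
    SparseNet ![p, q] 48 1 ![fun t => (p t + q t) / 2, fun t => |p t - q t| / 2] := by
  have split : SparseLayer 48 ![p, q]
      ![fun t => max 0 (p t - q t), fun t => max 0 (q t - p t), p, q] := by
    refine .of_dense ![![1, -1], ![-1, 1], ![1, 0], ![0, 1]] 0 (fun j k => ?_) (by simp)
      (by simp) fun j t => ?_
    · fin_cases j <;> fin_cases k <;> simp
    · fin_cases j <;> simp [hp, hq, neg_add_eq_sub, ← sub_eq_add_neg]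
  have combine : SparseLayer 48
      ![fun t => max 0 (p t - q t), fun t => max 0 (q t - p t), p, q]
      ![fun t => (p t + q t) / 2, fun t => |p t - q t| / 2] := by
    refine .of_dense ![![0, 0, 1 / 2, 1 / 2], ![1 / 2, 1 / 2, 0, 0]] 0 (fun j k => ?_)
      (by simp) (by simp) fun j t => ?_
    · fin_cases j <;> fin_cases k <;> norm_num [abs_le]
    · fin_cases j
      · refine eq_max_zero (div_nonneg (add_nonneg (hp t) (hq t)) two_pos.le) ?_
        simp [Fin.sum_univ_succ]; ring
      · have habs : |p t - q t| = max 0 (p t - q t) + max 0 (q t - p t) := by grind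
        refine eq_max_zero (div_nonneg (abs_nonneg _) two_pos.le) ?_
        simp [Fin.sum_univ_succ, habs]; ring
  exact ⟨_, _, _, split, combine⟩

lemma sub_sq_div_mem {y : ℝ} (hy : y ∈ Icc (0 : ℝ) 1) (s : ℕ) :
    (y - y ^ 2) / 4 ^ s ∈ Icc (0 : ℝ) (4 ^ s)⁻¹ := by
  have hnonneg : 0 ≤ y - y ^ 2 := by nlinarith [hy.1, hy.2]
  refine ⟨by positivity, ?_⟩
  rw [div_eq_mul_inv]
  exact mul_le_of_le_one_left (by positivity) (by nlinarith [hy.1, hy.2])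

-- Polarization: `p q = m ^ 2 - e ^ 2` for `m = (p + q) / 2` and `e = |p - q| / 2`.
lemma exists_sparseNet_mul (p q : X → ℝ) (hp : ∀ t, p t ∈ Icc (0 : ℝ) 1)
    (hq : ∀ t, q t ∈ Icc (0 : ℝ) 1) (s : ℕ) :
    ∃ out : X → ℝ, SparseNet ![p, q] 48 (2 * s + 6) (fun _ : Unit => out) ∧
      (∀ t, out t ∈ Icc (0 : ℝ) 1) ∧ ∀ t, |out t - p t * q t| ≤ (4 ^ s)⁻¹ := by
  set m : X → ℝ := fun t => (p t + q t) / 2 with hm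
  set e : X → ℝ := fun t => |p t - q t| / 2 with he
  have hm01 (t) : m t ∈ Icc (0 : ℝ) 1 := by grind
  have he01 (t) : e t ∈ Icc (0 : ℝ) 1 := by grind
  obtain ⟨y, A, hnet, hy, hA⟩ := exists_sparseNet_sub_sq m hm01 s
  obtain ⟨y', A', hnet', hy', hA'⟩ := exists_sparseNet_sub_sq e he01 s
  have hme : ∀ (i : Fin 2) t, 0 ≤ (![m, e] : Fin 2 → X → ℝ) i t := by
    intro i t; fin_cases i
    · exact (hm01 t).1
    · exact (he01 t).1
  have squares : SparseNet ![m, e] 48 (2 * s + 1) (Sum.elim ![y, A, m] ![y', A', e]) :=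
    ((SparseNet.of_select hme (fun _ : Unit => 0) (w := 24) (by simp) (by simpa using hnet)).par
      (SparseNet.of_select hme (fun _ : Unit => 1) (w := 24) (by simp) (by simpa using hnet')) :)
  have combine : SparseLayer 48 (Sum.elim ![y, A, m] ![y', A', e])
      (fun _ : Unit => fun t => max 0 (m t - A t - e t + A' t)) := by
    refine .of_dense (fun _ => Sum.elim ![0, -1, 1] ![0, 1, -1]) 0 ?_ (by simp) (by simp)
      fun j t => ?_
    · rintro _ (k | k) <;> fin_cases k <;> simp
    · simp [Fin.sum_univ_succ]; congr 1; ring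
  have hnet := (((sparseNet_half_add_half_abs_sub (fun t => (hp t).1)
    fun t => (hq t).1).trans squares).step combine).trans ((sparseNet_clip01 _).mono (by norm_num))
  refine ⟨_, hnet.pad (by omega), fun t => clip01_mem _, fun t => ?_⟩
  have hpq : p t * q t = m t ^ 2 - e t ^ 2 := by
    simp only [hm, he, div_pow, sq_abs]; ring
  have hpq01 : p t * q t ∈ Icc (0 : ℝ) 1 :=
    ⟨mul_nonneg (hp t).1 (hq t).1, mul_le_one₀ (hp t).2 (hq t).1 (hq t).2⟩
  rw [← clip01_of_mem hpq01, ← max_eq_right hpq01.1]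
  refine (abs_clip01_sub_le _ _).trans ((abs_max_sub_max_le_max _ _ _ _).trans ?_)
  have hy01 := sub_sq_div_mem (hy t) s
  have hy01' := sub_sq_div_mem (hy' t) s
  rw [sub_self, abs_zero, max_eq_right (abs_nonneg _), abs_le]
  constructor <;> linarith [hA t, hA' t, hy01.1, hy01.2, hy01'.1, hy01'.2]

lemma sparseNet_max (p q : X → ℝ) (hp : ∀ t, 0 ≤ p t) :
    SparseNet ![p, q] 48 1 fun _ : Unit => fun t => max (p t) (q t) := by
  have split : SparseLayer 48 ![p, q] ![p, fun t => max 0 (q t - p t)] := by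
    refine .of_dense ![![1, 0], ![-1, 1]] 0 (fun j k => ?_) (by simp) (by simp) fun j t => ?_
    · fin_cases j <;> fin_cases k <;> simp
    · fin_cases j <;> simp [hp, neg_add_eq_sub]
  have combine : SparseLayer 48 ![p, fun t => max 0 (q t - p t)]
      (fun _ : Unit => fun t => max (p t) (q t)) := by
    refine .of_dense (fun _ => ![1, 1]) 0 (fun _ k => ?_) (by simp) (by simp) fun _ t => ?_
    · fin_cases k <;> simp
    · have hmax : max (p t) (q t) = p t + max 0 (q t - p t) := by grind
      refine eq_max_zero ((hp t).trans (le_max_left _ _)) ?_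
      simp [hmax]
  exact ⟨_, _, _, split, combine⟩

lemma sparseNet_two_pow_mul (z : X → ℝ) (hz : ∀ t, 0 ≤ z t) (k : ℕ) :
    SparseNet (fun _ : Unit => z) 6 (k + 1) fun _ : Unit => fun t => 2 ^ k * z t := by
  have doubled : SparseNet (fun _ : Unit => z) 6 k fun _ : Fin 2 => fun t => 2 ^ k * z t := by
    induction k with
    | zero =>
      simp only [pow_zero, one_mul]
      exact SparseLayer.select (F := fun _ : Unit => z) (fun _ t => hz t)
        (fun _ : Fin 2 => ()) (by simp)
    | succ k ih =>
      refine ih.step (.of_dense (fun _ _ => 1) 0 (by simp) (by simp) (by simp) fun j t => ?_)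
      refine eq_max_zero (mul_nonneg (by positivity) (hz t)) ?_
      simp; ring
  exact doubled.select (fun _ => 0) (by simp)

lemma exists_sparseNet_foldr (op : ℝ → ℝ → ℝ) (e δ : ℝ) (L : ℕ) (he : e ∈ Icc (0 : ℝ) 1)
    (hop : ∀ a ∈ Icc (0 : ℝ) 1, ∀ b ∈ Icc (0 : ℝ) 1, ∀ b' ∈ Icc (0 : ℝ) 1,
      |op a b - op a b'| ≤ |b - b'|)
    (hop01 : ∀ a ∈ Icc (0 : ℝ) 1, ∀ b ∈ Icc (0 : ℝ) 1, op a b ∈ Icc (0 : ℝ) 1)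
    (hnet : ∀ p q : X → ℝ, (∀ t, p t ∈ Icc (0 : ℝ) 1) → (∀ t, q t ∈ Icc (0 : ℝ) 1) →
      ∃ out : X → ℝ, SparseNet ![p, q] 48 L (fun _ : Unit => out) ∧
        (∀ t, out t ∈ Icc (0 : ℝ) 1) ∧ ∀ t, |out t - op (p t) (q t)| ≤ δ)
    (D : ℕ) (p : Fin D → X → ℝ) (hp : ∀ j t, p j t ∈ Icc (0 : ℝ) 1) :
    ∃ out : X → ℝ, SparseNet p (48 + 2 * D) ((L + 3) * D) (fun _ : Unit => out) ∧
      (∀ t, out t ∈ Icc (0 : ℝ) 1) ∧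
      (∀ t, (List.ofFn fun j => p j t).foldr op e ∈ Icc (0 : ℝ) 1) ∧
      ∀ t, |out t - (List.ofFn fun j => p j t).foldr op e| ≤ D * δ := by
  induction D with
  | zero =>
    refine ⟨fun _ => e, ?_, fun _ => he, fun _ => by simpa using he, by simp⟩
    exact SparseLayer.of_dense 0 (fun _ => -e) (by simp)
      (fun _ => by rw [abs_neg, abs_of_nonneg he.1]; exact he.2) (by simp) (by simp [he.1])
  | succ D ih =>
    obtain ⟨tail, htail, htail01, hfold01, hdist⟩ := ih (fun j => p j.succ) fun j => hp _
    obtain ⟨out, hout, hout01, hδ⟩ := hnet (p 0) tail (hp 0) htail01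
    have hp₀ (i t) : 0 ≤ p i t := (hp i t).1
    have tailNet : SparseNet p (48 + 2 * D) ((L + 3) * D + 1) fun _ : Unit => tail :=
      .of_select hp₀ Fin.succ (by simp; omega) htail
    have headNet : SparseNet p 1 ((L + 3) * D + 1) fun _ : Unit => p 0 :=
      (show SparseNet p 1 0 (fun _ : Unit => p 0) from
        SparseLayer.select hp₀ (fun _ => 0) (by simp)).pad (by omega)
    have pairNet : SparseNet p (48 + 2 * (D + 1)) ((L + 3) * D + 2) ![p 0, tail] := by
      have hpair := ((headNet.par tailNet).mono (by omega : _ ≤ 48 + 2 * (D + 1))).select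
        ![Sum.inl (), Sum.inr ()] (by simp; omega)
      convert hpair using 2 with j
      fin_cases j <;> rfl
    simp only [List.ofFn_succ, List.foldr_cons]
    refine ⟨out, (pairNet.trans (hout.mono (by omega))).pad (by ring_nf; omega), hout01,
      fun t => hop01 _ (hp 0 t) _ (hfold01 t), fun t => ?_⟩
    set fold := (List.ofFn fun j : Fin D => p j.succ t).foldr op e
    calc |out t - op (p 0 t) fold|
        ≤ |out t - op (p 0 t) (tail t)| + |op (p 0 t) (tail t) - op (p 0 t) fold| :=
          abs_sub_le _ _ _
      _ ≤ δ + D * δ := add_le_add (hδ t)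
          ((hop _ (hp 0 t) _ (htail01 t) _ (hfold01 t)).trans (hdist t))
      _ = (D + 1 : ℕ) * δ := by push_cast; ring

lemma exists_sparseNet_prod (s D : ℕ) (p : Fin D → X → ℝ)
    (hp : ∀ j t, p j t ∈ Icc (0 : ℝ) 1) :
    ∃ out : X → ℝ, SparseNet p (48 + 2 * D) ((2 * s + 9) * D) (fun _ : Unit => out) ∧
      (∀ t, out t ∈ Icc (0 : ℝ) 1) ∧ ∀ t, |out t - ∏ j, p j t| ≤ D * (4 ^ s)⁻¹ := by
  obtain ⟨out, hnet, hout, -, hdist⟩ := exists_sparseNet_foldr (· * ·) 1 (4 ^ s)⁻¹ (2 * s + 6)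
    (by simp)
    (fun a ha b _ b' _ => by
      simp only [← mul_sub, abs_mul, abs_of_nonneg ha.1]
      exact mul_le_of_le_one_left (abs_nonneg _) ha.2)
    (fun a ha b hb => ⟨mul_nonneg ha.1 hb.1, mul_le_one₀ ha.2 hb.1 hb.2⟩)
    (fun p q hp hq => exists_sparseNet_mul p q hp hq s) D p hp
  refine ⟨out, hnet, hout, fun t => ?_⟩
  rw [← List.prod_ofFn, List.prod_eq_foldr]
  exact hdist t

lemma foldr_max_ofFn_le {D : ℕ} {p : Fin D → ℝ} {M : ℝ} (hM : 0 ≤ M) (hp : ∀ j, p j ≤ M) :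
    (List.ofFn p).foldr max 0 ≤ M := by
  induction D with
  | zero => simpa using hM
  | succ D ih => simpa using ⟨hp 0, ih fun j => hp j.succ⟩

lemma le_foldr_max_ofFn {D : ℕ} (p : Fin D → ℝ) (j : Fin D) :
    p j ≤ (List.ofFn p).foldr max 0 := by
  induction D with
  | zero => exact j.elim0
  | succ D ih =>
    rw [List.ofFn_succ, List.foldr_cons]
    exact Fin.cases (le_max_left _ _)
      (fun j => (ih (fun j => p j.succ) j).trans (le_max_right _ _)) j

lemma sparseNet_sup' {ι : Type*} [Fintype ι] (p : ι → X → ℝ)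
    (hp : ∀ j t, p j t ∈ Icc (0 : ℝ) 1) (I : Finset ι) (hI : I.Nonempty) {D : ℕ}
    (hD : I.card ≤ D) :
    SparseNet p (48 + 2 * D) (4 * D + 1) fun _ : Unit => fun t => I.sup' hI fun i => p i t := by
  set e : Fin I.card → ι := fun j => (I.equivFin.symm j : ι) with he
  obtain ⟨out, hnet, -, -, hdist⟩ := exists_sparseNet_foldr max 0 0 1 (by simp)
    (fun a _ b _ b' _ => by simpa using abs_max_sub_max_le_max a b a b')
    (fun a ha b hb => ⟨ha.1.trans (le_max_left _ _), max_le ha.2 hb.2⟩)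
    (fun p q hp hq => ⟨_, sparseNet_max p q fun t => (hp t).1,
      fun t => ⟨(hp t).1.trans (le_max_left _ _), max_le (hp t).2 (hq t).2⟩, by simp⟩)
    I.card (fun j => p (e j)) (fun j t => hp _ t)
  have hout : out = fun t => I.sup' hI fun i => p i t := by
    funext t
    have hfold : out t = (List.ofFn fun j => p (e j) t).foldr max 0 := by
      simpa [sub_eq_zero] using hdist t
    obtain ⟨i₀, hi₀⟩ := hI
    rw [hfold]
    refine le_antisymm (foldr_max_ofFn_le
      ((hp i₀ t).1.trans (Finset.le_sup' (fun i => p i t) hi₀))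
      fun j => Finset.le_sup' (fun i => p i t) (I.equivFin.symm j).2)
      (Finset.sup'_le _ _ fun i hi => ?_)
    simpa [he] using le_foldr_max_ofFn (fun j => p (e j) t) (I.equivFin ⟨i, hi⟩)
  rw [← hout]
  exact ((SparseNet.of_select (fun i t => (hp i t).1) e (by simp; omega) hnet).mono
    (by omega)).pad (by omega)

end Modules

/-! ## Local polynomial approximation of Hölder functions -/

/-- The `i`-th partial derivative, junk-valued `0` where `f` is not differentiable; one step of
`pderivList`. -/
def partialDeriv {m : ℕ} (i : Fin m) (f : (Fin m → ℝ) → ℝ) : (Fin m → ℝ) → ℝ :=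
  fun x => fderiv ℝ f x (Pi.single i 1)

lemma isOpen_cubeo (m : ℕ) : IsOpen (cubeo m) :=
  isOpen_set_pi finite_univ fun _ _ => isOpen_Ioo

lemma convex_cubeo (m : ℕ) : Convex ℝ (cubeo m) :=
  convex_pi fun _ _ => convex_Ioo _ _

lemma closure_cubeo (m : ℕ) : closure (cubeo m) = cube m := by
  simp [cubeo, cube, closure_pi_set, closure_Ioo]

lemma cubeo_subset_cube (m : ℕ) : cubeo m ⊆ cube m :=
  fun _ hx i hi => Ioo_subset_Icc_self (hx i hi)

section PartialDeriv

variable {m : ℕ} {U : Set (Fin m → ℝ)}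

lemma partialDeriv_congr (hU : IsOpen U) {f g : (Fin m → ℝ) → ℝ} (h : EqOn f g U) (i : Fin m) :
    EqOn (partialDeriv i f) (partialDeriv i g) U := fun x hx => by
  simp only [partialDeriv]
  rw [(Filter.eventuallyEq_of_mem (hU.mem_nhds hx) h).fderiv_eq]

lemma pderivList_congr (hU : IsOpen U) {f g : (Fin m → ℝ) → ℝ} (h : EqOn f g U)
    (l : List (Fin m)) : EqOn (pderivList l f) (pderivList l g) U := by
  induction l generalizing f g with
  | nil => exact h
  | cons i _ ih => exact ih (partialDeriv_congr hU h i)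

lemma contDiffOn_partialDeriv (hU : IsOpen U) {f : (Fin m → ℝ) → ℝ} {k : ℕ}
    (h : ContDiffOn ℝ ((k + 1 : ℕ) : ℕ∞) f U) (i : Fin m) :
    ContDiffOn ℝ ((k : ℕ) : ℕ∞) (partialDeriv i f) U :=
  (h.fderiv_of_isOpen hU (by norm_cast)).clm_apply contDiffOn_const

lemma partialDeriv_comm (hU : IsOpen U) {f : (Fin m → ℝ) → ℝ} {k : ℕ}
    (h : ContDiffOn ℝ ((k + 2 : ℕ) : ℕ∞) f U) (i j : Fin m) :
    EqOn (partialDeriv i (partialDeriv j f)) (partialDeriv j (partialDeriv i f)) U := by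
  intro x hx
  have hf : ContDiffAt ℝ 2 f x := (h.contDiffAt (hU.mem_nhds hx)).of_le
    (WithTop.coe_le_coe.2 (by exact_mod_cast Nat.le_add_left 2 k))
  have hsymm : IsSymmSndFDerivAt ℝ f x := hf.isSymmSndFDerivAt (by simp)
  have hdiff : DifferentiableAt ℝ (fderiv ℝ f) x :=
    (hf.fderiv_right (m := 1) (by norm_num)).differentiableAt (by norm_num)
  have hsnd (a b : Fin m) : partialDeriv a (partialDeriv b f) x =
      fderiv ℝ (fderiv ℝ f) x (Pi.single a 1) (Pi.single b 1) := by
    change fderiv ℝ (fun y => fderiv ℝ f y (Pi.single b 1)) x (Pi.single a 1) = _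
    rw [fderiv_clm_apply hdiff (differentiableAt_const _)]
    simp
  rw [hsnd, hsnd]
  exact hsymm _ _

lemma pderivList_perm (hU : IsOpen U) {l l' : List (Fin m)} (hl : l.Perm l')
    {f : (Fin m → ℝ) → ℝ} (h : ContDiffOn ℝ (l.length : ℕ∞) f U) :
    EqOn (pderivList l f) (pderivList l' f) U := by
  induction hl generalizing f with
  | nil => exact fun _ _ => rfl
  | cons i _ ih => exact ih (contDiffOn_partialDeriv hU h i)
  | swap i j l =>
    exact pderivList_congr hU (partialDeriv_comm (k := l.length) hU h i j) l
  | trans h1 _ ih1 ih2 =>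
    exact (ih1 h).trans (ih2 (by rwa [← h1.length_eq]))

lemma perm_idxList_count (l : List (Fin m)) : l.Perm (idxList fun i => l.count i) := by
  classical
  rw [List.perm_iff_count]
  intro a
  simp only [idxList, List.count_flatMap, Function.comp_def, List.count_replicate]
  rw [← List.ofFn_eq_map, List.sum_ofFn]
  simp

lemma mord_count_eq_length (l : List (Fin m)) : mord (fun i => l.count i) = l.length := by
  simpa [mord] using Multiset.sum_count_eq_card (s := Finset.univ) (m := (l : Multiset (Fin m)))
    fun a _ => Finset.mem_univ a

end PartialDeriv

lemma ceil_eq_smoothOrder_add_one {β : ℝ} (hβ : 0 < β) : (⌈β⌉ : ℝ) = smoothOrder β + 1 := by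
  have hcast : ((smoothOrder β : ℕ) : ℤ) = ⌈β⌉ - 1 := by
    rw [smoothOrder, Int.natCast_ceil_eq_ceil_of_neg_one_lt (by linarith), Int.ceil_sub_one]
  have hceil : ⌈β⌉ = (smoothOrder β : ℤ) + 1 := by omega
  rw [hceil]; push_cast; ring

lemma smoothOrder_lt {β : ℝ} (hβ : 0 < β) : (smoothOrder β : ℝ) < β := by
  have := Int.ceil_lt_add_one β
  rw [ceil_eq_smoothOrder_add_one hβ] at this
  linarith

lemma le_smoothOrder_add_one {β : ℝ} (hβ : 0 < β) : β ≤ smoothOrder β + 1 := by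
  rw [← ceil_eq_smoothOrder_add_one hβ]; exact Int.le_ceil β

lemma e2_pos {m : ℕ} {x z : Fin m → ℝ} (h : x ≠ z) : 0 < e2 x z := by
  obtain ⟨i, hi⟩ := Function.ne_iff.1 h
  exact Real.sqrt_pos.2 (Finset.sum_pos' (fun i _ => sq_nonneg _)
    ⟨i, Finset.mem_univ _, by have := sub_ne_zero.2 hi; positivity⟩)

lemma e2_le_mul_norm {m : ℕ} (x z : Fin m → ℝ) : e2 x z ≤ m * ‖x - z‖ := by
  unfold e2
  rw [Real.sqrt_le_left (by positivity)]
  calc ∑ i, (x i - z i) ^ 2 ≤ ∑ _i : Fin m, ‖x - z‖ ^ 2 := by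
        refine Finset.sum_le_sum fun i _ => ?_
        rw [← sq_abs]
        exact pow_le_pow_left₀ (abs_nonneg _) (norm_le_pi_norm (x - z) i) 2
    _ = m * ‖x - z‖ ^ 2 := by simp
    _ ≤ (m * ‖x - z‖) ^ 2 := by
        rw [mul_pow]
        have : (m : ℝ) ≤ (m : ℝ) ^ 2 := by exact_mod_cast Nat.le_self_pow (by norm_num) m
        gcongr

section HolderBall

variable {m : ℕ} {β r : ℝ} {f : (Fin m → ℝ) → ℝ} {l : List (Fin m)} {x z : Fin m → ℝ}

lemma HolderBall.pderivList_eq_Dm (hf : f ∈ HolderBall m β r) (hl : l.length ≤ smoothOrder β)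
    (hx : x ∈ cubeo m) : pderivList l f x = Dm (fun i => l.count i) f x :=
  pderivList_perm (isOpen_cubeo m) (perm_idxList_count l)
    (hf.2.1.of_le (by exact_mod_cast hl)) hx

lemma HolderBall.abs_pderivList_le (hβ : 0 < β) (hr : 0 < r) (hf : f ∈ HolderBall m β r)
    (hl : l.length ≤ smoothOrder β) (hx : x ∈ cubeo m) : |pderivList l f x| ≤ r := by
  have hsup := le_self_add.trans hf.2.2.2
  simp only [iSup_le_iff] at hsup
  have horder : (mord (fun i => l.count i) : ℝ) < β := by
    rw [mord_count_eq_length]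
    exact lt_of_le_of_lt (by exact_mod_cast hl) (smoothOrder_lt hβ)
  rw [pderivList_eq_Dm hf hl hx]
  exact (ENNReal.ofReal_le_ofReal_iff hr.le).1 (hsup _ horder x hx)

lemma HolderBall.abs_pderivList_sub_le (hβ : 0 < β) (hr : 0 < r) (hf : f ∈ HolderBall m β r)
    (hl : l.length = smoothOrder β) (hx : x ∈ cubeo m) (hz : z ∈ cubeo m) :
    |pderivList l f x - pderivList l f z| ≤ r * (m * ‖x - z‖) ^ (β - smoothOrder β) := by
  have hexp_pos : 0 < β - smoothOrder β := sub_pos.2 (smoothOrder_lt hβ)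
  rcases eq_or_ne x z with rfl | hne
  · simp [Real.zero_rpow hexp_pos.ne']
  have hsup := le_add_self.trans hf.2.2.2
  simp only [iSup_le_iff] at hsup
  have horder : (⌈β⌉ : ℝ) - 1 ≤ mord (fun i => l.count i) ∧
      (mord (fun i => l.count i) : ℝ) < β := by
    rw [mord_count_eq_length, hl, ceil_eq_smoothOrder_add_one hβ]
    exact ⟨by linarith, smoothOrder_lt hβ⟩
  have hexp : β + 1 - (⌈β⌉ : ℝ) = β - smoothOrder β := by
    rw [ceil_eq_smoothOrder_add_one hβ]; ring
  have he2 := e2_pos hne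
  have hquot := hsup _ horder x hx z hz hne
  rw [hexp, ENNReal.ofReal_rpow_of_pos he2, ← ENNReal.ofReal_div_of_pos (by positivity),
    ENNReal.ofReal_le_ofReal_iff hr.le, div_le_iff₀ (by positivity)] at hquot
  rw [pderivList_eq_Dm hf hl.le hx, pderivList_eq_Dm hf hl.le hz]
  refine hquot.trans ?_
  gcongr
  exact e2_le_mul_norm x z

end HolderBall

/-- The `j`-th iterated directional derivative of `f` in direction `h`, written out in partial
derivatives: the homogeneous Taylor term of order `j`, without its factorial. -/
def iterDirDeriv {m : ℕ} : ℕ → ((Fin m → ℝ) → ℝ) → (Fin m → ℝ) → (Fin m → ℝ) → ℝ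
  | 0, f, _, x => f x
  | j + 1, f, h, x => ∑ i, h i * iterDirDeriv j (partialDeriv i f) h x

lemma hasDerivAt_comp_line {m : ℕ} {f : (Fin m → ℝ) → ℝ} {a h : Fin m → ℝ} {t : ℝ}
    (hf : DifferentiableAt ℝ f (a + t • h)) :
    HasDerivAt (fun t : ℝ => f (a + t • h)) (∑ i, h i * partialDeriv i f (a + t • h)) t := by
  have hline : HasDerivAt (fun t : ℝ => a + t • h) h t := by
    simpa using ((hasDerivAt_id t).smul_const h).const_add a
  refine (hf.hasFDerivAt.comp_hasDerivAt t hline).congr_deriv ?_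
  rw [congrArg (fderiv ℝ f (a + t • h)) (pi_eq_sum_univ' h), map_sum]
  simp [partialDeriv]

lemma hasDerivAt_iterDirDeriv {m : ℕ} {U : Set (Fin m → ℝ)} (hU : IsOpen U) (a h : Fin m → ℝ)
    (j : ℕ) {f : (Fin m → ℝ) → ℝ} (hf : ContDiffOn ℝ ((j + 1 : ℕ) : ℕ∞) f U) {t : ℝ}
    (ht : a + t • h ∈ U) :
    HasDerivAt (fun t : ℝ => iterDirDeriv j f h (a + t • h))
      (iterDirDeriv (j + 1) f h (a + t • h)) t := by
  induction j generalizing f with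
  | zero =>
    exact hasDerivAt_comp_line ((hf.contDiffAt (hU.mem_nhds ht)).differentiableAt (by simp))
  | succ j ih =>
    exact HasDerivAt.fun_sum (u := Finset.univ) fun i _ =>
      (ih (contDiffOn_partialDeriv hU hf i)).const_mul (h i)

lemma abs_iterDirDeriv_sub_le {m : ℕ} (h x a : Fin m → ℝ) (E : ℝ) (j : ℕ)
    {f : (Fin m → ℝ) → ℝ}
    (hf : ∀ l : List (Fin m), l.length = j → |pderivList l f x - pderivList l f a| ≤ E) :
    |iterDirDeriv j f h x - iterDirDeriv j f h a| ≤ (m * ‖h‖) ^ j * E := by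
  induction j generalizing f with
  | zero => simpa [iterDirDeriv, pderivList] using hf [] rfl
  | succ j ih =>
    let Δ (i : Fin m) : ℝ :=
      iterDirDeriv j (partialDeriv i f) h x - iterDirDeriv j (partialDeriv i f) h a
    have hΔ (i) : |Δ i| ≤ (m * ‖h‖) ^ j * E := ih fun l hl => hf (i :: l) (by simp [hl])
    simp only [iterDirDeriv, ← Finset.sum_sub_distrib, ← mul_sub]
    calc |∑ i, h i * Δ i|
        ≤ ∑ i, |h i * Δ i| := Finset.abs_sum_le_sum_abs _ _
      _ ≤ ∑ _i : Fin m, ‖h‖ * ((m * ‖h‖) ^ j * E) := by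
          refine Finset.sum_le_sum fun i _ => ?_
          rw [abs_mul]
          exact mul_le_mul (norm_le_pi_norm h i) (hΔ i) (abs_nonneg _) (norm_nonneg _)
      _ = (m * ‖h‖) ^ (j + 1) * E := by simp; ring

lemma hasDerivAt_taylorSum (c : ℕ → ℝ) (k : ℕ) (t : ℝ) :
    HasDerivAt (fun t => ∑ j ∈ Finset.range (k + 2), c j * (t ^ j / j.factorial))
      (∑ j ∈ Finset.range (k + 1), c (j + 1) * (t ^ j / j.factorial)) t := by
  have hterm (j : ℕ) : HasDerivAt (fun t : ℝ => c (j + 1) * (t ^ (j + 1) / (j + 1).factorial))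
      (c (j + 1) * (t ^ j / j.factorial)) t := by
    refine (((hasDerivAt_pow (j + 1) t).div_const ((j + 1).factorial : ℝ)).const_mul
      (c (j + 1))).congr_deriv ?_
    rw [Nat.factorial_succ]
    push_cast
    field_simp
  simp only [Finset.sum_range_succ' _ (k + 1), pow_zero]
  exact (HasDerivAt.fun_sum fun j _ => hterm j).add_const _

-- Induction on `k`: the remainder vanishes at `0` and has the remainder of the chain
-- `g 1, g 2, …` as its derivative.
lemma abs_sub_taylorSum_le (k : ℕ) (g : ℕ → ℝ → ℝ) (E : ℝ)
    (hg : ∀ j < k, ∀ t ∈ Icc (0 : ℝ) 1, HasDerivAt (g j) (g (j + 1) t) t)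
    (hE : ∀ t ∈ Icc (0 : ℝ) 1, |g k t - g k 0| ≤ E) :
    ∀ t ∈ Icc (0 : ℝ) 1,
      |g 0 t - ∑ j ∈ Finset.range (k + 1), g j 0 * (t ^ j / j.factorial)| ≤ E := by
  induction k generalizing g with
  | zero => simpa using hE
  | succ k ih =>
    intro t ht
    have hderiv := ih (fun j => g (j + 1)) (fun j hj => hg (j + 1) (by omega)) hE
    have hmvt := (convex_Icc (0 : ℝ) 1).norm_image_sub_le_of_norm_hasDerivWithin_le
      (fun s hs => ((hg 0 (by omega) s hs).sub
        (hasDerivAt_taylorSum (g · 0) k s)).hasDerivWithinAt)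
      (C := E) hderiv (left_mem_Icc.2 zero_le_one) ht
    have hE0 : 0 ≤ E := (abs_nonneg _).trans (hE 0 (by simp))
    calc |g 0 t - ∑ j ∈ Finset.range (k + 2), g j 0 * (t ^ j / j.factorial)|
        ≤ E * |t| := by simpa [Finset.sum_range_succ' _ (k + 1)] using hmvt
      _ ≤ E := mul_le_of_le_one_right hE0 (by rw [abs_of_nonneg ht.1]; exact ht.2)

/-- The monomial attached to `α`, a product of `k` factors from `1, x₁, …, x_m`. -/
def monomialEval {m k : ℕ} (α : Fin k → Option (Fin m)) (x : Fin m → ℝ) : ℝ :=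
  ∏ j, (α j).elim 1 x

/-- Polynomials of degree at most `k` with coefficients bounded by `R`. Monomials are indexed
with repetition, by words of length `k` in the letters `1, x₁, …, x_m`, so that products need no
reordering. -/
def IsPoly {m : ℕ} (k : ℕ) (R : ℝ) (p : (Fin m → ℝ) → ℝ) : Prop :=
  ∃ c : (Fin k → Option (Fin m)) → ℝ, (∀ α, |c α| ≤ R) ∧ ∀ x, p x = ∑ α, c α * monomialEval α x

section Poly

variable {m k : ℕ} {R : ℝ} {p : (Fin m → ℝ) → ℝ}

lemma IsPoly.const (c : ℝ) (hc : |c| ≤ R) : IsPoly 0 R (fun _ : Fin m → ℝ => c) :=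
  ⟨fun _ => c, fun _ => hc, fun x => by simp [monomialEval]⟩

lemma IsPoly.linear_mul (hp : IsPoly k R p) (b : Option (Fin m) → ℝ) (hb : ∀ o, |b o| ≤ 1) :
    IsPoly (k + 1) R (fun x => (∑ o, b o * o.elim 1 x) * p x) := by
  obtain ⟨c, hc, hpc⟩ := hp
  refine ⟨fun α => b (α 0) * c (fun j => α j.succ), fun α => ?_, fun x => ?_⟩
  · rw [abs_mul]
    exact (mul_le_of_le_one_left (abs_nonneg _) (hb _)).trans (hc _)
  · simp only [hpc]
    rw [Finset.sum_mul_sum, ← Fintype.sum_prod_type',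
      ← (Fin.consEquiv (fun _ : Fin (k + 1) => Option (Fin m))).sum_comp]
    refine Finset.sum_congr rfl fun q _ => ?_
    simp [Fin.consEquiv, monomialEval, Fin.prod_univ_succ]
    ring

lemma IsPoly.sub_mul (hp : IsPoly k R p) (i : Fin m) (a : ℝ) (ha : |a| ≤ 1) :
    IsPoly (k + 1) R (fun x => (x i - a) * p x) := by
  classical
  convert hp.linear_mul (fun o => o.elim (-a) fun j => if j = i then 1 else 0) ?_ using 3 with x
  · simp [Fintype.sum_option]; ring
  · rintro (_ | j)
    · simpa using ha
    · simp only [Option.elim_some]; split_ifs <;> simp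

lemma IsPoly.succ (hp : IsPoly k R p) : IsPoly (k + 1) R p := by
  convert hp.linear_mul (fun o => o.elim 1 fun _ => 0) ?_ using 2 with x
  · simp [Fintype.sum_option]
  · rintro (_ | j) <;> simp

lemma IsPoly.of_le {k' : ℕ} (hp : IsPoly k R p) (h : k ≤ k') : IsPoly k' R p := by
  induction k', h using Nat.le_induction with
  | base => exact hp
  | succ n _ ih => exact ih.succ

lemma IsPoly.mono {R' : ℝ} (hp : IsPoly k R p) (h : R ≤ R') : IsPoly k R' p := by
  obtain ⟨c, hc, hpc⟩ := hp
  exact ⟨c, fun α => (hc α).trans h, hpc⟩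

lemma IsPoly.mul_const (hp : IsPoly k R p) (b : ℝ) (hb : |b| ≤ 1) :
    IsPoly k R (fun x => p x * b) := by
  obtain ⟨c, hc, hpc⟩ := hp
  refine ⟨fun α => c α * b, fun α => ?_, fun x => ?_⟩
  · rw [abs_mul]
    exact (mul_le_of_le_one_right (abs_nonneg _) hb).trans (hc _)
  · simp only [hpc, Finset.sum_mul, mul_right_comm]

lemma IsPoly.sum {ι : Type*} (s : Finset ι) {R : ι → ℝ} {p : ι → (Fin m → ℝ) → ℝ}
    (h : ∀ i ∈ s, IsPoly k (R i) (p i)) :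
    IsPoly k (∑ i ∈ s, R i) (fun x => ∑ i ∈ s, p i x) := by
  choose! c hc hpc using h
  refine ⟨fun α => ∑ i ∈ s, c i α, fun α => ?_, fun x => ?_⟩
  · exact (Finset.abs_sum_le_sum_abs _ _).trans (Finset.sum_le_sum fun i hi => hc i hi α)
  · simp only [Finset.sum_mul]
    rw [Finset.sum_congr rfl fun i hi => hpc i hi x, Finset.sum_comm]

lemma isPoly_iterDirDeriv {a : Fin m → ℝ} (ha : ∀ i, |a i| ≤ 1) (j : ℕ) {f : (Fin m → ℝ) → ℝ}
    (hf : ∀ l : List (Fin m), l.length = j → |pderivList l f a| ≤ R) :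
    IsPoly j (m ^ j * R) (fun x => iterDirDeriv j f (x - a) a) := by
  induction j generalizing f with
  | zero => exact IsPoly.const _ (by simpa [pderivList] using hf [] rfl)
  | succ j ih =>
    have hsum := IsPoly.sum (Finset.univ : Finset (Fin m)) fun i _ =>
      (ih (f := partialDeriv i f) fun l hl => hf (i :: l) (by simp [hl])).sub_mul i (a i) (ha i)
    exact hsum.mono (le_of_eq (by simp; ring))

end Poly

/-- A bound on the coefficients of the Taylor polynomials of degree `smoothOrder β` of functions
in `HolderBall m β r`, and on the constant of their remainder; the two are merged into one. -/
def taylorConst (m : ℕ) (β r : ℝ) : ℝ :=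
  (∑ j ∈ Finset.range (smoothOrder β + 1), (m : ℝ) ^ j * r) +
    (m : ℝ) ^ smoothOrder β * r * (m : ℝ) ^ (β - smoothOrder β)

/-- The Taylor polynomial of degree `k` of `f` at `a`. -/
def taylorPoly {m : ℕ} (k : ℕ) (f : (Fin m → ℝ) → ℝ) (a x : Fin m → ℝ) : ℝ :=
  ∑ j ∈ Finset.range (k + 1), iterDirDeriv j f (x - a) a * (1 ^ j / j.factorial)

namespace HolderBall

variable {m : ℕ} {β r : ℝ} {f : (Fin m → ℝ) → ℝ} {a x : Fin m → ℝ}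

lemma isPoly_taylorPoly (hβ : 0 < β) (hr : 0 < r) (hf : f ∈ HolderBall m β r)
    (ha : a ∈ cubeo m) :
    IsPoly (smoothOrder β) (taylorConst m β r) (taylorPoly (smoothOrder β) f a) := by
  have ha1 (i) : |a i| ≤ 1 := abs_le.2
    ⟨by linarith [(ha i (mem_univ i)).1], (ha i (mem_univ i)).2.le⟩
  refine (IsPoly.sum (R := fun j => (m : ℝ) ^ j * r) _ fun j hj => ?_).mono
    (le_add_of_nonneg_right (by positivity))
  have hjk : j ≤ smoothOrder β := by have := Finset.mem_range.1 hj; omega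
  refine ((isPoly_iterDirDeriv ha1 j fun l hl =>
    abs_pderivList_le hβ hr hf (hl.trans_le hjk) ha).mul_const _ ?_).of_le hjk
  rw [one_pow, abs_of_nonneg (by positivity)]
  exact div_le_one_of_le₀ (by exact_mod_cast Nat.succ_le_of_lt j.factorial_pos) (by positivity)

lemma abs_sub_taylorPoly_le (hβ : 0 < β) (hr : 0 < r) (hf : f ∈ HolderBall m β r)
    (ha : a ∈ cubeo m) (hx : x ∈ cubeo m) :
    |f x - taylorPoly (smoothOrder β) f a x| ≤ taylorConst m β r * ‖x - a‖ ^ β := by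
  set k := smoothOrder β with hk
  have hγ : 0 < β - k := sub_pos.2 (smoothOrder_lt hβ)
  have hseg : ∀ t ∈ Icc (0 : ℝ) 1, a + t • (x - a) ∈ cubeo m := fun t ht =>
    (convex_cubeo m).add_smul_sub_mem ha hx ht
  have hlast (t : ℝ) (ht : t ∈ Icc (0 : ℝ) 1) (l : List (Fin m)) (hl : l.length = k) :
      |pderivList l f (a + t • (x - a)) - pderivList l f (a + (0 : ℝ) • (x - a))| ≤
        r * (m * ‖x - a‖) ^ (β - k) := by
    refine (abs_pderivList_sub_le hβ hr hf hl (hseg t ht) (hseg 0 (by simp))).trans ?_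
    gcongr
    simp only [zero_smul, add_zero, add_sub_cancel_left, norm_smul, Real.norm_eq_abs,
      abs_of_nonneg ht.1]
    exact mul_le_of_le_one_left (norm_nonneg _) ht.2
  have htaylor := abs_sub_taylorSum_le k
    (fun j t => iterDirDeriv j f (x - a) (a + t • (x - a)))
    ((m * ‖x - a‖) ^ k * (r * (m * ‖x - a‖) ^ (β - k)))
    (fun j hj t ht => hasDerivAt_iterDirDeriv (isOpen_cubeo m) a (x - a) j
      (hf.2.1.of_le (by exact_mod_cast hj)) (hseg t ht))
    (fun t ht => abs_iterDirDeriv_sub_le _ _ _ _ k (hlast t ht)) 1 (by simp)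
  simp only [one_smul, add_sub_cancel, zero_smul, add_zero] at htaylor
  have hsplit : ‖x - a‖ ^ β = ‖x - a‖ ^ k * ‖x - a‖ ^ (β - k) := by
    rw [← Real.rpow_natCast, ← Real.rpow_add_of_nonneg (norm_nonneg _) (by positivity) hγ.le,
      add_sub_cancel]
  calc |f x - taylorPoly k f a x|
      ≤ (m * ‖x - a‖) ^ k * (r * (m * ‖x - a‖) ^ (β - k)) := htaylor
    _ = (m : ℝ) ^ k * r * (m : ℝ) ^ (β - k) * ‖x - a‖ ^ β := by
      rw [Real.mul_rpow (by positivity) (by positivity), mul_pow, hsplit]; ring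
    _ ≤ taylorConst m β r * ‖x - a‖ ^ β := by
      rw [taylorConst, ← hk]
      gcongr
      exact le_add_of_nonneg_left (Finset.sum_nonneg fun j _ => by positivity)

end HolderBall

/-! ## Network approximation of Hölder functions -/

/-- The tent function of height `1` and half-width `1` around `0`, whose integer translates form a
partition of unity. -/
def tent (t : ℝ) : ℝ := max 0 (1 - |t|)

lemma tent_mem (t : ℝ) : tent t ∈ Icc (0 : ℝ) 1 :=
  ⟨le_max_left _ _, max_le zero_le_one (by linarith [abs_nonneg t])⟩

lemma abs_le_one_of_tent_ne_zero {t : ℝ} (h : tent t ≠ 0) : |t| ≤ 1 := by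
  by_contra habs
  exact h (max_eq_left (by linarith))

lemma sum_tent {t : ℝ} (ht : 0 ≤ t) (n : ℕ) :
    ∑ i ∈ Finset.range (n + 1), tent (t - i) = min 1 (max 0 (n + 1 - t)) := by
  induction n with
  | zero =>
    simp only [zero_add, Finset.sum_range_one, Nat.cast_zero, sub_zero, tent, abs_of_nonneg ht]
    rw [min_eq_right]
    exact max_le zero_le_one (by linarith)
  | succ n ih =>
    rw [Finset.sum_range_succ, ih, tent]
    push_cast
    rcases le_total t (n : ℝ) with h | h
    · rw [abs_of_nonpos (by linarith), max_eq_right (by linarith), min_eq_left (by linarith),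
        max_eq_left (by linarith), max_eq_right (by linarith), min_eq_left (by linarith)]
      ring
    rcases le_total t (n + 1 : ℝ) with h' | h'
    · rw [abs_of_nonpos (by linarith), max_eq_right (by linarith), min_eq_right (by linarith),
        max_eq_right (by linarith), max_eq_right (by linarith), min_eq_left (by linarith)]
      ring
    · rw [abs_of_nonneg (by linarith), max_eq_left (by linarith), min_eq_right (by linarith),
        zero_add, min_eq_right (max_le zero_le_one (by linarith))]
      congr 1; ring

/-- The tensor product of tents around the node `i / n` of the grid of mesh `1 / n`. -/
def tentProd {m n : ℕ} (i : Fin m → Fin (n + 1)) (x : Fin m → ℝ) : ℝ :=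
  ∏ j, tent (n * x j - (i j : ℕ))

/-- A point of the open cube near the grid node `i / n`, which itself may lie on the boundary. -/
def gridAnchor {m n : ℕ} (i : Fin m → Fin (n + 1)) : Fin m → ℝ :=
  fun j => ((i j : ℕ) + 1 / 2) / (n + 1)

/-- The monomial `q.2` localized by the tent product around the grid node `q.1`. -/
def localMonomial {m k n : ℕ} (q : (Fin m → Fin (n + 1)) × (Fin k → Option (Fin m)))
    (x : Fin m → ℝ) : ℝ :=
  tentProd q.1 x * monomialEval q.2 x

section PartitionOfUnity

variable {m n : ℕ} {i : Fin m → Fin (n + 1)} {x : Fin m → ℝ}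

lemma tentProd_nonneg (i : Fin m → Fin (n + 1)) (x : Fin m → ℝ) : 0 ≤ tentProd i x :=
  Finset.prod_nonneg fun _ _ => (tent_mem _).1

lemma sum_tentProd (hx : x ∈ cube m) : ∑ i : Fin m → Fin (n + 1), tentProd i x = 1 := by
  have hcoord (j) : ∑ i : Fin (n + 1), tent (n * x j - (i : ℕ)) = 1 := by
    have hxj := hx j (mem_univ j)
    have hlow : 0 ≤ (n : ℝ) * x j := mul_nonneg n.cast_nonneg hxj.1
    have hupp : (n : ℝ) * x j ≤ n := mul_le_of_le_one_right n.cast_nonneg hxj.2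
    rw [Fin.sum_univ_eq_sum_range (fun i => tent (n * x j - (i : ℕ))), sum_tent hlow,
      max_eq_right (by linarith), min_eq_left (by linarith)]
  have hexpand := Finset.prod_univ_sum (fun _ : Fin m => (Finset.univ : Finset (Fin (n + 1))))
    (fun j i => tent (n * x j - (i : ℕ)))
  rw [Fintype.piFinset_univ] at hexpand
  exact hexpand.symm.trans (Finset.prod_eq_one fun j _ => hcoord j)

lemma abs_sum_tentProd_mul_sub_le (hx : x ∈ cube m) {p : (Fin m → Fin (n + 1)) → ℝ} {y E : ℝ}
    (hp : ∀ i, tentProd i x ≠ 0 → |p i - y| ≤ E) :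
    |(∑ i, tentProd i x * p i) - y| ≤ E := by
  have hsplit : (∑ i, tentProd i x * p i) - y = ∑ i, tentProd i x * (p i - y) := by
    simp only [mul_sub, Finset.sum_sub_distrib, ← Finset.sum_mul, sum_tentProd hx, one_mul]
  calc |(∑ i, tentProd i x * p i) - y|
      ≤ ∑ i, |tentProd i x * (p i - y)| := hsplit ▸ Finset.abs_sum_le_sum_abs _ _
    _ ≤ ∑ i : Fin m → Fin (n + 1), tentProd i x * E := by
      refine Finset.sum_le_sum fun i _ => ?_
      rw [abs_mul, abs_of_nonneg (tentProd_nonneg i x)]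
      rcases eq_or_ne (tentProd i x) 0 with h | h
      · simp [h]
      · exact mul_le_mul_of_nonneg_left (hp i h) (tentProd_nonneg i x)
    _ = E := by rw [← Finset.sum_mul, sum_tentProd hx, one_mul]

lemma gridAnchor_mem_cubeo (i : Fin m → Fin (n + 1)) : gridAnchor i ∈ cubeo m := fun j _ => by
  have hij : ((i j : ℕ) : ℝ) ≤ n := by exact_mod_cast Nat.lt_succ_iff.1 (i j).2
  refine ⟨by unfold gridAnchor; positivity, ?_⟩
  rw [gridAnchor, div_lt_one (by positivity)]
  linarith

lemma abs_gridAnchor_sub_div_le (hn : 0 < n) (i : Fin m → Fin (n + 1)) (j : Fin m) :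
    |(i j : ℕ) / n - gridAnchor i j| ≤ 1 / n := by
  have hn' : (0 : ℝ) < n := by exact_mod_cast hn
  have hij : ((i j : ℕ) : ℝ) ≤ n := by exact_mod_cast Nat.lt_succ_iff.1 (i j).2
  rw [gridAnchor, div_sub_div _ _ (by positivity) (by positivity), abs_div,
    abs_of_pos (a := (n : ℝ) * _) (by positivity),
    div_le_div_iff₀ (by positivity) (by positivity)]
  have hnum : |((i j : ℕ) : ℝ) * (n + 1) - n * ((i j : ℕ) + 1 / 2)| ≤ n + 1 := by
    rw [abs_le]; constructor <;> nlinarith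
  nlinarith

lemma norm_sub_gridAnchor_le (hn : 0 < n) (h : tentProd i x ≠ 0) :
    ‖x - gridAnchor i‖ ≤ 2 / n := by
  have hn' : (0 : ℝ) < n := by exact_mod_cast hn
  rw [pi_norm_le_iff_of_nonneg (by positivity)]
  intro j
  have hnode : |x j - (i j : ℕ) / n| ≤ 1 / n := by
    have hscale : x j - (i j : ℕ) / n = (n * x j - (i j : ℕ)) / n := by field_simp
    rw [hscale, abs_div, abs_of_pos hn']
    gcongr
    exact abs_le_one_of_tent_ne_zero (Finset.prod_ne_zero_iff.1 h j (Finset.mem_univ j))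
  calc |x j - gridAnchor i j|
      ≤ |x j - (i j : ℕ) / n| + |(i j : ℕ) / n - gridAnchor i j| := abs_sub_le _ _ _
    _ ≤ 1 / n + 1 / n := add_le_add hnode (abs_gridAnchor_sub_div_le hn i j)
    _ = 2 / n := by ring

lemma continuous_localMonomial {k : ℕ}
    (q : (Fin m → Fin (n + 1)) × (Fin k → Option (Fin m))) : Continuous (localMonomial q) := by
  refine Continuous.mul (continuous_finsetProd _ fun j _ => ?_)
    (continuous_finsetProd _ fun j _ => ?_)
  · unfold tent
    fun_prop
  · rcases q.2 j with _ | l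
    · exact continuous_const
    · exact continuous_apply l

end PartitionOfUnity

lemma taylorConst_nonneg (m : ℕ) (β : ℝ) {r : ℝ} (hr : 0 < r) : 0 ≤ taylorConst m β r := by
  unfold taylorConst; positivity

-- Taylor polynomials at the anchors, glued by the partition of unity; the estimate reaches the
-- boundary of the cube by continuity.
lemma HolderBall.exists_localMonomial_approx {m : ℕ} {β r : ℝ} (hβ : 0 < β) (hr : 0 < r)
    {f : (Fin m → ℝ) → ℝ} (hf : f ∈ HolderBall m β r) (n : ℕ) (hn : 0 < n) :
    ∃ c : (Fin m → Fin (n + 1)) × (Fin (smoothOrder β) → Option (Fin m)) → ℝ,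
      (∀ q, |c q| ≤ taylorConst m β r) ∧ ∀ x ∈ cube m,
        |(∑ q, c q * localMonomial q x) - f x| ≤ taylorConst m β r * (2 / n) ^ β := by
  choose c hc hpoly using fun i : Fin m → Fin (n + 1) =>
    HolderBall.isPoly_taylorPoly hβ hr hf (gridAnchor_mem_cubeo i)
  refine ⟨fun q => c q.1 q.2, fun q => hc _ _, ?_⟩
  have hinterior : ∀ x ∈ cubeo m, |(∑ q : (Fin m → Fin (n + 1)) × _,
      c q.1 q.2 * localMonomial q x) - f x| ≤ taylorConst m β r * (2 / n) ^ β := by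
    intro x hx
    have hsum : (∑ q : (Fin m → Fin (n + 1)) × _, c q.1 q.2 * localMonomial q x) =
        ∑ i : Fin m → Fin (n + 1),
          tentProd i x * taylorPoly (smoothOrder β) f (gridAnchor i) x := by
      simp only [Fintype.sum_prod_type, hpoly, localMonomial, Finset.mul_sum, mul_left_comm]
    rw [hsum]
    refine abs_sum_tentProd_mul_sub_le (cubeo_subset_cube m hx) fun i hi => ?_
    rw [abs_sub_comm]
    refine (HolderBall.abs_sub_taylorPoly_le hβ hr hf (gridAnchor_mem_cubeo i) hx).trans ?_
    have := taylorConst_nonneg m β hr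
    gcongr
    exact norm_sub_gridAnchor_le hn hi
  have hcont : ContinuousOn (fun x : Fin m → ℝ => |(∑ q : (Fin m → Fin (n + 1)) × _,
      c q.1 q.2 * localMonomial q x) - f x|) (cube m) :=
    ((continuous_finsetSum _ fun q _ => continuous_const.mul
      (continuous_localMonomial q)).continuousOn.sub hf.1).abs
  intro x hx
  rw [← closure_cubeo] at hx hcont
  exact le_on_closure (g := fun _ => taylorConst m β r * (2 / n) ^ β) hinterior hcont
    continuousOn_const hx

section LocalMonomialNet

variable {X : Type*}

lemma tent_eq_max (y : ℝ) : tent y = max 0 (1 - max 0 y - max 0 (-y)) := by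
  unfold tent; grind

lemma sparseNet_tent (x : X → ℝ) (ℓ i : ℕ) (hi : i ≤ 2 ^ ℓ) :
    SparseNet (fun _ : Unit => x) 12 (ℓ + 3)
      (fun _ : Unit => fun t => tent (2 ^ ℓ * x t - i)) := by
  have hshift : |(i : ℝ) / 2 ^ ℓ| ≤ 1 := by
    rw [abs_of_nonneg (by positivity)]
    exact div_le_one_of_le₀ (by exact_mod_cast hi) (by positivity)
  have hpos : SparseNet (fun _ : Unit => x) 6 0
      (fun _ : Unit => fun t => max 0 (x t - i / 2 ^ ℓ)) :=
    SparseLayer.of_dense (fun _ _ => 1) (fun _ => i / 2 ^ ℓ) (by simp) (fun _ => hshift)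
      (by simp) (by simp)
  have hneg : SparseNet (fun _ : Unit => x) 6 0
      (fun _ : Unit => fun t => max 0 (-(x t - i / 2 ^ ℓ))) :=
    SparseLayer.of_dense (fun _ _ => -1) (fun _ => -(i / 2 ^ ℓ)) (by simp)
      (fun _ => by rwa [abs_neg]) (by simp) (by simp [neg_add_eq_sub])
  have hscaled := (hpos.trans (sparseNet_two_pow_mul _ (fun _ => le_max_left _ _) ℓ)).par
    (hneg.trans (sparseNet_two_pow_mul _ (fun _ => le_max_left _ _) ℓ))
  refine (hscaled.step (.of_dense (fun _ _ => -1) (fun _ => -1) (by simp) (by simp) (by simp)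
    fun _ t => ?_)).pad (by omega)
  have hunscale : (2 : ℝ) ^ ℓ * x t - i = 2 ^ ℓ * (x t - i / 2 ^ ℓ) := by field_simp
  rw [tent_eq_max, hunscale, ← mul_neg]
  simp only [Fintype.sum_sum_type, Sum.elim_inl, Sum.elim_inr, Finset.univ_unique,
    Finset.sum_singleton, mul_max_of_nonneg _ _ (by positivity : (0 : ℝ) ≤ 2 ^ ℓ), mul_zero]
  congr 1
  ring

lemma sparseNet_monomial_factor {m : ℕ} {p : Fin m → X → ℝ} (hp : ∀ j t, p j t ∈ Icc (0 : ℝ) 1)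
    (o : Option (Fin m)) (L : ℕ) :
    SparseNet p 1 L (fun _ : Unit => fun t => o.elim 1 fun l => p l t) := by
  refine SparseNet.pad (L := 0) ?_ L.zero_le
  rcases o with _ | l
  · exact ⟨0, fun _ => -1, by simp, by simp, by simp, by simp [indNonzero], by simp⟩
  · exact SparseLayer.select (fun j t => (hp j t).1) (fun _ => l) (by simp)

lemma exists_sparseNet_localMonomial {m k : ℕ} (s ℓ : ℕ) (p : Fin m → X → ℝ)
    (hp : ∀ j t, p j t ∈ Icc (0 : ℝ) 1)
    (q : (Fin m → Fin (2 ^ ℓ + 1)) × (Fin k → Option (Fin m))) :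
    ∃ out : X → ℝ,
      SparseNet p (48 + 12 * (m + k)) (ℓ + 5 + (2 * s + 9) * (m + k)) (fun _ : Unit => out) ∧
      ∀ t, |out t - localMonomial q fun j => p j t| ≤ (m + k) * (4 ^ s)⁻¹ := by
  let F : Fin m ⊕ Fin k → X → ℝ := Sum.elim (fun j t => tent (2 ^ ℓ * p j t - (q.1 j : ℕ)))
    (fun j t => (q.2 j).elim 1 fun l => p l t)
  have hF : ∀ a, SparseNet p 12 (ℓ + 4) (fun _ : Unit => F a) := by
    rintro (j | j)
    · exact SparseNet.of_select (fun j t => (hp j t).1) (fun _ : Unit => j) (by simp)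
        (sparseNet_tent (p j) ℓ (q.1 j) (by omega))
    · exact (sparseNet_monomial_factor hp (q.2 j) _).mono (by norm_num)
  have hF01 : ∀ a t, F a t ∈ Icc (0 : ℝ) 1 := by
    rintro (j | j) t
    · exact tent_mem _
    · simp only [F, Sum.elim_inr]
      rcases q.2 j with _ | l
      · simp
      · exact hp l t
  have hfactors := (SparseNet.pi F hF).reindex (finSumFinEquiv (m := m) (n := k)).symm
  obtain ⟨out, hprod, -, hdist⟩ := exists_sparseNet_prod s (m + k)
    (fun j => F (finSumFinEquiv.symm j)) (fun j t => hF01 _ t)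
  refine ⟨out, ((hfactors.mono (w' := 48 + 12 * (m + k)) (by simp; omega)).trans
    (hprod.mono (by omega))).pad (by omega), fun t => ?_⟩
  have hout := hdist t
  rw [finSumFinEquiv.symm.prod_comp (fun a => F a t), Fintype.prod_sum_type] at hout
  simpa [F, localMonomial, tentProd, monomialEval] using hout

-- A coefficient of size up to `2 ^ κ` is produced by a weight in `[-1, 1]` and `κ` doublings.
lemma sparseNet_clip01_sum {ι : Type*} [Fintype ι] {J : Type} [Fintype J] [Nonempty J]
    {inp : ι → X → ℝ} {w L κ : ℕ} (hw : 7 ≤ w) {F : J → X → ℝ}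
    (hF : ∀ j, SparseNet inp w L fun _ : Unit => F j) {c : J → ℝ} (hc : ∀ j, |c j| ≤ 2 ^ κ) :
    SparseNet inp (Fintype.card J * w) (L + κ + 5)
      fun _ : Unit => fun t => clip01 (∑ j, c j * F j t) := by
  have hκ : (0 : ℝ) < 2 ^ κ := by positivity
  have hwidth : 7 * Fintype.card J ≤ Fintype.card J * w := by
    rw [mul_comm]; exact Nat.mul_le_mul_left _ hw
  have hcard : 0 < Fintype.card J := Fintype.card_pos
  have hsum := (SparseNet.pi F hF).step
    (G := fun _ : Unit => fun t => max 0 ((∑ j, c j * F j t) / 2 ^ κ))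
    (.of_dense (fun _ j => c j / 2 ^ κ) 0 (fun _ j => by
        rw [abs_div, abs_of_pos hκ]
        exact div_le_one_of_le₀ (hc j) hκ.le)
      (by simp) (by simp only [Fintype.card_unit, one_mul]; omega) fun _ t => by
        simp only [Finset.sum_div, Pi.zero_apply, sub_zero, div_mul_eq_mul_div])
  have hclip := (hsum.trans ((sparseNet_two_pow_mul _ (fun _ => le_max_left _ _) κ).mono
    (by omega))).trans ((sparseNet_clip01 _).mono (by omega))
  convert hclip.pad (L' := L + κ + 5) (by omega) using 3 with _ t
  rw [mul_max_of_nonneg _ _ hκ.le, mul_zero, mul_div_cancel₀ _ hκ.ne', clip01, clip01,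
    max_eq_right (le_max_left _ _)]

end LocalMonomialNet

lemma abs_sum_mul_sub_sum_mul_le {J : Type*} [Fintype J] {c f g : J → ℝ} {R δ : ℝ} (hR : 0 ≤ R)
    (hc : ∀ j, |c j| ≤ R) (h : ∀ j, |f j - g j| ≤ δ) :
    |∑ j, c j * f j - ∑ j, c j * g j| ≤ Fintype.card J * (R * δ) := by
  simp only [← Finset.sum_sub_distrib, ← mul_sub]
  calc |∑ j, c j * (f j - g j)| ≤ ∑ j, |c j * (f j - g j)| := Finset.abs_sum_le_sum_abs _ _
    _ ≤ ∑ _j : J, R * δ := Finset.sum_le_sum fun j _ => by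
      rw [abs_mul]
      exact mul_le_mul (hc j) (h j) (abs_nonneg _) hR
    _ = Fintype.card J * (R * δ) := by simp

lemma card_localMonomial_index_le (m k ℓ : ℕ) :
    Fintype.card ((Fin m → Fin (2 ^ ℓ + 1)) × (Fin k → Option (Fin m))) ≤
      2 ^ m * (m + 1) ^ k * 2 ^ (ℓ * m) := by
  have hnodes : (2 ^ ℓ + 1) ^ m ≤ (2 * 2 ^ ℓ) ^ m :=
    Nat.pow_le_pow_left (by have := Nat.one_le_two_pow (n := ℓ); omega) m
  calc Fintype.card ((Fin m → Fin (2 ^ ℓ + 1)) × (Fin k → Option (Fin m)))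
      = (2 ^ ℓ + 1) ^ m * (m + 1) ^ k := by simp
    _ ≤ (2 * 2 ^ ℓ) ^ m * (m + 1) ^ k := Nat.mul_le_mul_right _ hnodes
    _ = 2 ^ m * (m + 1) ^ k * 2 ^ (ℓ * m) := by rw [mul_pow, pow_mul]; ring

lemma two_pow_mul_inv_four_pow_le {β : ℝ} {m k : ℕ} (hβk : β ≤ k + 1) (ℓ : ℕ) :
    (2 : ℝ) ^ (ℓ * m) * (4 ^ ((m + k + 1) * ℓ))⁻¹ ≤ ((2 ^ ℓ : ℝ)⁻¹) ^ β := by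
  have hfour : (4 : ℝ) ^ ((m + k + 1) * ℓ) = (2 ^ ℓ) ^ m * (2 ^ ℓ) ^ (m + 2 * k + 2) := by
    rw [← pow_add, ← pow_mul, show (4 : ℝ) = 2 ^ 2 by norm_num, ← pow_mul]
    congr 1; ring
  have hpow : (2 : ℝ) ^ (ℓ * m) * (4 ^ ((m + k + 1) * ℓ))⁻¹ =
      ((2 ^ ℓ : ℝ)⁻¹) ^ (m + 2 * k + 2) := by
    rw [hfour, pow_mul, inv_pow]
    field_simp
  rw [hpow, ← Real.rpow_natCast]
  refine Real.rpow_le_rpow_of_exponent_ge (by positivity)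
    (inv_le_one_of_one_le₀ (one_le_pow₀ one_le_two)) ?_
  push_cast
  linarith [(Nat.cast_nonneg m : (0 : ℝ) ≤ m), (Nat.cast_nonneg k : (0 : ℝ) ≤ k)]

lemma HolderBall.exists_clip01_approx {m : ℕ} {β r : ℝ} (hβ : 0 < β) (hr : 0 < r)
    {g : (Fin m → ℝ) → ℝ} (hg : g ∈ HolderBall m β r) {κ : ℕ} (hκ : taylorConst m β r ≤ 2 ^ κ)
    (ℓ : ℕ) {X : Type*} (p : Fin m → X → ℝ) (hp : ∀ j t, p j t ∈ Icc (0 : ℝ) 1) :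
    ∃ out : X → ℝ,
      SparseNet p (2 ^ m * (m + 1) ^ smoothOrder β * 2 ^ (ℓ * m) *
          (48 + 12 * (m + smoothOrder β)))
        (ℓ + 5 + (2 * ((m + smoothOrder β + 1) * ℓ) + 9) * (m + smoothOrder β) + κ + 5)
        (fun _ : Unit => out) ∧
      (∀ t, out t ∈ Icc (0 : ℝ) 1) ∧
      ∀ t, |out t - clip01 (g fun j => p j t)| ≤ (2 ^ m * (m + 1) ^ smoothOrder β *
        taylorConst m β r * (m + smoothOrder β) + taylorConst m β r * 2 ^ β) *
          ((2 ^ ℓ : ℝ)⁻¹) ^ β := by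
  set k := smoothOrder β with hk
  set R := taylorConst m β r
  have hR0 : 0 ≤ R := taylorConst_nonneg m β hr
  obtain ⟨c, hc, happrox⟩ := HolderBall.exists_localMonomial_approx hβ hr hg (2 ^ ℓ)
    (by positivity)
  choose F hnet hF using exists_sparseNet_localMonomial (k := k) ((m + k + 1) * ℓ) ℓ p hp
  refine ⟨_, (sparseNet_clip01_sum (by omega) hnet fun q => (hc q).trans hκ).mono
    (Nat.mul_le_mul_right _ (card_localMonomial_index_le m k ℓ)), fun t => clip01_mem _,
    fun t => (abs_clip01_sub_le _ _).trans ?_⟩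
  set h : ℝ := (2 ^ ℓ : ℝ)⁻¹
  have hcard : (Fintype.card ((Fin m → Fin (2 ^ ℓ + 1)) × (Fin k → Option (Fin m))) : ℝ) ≤
      2 ^ m * (m + 1) ^ k * 2 ^ (ℓ * m) := by
    exact_mod_cast card_localMonomial_index_le m k ℓ
  calc |∑ q, c q * F q t - g fun j => p j t|
      ≤ |∑ q, c q * F q t - ∑ q, c q * localMonomial q fun j => p j t| +
          |∑ q, (c q * localMonomial q fun j => p j t) - g fun j => p j t| := abs_sub_le _ _ _
    _ ≤ 2 ^ m * (m + 1) ^ k * 2 ^ (ℓ * m) * (R * ((m + k) * (4 ^ ((m + k + 1) * ℓ))⁻¹)) +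
          R * (2 / (2 ^ ℓ : ℕ)) ^ β := by
      refine add_le_add ((abs_sum_mul_sub_sum_mul_le hR0 hc fun q => hF q t).trans ?_)
        (happrox _ fun j _ => hp j t)
      gcongr
    _ = 2 ^ m * (m + 1) ^ k * R * (m + k) * (2 ^ (ℓ * m) * (4 ^ ((m + k + 1) * ℓ))⁻¹) +
          R * 2 ^ β * h ^ β := by
      push_cast
      rw [div_eq_mul_inv, Real.mul_rpow zero_le_two (by positivity)]
      ring
    _ ≤ 2 ^ m * (m + 1) ^ k * R * (m + k) * h ^ β + R * 2 ^ β * h ^ β := by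
      gcongr
      exact two_pow_mul_inv_four_pow_le (hk ▸ le_smoothOrder_add_one hβ) ℓ
    _ = (2 ^ m * (m + 1) ^ k * R * (m + k) + R * 2 ^ β) * h ^ β := by ring

lemma HolderBall.exists_sparseNet (m : ℕ) {β r : ℝ} (hβ : 0 < β) (hr : 0 < r) :
    ∃ C : ℕ, ∀ g ∈ HolderBall m β r, ∀ (ℓ : ℕ) (X : Type) (p : Fin m → X → ℝ),
      (∀ j t, p j t ∈ Icc (0 : ℝ) 1) →
      ∃ out : X → ℝ, SparseNet p (C * 2 ^ (ℓ * m)) (C * (ℓ + 1)) (fun _ : Unit => out) ∧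
        (∀ t, out t ∈ Icc (0 : ℝ) 1) ∧
        ∀ t, |out t - clip01 (g fun j => p j t)| ≤ C * ((2 ^ ℓ : ℝ)⁻¹) ^ β := by
  set k := smoothOrder β
  obtain ⟨κ, hκ⟩ := pow_unbounded_of_one_lt (taylorConst m β r) one_lt_two
  set Cw : ℕ := 2 ^ m * (m + 1) ^ k * (48 + 12 * (m + k))
  set Cd : ℕ := 10 + (2 * (m + k + 1) + 9) * (m + k) + κ with hCd
  obtain ⟨Ce, hCe⟩ := exists_nat_ge (2 ^ m * (m + 1) ^ k * taylorConst m β r * (m + k) +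
    taylorConst m β r * 2 ^ β)
  refine ⟨Cw + Cd + Ce, fun g hg ℓ X p hp => ?_⟩
  obtain ⟨out, hnet, hout, hdist⟩ := HolderBall.exists_clip01_approx hβ hr hg hκ.le ℓ p hp
  refine ⟨out, (hnet.mono ?_).pad ?_, hout, fun t => (hdist t).trans ?_⟩
  · calc 2 ^ m * (m + 1) ^ k * 2 ^ (ℓ * m) * (48 + 12 * (m + k))
        = Cw * 2 ^ (ℓ * m) := mul_right_comm _ _ _
      _ ≤ (Cw + Cd + Ce) * 2 ^ (ℓ * m) := Nat.mul_le_mul_right _ (by omega)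
  · calc ℓ + 5 + (2 * ((m + k + 1) * ℓ) + 9) * (m + k) + κ + 5 ≤ Cd * (ℓ + 1) := by
          have : 0 ≤ (m + k) * ℓ * 9 + κ * ℓ + (m + k) * (m + k + 1) := by positivity
          rw [hCd]; nlinarith
      _ ≤ (Cw + Cd + Ce) * (ℓ + 1) := Nat.mul_le_mul_right _ (by omega)
  · gcongr
    exact hCe.trans (by exact_mod_cast Nat.le_add_left _ _)

/-! ## Network approximation of compositions -/

section HolderContinuity

variable {m : ℕ} {β r : ℝ} {f : (Fin m → ℝ) → ℝ} {x y : Fin m → ℝ}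

lemma norm_sub_le_one_of_mem_cube (hx : x ∈ cube m) (hy : y ∈ cube m) : ‖x - y‖ ≤ 1 := by
  refine (pi_norm_le_iff_of_nonneg zero_le_one).2 fun i => ?_
  have hxi := hx i (mem_univ i)
  have hyi := hy i (mem_univ i)
  rw [Pi.sub_apply, Real.norm_eq_abs, abs_le]
  constructor <;> linarith [hxi.1, hxi.2, hyi.1, hyi.2]

lemma abs_sup'_sub_sup'_le {ι : Type*} [Fintype ι] {I : Finset ι} (hI : I.Nonempty)
    (x y : ι → ℝ) : |I.sup' hI x - I.sup' hI y| ≤ ‖x - y‖ := by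
  have sub_le (x y : ι → ℝ) : I.sup' hI x - I.sup' hI y ≤ ‖x - y‖ := by
    rw [sub_le_iff_le_add, Finset.sup'_le_iff]
    intro i hi
    have hnorm : x i - y i ≤ ‖x - y‖ := (le_abs_self _).trans (norm_le_pi_norm (x - y) i)
    linarith [Finset.le_sup' y hi]
  exact abs_sub_le_iff.2 ⟨sub_le x y, norm_sub_rev x y ▸ sub_le y x⟩

lemma HolderBall.abs_sub_le_of_le_one (hβ : 0 < β) (hβ1 : β ≤ 1) (hr : 0 < r)
    (hf : f ∈ HolderBall m β r) (hx : x ∈ cubeo m) (hy : y ∈ cubeo m) :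
    |f x - f y| ≤ r * (m + 1) * ‖x - y‖ ^ β := by
  have horder : smoothOrder β = 0 := by rw [smoothOrder, Nat.ceil_eq_zero]; linarith
  have hbound := HolderBall.abs_pderivList_sub_le hβ hr hf (l := []) (by simp [horder]) hx hy
  simp only [pderivList, horder, Nat.cast_zero, sub_zero] at hbound
  have hm : (m : ℝ) ^ β ≤ m + 1 :=
    calc (m : ℝ) ^ β ≤ (m + 1 : ℝ) ^ β := by gcongr; linarith
      _ ≤ m + 1 := Real.rpow_le_self_of_one_le (by simp) hβ1
  calc |f x - f y| ≤ r * (m : ℝ) ^ β * ‖x - y‖ ^ β := by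
        rwa [Real.mul_rpow (by positivity) (norm_nonneg _), ← mul_assoc] at hbound
    _ ≤ r * (m + 1) * ‖x - y‖ ^ β := by gcongr

lemma HolderBall.norm_fderiv_le (hβ : 1 < β) (hr : 0 < r) (hf : f ∈ HolderBall m β r)
    (hx : x ∈ cubeo m) : ‖fderiv ℝ f x‖ ≤ r * m := by
  have horder : 1 ≤ smoothOrder β := by rw [smoothOrder, Nat.one_le_ceil_iff]; linarith
  refine ContinuousLinearMap.opNorm_le_bound _ (by positivity) fun v => ?_
  calc ‖fderiv ℝ f x v‖ = ‖∑ i, v i • fderiv ℝ f x (Pi.single i 1)‖ := by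
        conv_lhs => rw [pi_eq_sum_univ' v]
        simp only [map_sum, map_smul]
    _ ≤ ∑ i, ‖v i • fderiv ℝ f x (Pi.single i 1)‖ := norm_sum_le _ _
    _ ≤ ∑ _i : Fin m, ‖v‖ * r := by
        gcongr with i
        rw [norm_smul]
        gcongr
        · exact norm_le_pi_norm v i
        · exact HolderBall.abs_pderivList_le (by linarith) hr hf (l := [i]) horder hx
    _ = r * m * ‖v‖ := by simp; ring

lemma HolderBall.abs_sub_le_of_one_lt (hβ : 1 < β) (hr : 0 < r) (hf : f ∈ HolderBall m β r)
    (hx : x ∈ cubeo m) (hy : y ∈ cubeo m) : |f x - f y| ≤ r * m * ‖x - y‖ := by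
  have horder : smoothOrder β ≠ 0 := by
    rw [smoothOrder, ← Nat.pos_iff_ne_zero, Nat.ceil_pos]; linarith
  have hdiff : DifferentiableOn ℝ f (cubeo m) :=
    hf.2.1.differentiableOn (by exact_mod_cast horder)
  exact (convex_cubeo m).norm_image_sub_le_of_norm_fderiv_le
    (fun z hz => (hdiff z hz).differentiableAt ((isOpen_cubeo m).mem_nhds hz))
    (fun z hz => HolderBall.norm_fderiv_le hβ hr hf hz) hy hx

lemma HolderBall.abs_sub_le_of_mem_cubeo (hβ : 0 < β) (hr : 0 < r) (hf : f ∈ HolderBall m β r)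
    (hx : x ∈ cubeo m) (hy : y ∈ cubeo m) :
    |f x - f y| ≤ (1 + r * (m + 1)) * ‖x - y‖ ^ min 1 β := by
  rcases le_or_gt β 1 with hβ1 | hβ1
  · refine (HolderBall.abs_sub_le_of_le_one hβ hβ1 hr hf hx hy).trans ?_
    rw [min_eq_right hβ1]
    gcongr
    linarith
  · refine (HolderBall.abs_sub_le_of_one_lt hβ1 hr hf hx hy).trans ?_
    rw [min_eq_left hβ1.le, Real.rpow_one]
    gcongr
    linarith

lemma HolderBall.abs_sub_le (hβ : 0 < β) (hr : 0 < r) (hf : f ∈ HolderBall m β r)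
    (hx : x ∈ cube m) (hy : y ∈ cube m) :
    |f x - f y| ≤ (1 + r * (m + 1)) * ‖x - y‖ ^ min 1 β := by
  have hclosure : closure (cubeo m ×ˢ cubeo m) = cube m ×ˢ cube m := by
    rw [closure_prod_eq, closure_cubeo]
  refine le_on_closure (s := cubeo m ×ˢ cubeo m) (x := (x, y))
    (f := fun p => |f p.1 - f p.2|) (g := fun p => (1 + r * (m + 1)) * ‖p.1 - p.2‖ ^ min 1 β)
    (fun p hp => HolderBall.abs_sub_le_of_mem_cubeo hβ hr hf hp.1 hp.2) ?_ ?_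
    (by rw [hclosure]; exact ⟨hx, hy⟩)
  · rw [hclosure]
    exact ((hf.1.comp continuousOn_fst fun p hp => hp.1).sub
      (hf.1.comp continuousOn_snd fun p hp => hp.2)).abs
  · exact (continuous_const.mul ((continuous_fst.sub continuous_snd).norm.rpow_const
      fun p => Or.inr (lt_min one_pos hβ).le)).continuousOn

end HolderContinuity

section Composition

variable {d dmax dstar : ℕ} {β r : ℝ} {f : (Fin d → ℝ) → ℝ} {x y : Fin d → ℝ}

lemma abs_sub_le_of_mem_GH_union_GM (hβ : 0 < β) (hr : 0 < r)
    (hf : f ∈ GH d dstar β r ∪ GM d dmax) (hx : x ∈ cube d) (hy : y ∈ cube d) :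
    |f x - f y| ≤ (1 + r * (dstar + 1)) * ‖x - y‖ ^ min 1 β := by
  rcases hf with ⟨e, g, -, hg, hfg⟩ | ⟨I, hI, -, hfI⟩
  · rw [hfg x hx, hfg y hy]
    refine (HolderBall.abs_sub_le hβ hr hg (x := fun j => x (e j)) (y := fun j => y (e j))
      (fun j _ => hx _ (mem_univ _)) (fun j _ => hy _ (mem_univ _))).trans ?_
    have hnorm : ‖(fun j => x (e j)) - fun j => y (e j)‖ ≤ ‖x - y‖ :=
      (pi_norm_le_iff_of_nonneg (norm_nonneg _)).2 fun j => norm_le_pi_norm (x - y) (e j)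
    have := lt_min one_pos hβ
    gcongr
  · rw [hfI x hx, hfI y hy]
    calc |I.sup' hI (fun i => x i) - I.sup' hI (fun i => y i)| ≤ ‖x - y‖ :=
          abs_sup'_sub_sup'_le hI x y
      _ ≤ ‖x - y‖ ^ min 1 β := Real.self_le_rpow_of_le_one (norm_nonneg _)
          (norm_sub_le_one_of_mem_cube hx hy) (min_le_left _ _)
      _ ≤ (1 + r * (dstar + 1)) * ‖x - y‖ ^ min 1 β :=
          le_mul_of_one_le_left (by positivity) (le_add_of_nonneg_right (by positivity))

lemma GCHOM.abs_sub_le (hβ : 0 < β) (hr : 0 < r) {K q : ℕ}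
    (hf : f ∈ GCHOM K dmax dstar β r q d) (hx : x ∈ cube d) (hy : y ∈ cube d) :
    |f x - f y| ≤ (1 + r * (dstar + 1)) ^ (q + 1) * ‖x - y‖ ^ (min 1 β ^ (q + 1)) := by
  set A := 1 + r * (dstar + 1)
  have hA : 1 ≤ A := le_add_of_nonneg_right (by positivity)
  have hμ : 0 < min 1 β := lt_min one_pos hβ
  induction q generalizing d with
  | zero =>
    obtain ⟨h, hh, hfh⟩ := hf
    rw [hfh x hx, hfh y hy]
    simpa only [zero_add, pow_one] using abs_sub_le_of_mem_GH_union_GM hβ hr hh hx hy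
  | succ q ih =>
    obtain ⟨H, g, hH, hHcube, hg, hfg⟩ := hf
    rw [hfg x hx, hfg y hy]
    refine (ih hg (hHcube x hx) (hHcube y hy)).trans ?_
    have hHdist : ‖H x - H y‖ ≤ A * ‖x - y‖ ^ min 1 β :=
      (pi_norm_le_iff_of_nonneg (by positivity)).2
        fun j => abs_sub_le_of_mem_GH_union_GM hβ hr (hH j) hx hy
    calc A ^ (q + 1) * ‖H x - H y‖ ^ (min 1 β ^ (q + 1))
        ≤ A ^ (q + 1) * (A * ‖x - y‖ ^ min 1 β) ^ (min 1 β ^ (q + 1)) := by gcongr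
      _ = A ^ (q + 1) * (A ^ (min 1 β ^ (q + 1)) * ‖x - y‖ ^ (min 1 β ^ (q + 1 + 1))) := by
          rw [Real.mul_rpow (by positivity) (by positivity), ← Real.rpow_mul (norm_nonneg _),
            ← pow_succ']
      _ ≤ A ^ (q + 1) * (A * ‖x - y‖ ^ (min 1 β ^ (q + 1 + 1))) := by
          gcongr
          exact Real.rpow_le_self_of_one_le hA (pow_le_one₀ hμ.le (min_le_left _ _))
      _ = A ^ (q + 1 + 1) * ‖x - y‖ ^ (min 1 β ^ (q + 1 + 1)) := by ring

lemma exists_sparseNet_of_mem_GH_union_GM (hβ : 0 < β) (hr : 0 < r) (dmax dstar : ℕ) :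
    ∃ C : ℕ, 1 ≤ C ∧ ∀ (d : ℕ), ∀ h ∈ GH d dstar β r ∪ GM d dmax,
      ∀ (ℓ : ℕ) (X : Type) (p : Fin d → X → ℝ), (∀ j t, p j t ∈ Icc (0 : ℝ) 1) →
      ∃ out : X → ℝ, SparseNet p (C * 2 ^ (ℓ * dstar)) (C * (ℓ + 1)) (fun _ : Unit => out) ∧
        (∀ t, out t ∈ Icc (0 : ℝ) 1) ∧
        ∀ t, |out t - clip01 (h fun j => p j t)| ≤ C * ((2 ^ ℓ : ℝ)⁻¹) ^ β := by
  obtain ⟨C, hC⟩ := HolderBall.exists_sparseNet dstar hβ hr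
  refine ⟨C + dstar + (48 + 4 * dmax), by omega, fun d h hh ℓ X p hp => ?_⟩
  have hcube (t : X) : (fun j => p j t) ∈ cube d := fun j _ => hp j t
  have hpow : 1 ≤ 2 ^ (ℓ * dstar) := Nat.one_le_two_pow
  rcases hh with ⟨e, g, -, hg, hhg⟩ | ⟨I, hI, hcard, hhI⟩
  · obtain ⟨out, hnet, hout, hdist⟩ := hC g hg ℓ X (fun j => p (e j)) (fun j t => hp _ t)
    refine ⟨out, ?_, hout, fun t => ?_⟩
    · exact (SparseNet.of_select (w := (C + dstar + (48 + 4 * dmax)) * 2 ^ (ℓ * dstar))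
        (fun j t => (hp j t).1) e (by simp only [Fintype.card_fin]; nlinarith)
        (hnet.mono (Nat.mul_le_mul_right _ (by omega)))).pad (by nlinarith)
    · rw [hhg _ (hcube t)]
      refine (hdist t).trans ?_
      gcongr
      omega
  · have hsup (t : X) : (I.sup' hI fun i => p i t) ∈ Icc (0 : ℝ) 1 :=
      ⟨hI.elim fun i hi => (hp i t).1.trans (Finset.le_sup' (fun i => p i t) hi),
        Finset.sup'_le _ _ fun i _ => (hp i t).2⟩
    refine ⟨_, ((sparseNet_sup' p hp I hI hcard).mono (by nlinarith)).pad (by nlinarith), hsup,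
      fun t => ?_⟩
    rw [hhI _ (hcube t), clip01_of_mem (hsup t), sub_self, abs_zero]
    positivity

lemma GCHOM.abs_sub_le_of_norm_sub_le (hβ : 0 < β) (hr : 0 < r) {K q : ℕ} {A : ℝ} (hA : 1 ≤ A)
    (hf : f ∈ GCHOM K dmax dstar β r q d) (hx : x ∈ cube d) (hy : y ∈ cube d) {h : ℝ}
    (hh : 0 ≤ h) (hxy : ‖x - y‖ ≤ A * h ^ β) :
    |f x - f y| ≤ (1 + r * (dstar + 1)) ^ (q + 1) * A * h ^ (β * min 1 β ^ (q + 1)) := by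
  have hμ : 0 < min 1 β := lt_min one_pos hβ
  have hA0 : 0 ≤ A := by linarith
  set γ := min 1 β ^ (q + 1)
  calc |f x - f y| ≤ (1 + r * (dstar + 1)) ^ (q + 1) * ‖x - y‖ ^ γ :=
        GCHOM.abs_sub_le hβ hr hf hx hy
    _ ≤ (1 + r * (dstar + 1)) ^ (q + 1) * (A * h ^ β) ^ γ := by gcongr
    _ = (1 + r * (dstar + 1)) ^ (q + 1) * (A ^ γ * h ^ (β * γ)) := by
        rw [Real.mul_rpow hA0 (by positivity), ← Real.rpow_mul hh]
    _ ≤ (1 + r * (dstar + 1)) ^ (q + 1) * (A * h ^ (β * γ)) := by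
        gcongr
        exact Real.rpow_le_self_of_one_le hA (pow_le_one₀ hμ.le (min_le_left _ _))
    _ = (1 + r * (dstar + 1)) ^ (q + 1) * A * h ^ (β * γ) := (mul_assoc _ _ _).symm

lemma rpow_mul_pow_le_succ {h μ : ℝ} (hβ : 0 < β) (hh : 0 < h) (hh1 : h ≤ 1) (hμ : 0 ≤ μ)
    (hμ1 : μ ≤ 1) (q : ℕ) : h ^ (β * μ ^ q) ≤ h ^ (β * μ ^ (q + 1)) :=
  Real.rpow_le_rpow_of_exponent_ge hh hh1
    (mul_le_mul_of_nonneg_left (pow_le_pow_of_le_one hμ hμ1 (Nat.le_succ q)) hβ.le)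

lemma GCHOM.abs_sub_clip01_le (hβ : 0 < β) (hr : 0 < r) {K q : ℕ} {A C h u : ℝ} (hA : 1 ≤ A)
    (hC : 0 ≤ C) (hf : f ∈ GCHOM K dmax dstar β r q d) (hx : x ∈ cube d) (hy : y ∈ cube d)
    (hh : 0 < h) (hh1 : h ≤ 1) (hxy : ‖x - y‖ ≤ A * h ^ β)
    (hu : |u - clip01 (f x)| ≤ C * h ^ (β * min 1 β ^ q)) :
    |u - clip01 (f y)| ≤
      (C + (1 + r * (dstar + 1)) ^ (q + 1) * A) * h ^ (β * min 1 β ^ (q + 1)) :=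
  calc |u - clip01 (f y)|
      ≤ |u - clip01 (f x)| + |clip01 (f x) - clip01 (f y)| := _root_.abs_sub_le _ _ _
    _ ≤ C * h ^ (β * min 1 β ^ (q + 1)) +
          (1 + r * (dstar + 1)) ^ (q + 1) * A * h ^ (β * min 1 β ^ (q + 1)) :=
        add_le_add (hu.trans (mul_le_mul_of_nonneg_left (rpow_mul_pow_le_succ hβ hh hh1
            (lt_min one_pos hβ).le (min_le_left _ _) q) hC))
          ((abs_clip01_sub_le _ _).trans
            (GCHOM.abs_sub_le_of_norm_sub_le hβ hr hA hf hx hy hh.le hxy))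
    _ = _ := (add_mul _ _ _).symm

-- The depth constant `Cd` is chosen before `K`: the theorem's depth threshold `c₃` may not
-- depend on `K`.
lemma GCHOM.exists_sparseNet (hβ : 0 < β) (hr : 0 < r) (dmax dstar q : ℕ) :
    ∃ Cd : ℕ, ∀ K : ℕ, ∃ C : ℕ, ∀ (d : ℕ), ∀ f ∈ GCHOM K dmax dstar β r q d,
      ∀ (ℓ : ℕ) (X : Type) (p : Fin d → X → ℝ), (∀ j t, p j t ∈ Icc (0 : ℝ) 1) →
      ∃ out : X → ℝ, SparseNet p (C * 2 ^ (ℓ * dstar)) (Cd * (ℓ + 1)) (fun _ : Unit => out) ∧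
        (∀ t, out t ∈ Icc (0 : ℝ) 1) ∧
        ∀ t, |out t - clip01 (f fun j => p j t)| ≤
          C * ((2 ^ ℓ : ℝ)⁻¹) ^ (β * min 1 β ^ q) := by
  obtain ⟨C₀, hC₀, hcomp⟩ := exists_sparseNet_of_mem_GH_union_GM hβ hr dmax dstar
  induction q with
  | zero =>
    refine ⟨C₀, fun K => ⟨C₀, fun d f hf ℓ X p hp => ?_⟩⟩
    obtain ⟨h, hh, hfh⟩ := hf
    obtain ⟨out, hnet, hout, hdist⟩ := hcomp d h hh ℓ X p hp
    refine ⟨out, hnet, hout, fun t => ?_⟩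
    rw [hfh _ fun j _ => hp j t]
    simpa using hdist t
  | succ q ih =>
    obtain ⟨Cd, hCd⟩ := ih
    refine ⟨C₀ + Cd + 1, fun K => ?_⟩
    obtain ⟨C, hC⟩ := hCd K
    obtain ⟨Cm, hCm⟩ := exists_nat_ge ((1 + r * (dstar + 1)) ^ (q + 1) * C₀)
    refine ⟨K * C₀ + C + Cm, fun d f hf ℓ X p hp => ?_⟩
    obtain ⟨H, g, hH, hHcube, hg, hfg⟩ := hf
    choose F hFnet hF hFdist using fun j => hcomp d _ (hH j) ℓ X p hp
    obtain ⟨out, hnet, hout, hdist⟩ := hC K g hg ℓ X F hF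
    refine ⟨out, ?_, hout, fun t => ?_⟩
    · have hinner : SparseNet p ((K * C₀ + C + Cm) * 2 ^ (ℓ * dstar)) (C₀ * (ℓ + 1)) F :=
        (SparseNet.pi F hFnet).mono (by
          rw [Fintype.card_fin, ← mul_assoc]
          exact Nat.mul_le_mul_right _ (by omega))
      exact (hinner.trans (hnet.mono (Nat.mul_le_mul_right _ (by omega)))).pad (by nlinarith)
    set h : ℝ := (2 ^ ℓ : ℝ)⁻¹
    have hx : (fun j => p j t) ∈ cube d := fun j _ => hp j t
    have hdistH : ‖(fun j => F j t) - H fun j => p j t‖ ≤ C₀ * h ^ β :=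
      (pi_norm_le_iff_of_nonneg (by positivity)).2 fun j => by
        simpa only [clip01_of_mem (hHcube _ hx j (mem_univ j))] using! hFdist j t
    rw [hfg _ hx]
    refine (GCHOM.abs_sub_clip01_le hβ hr (by exact_mod_cast hC₀) C.cast_nonneg hg
      (x := fun j => F j t) (fun j _ => hF j t) (hHcube _ hx) (by positivity)
      (inv_le_one_of_one_le₀ (one_le_pow₀ one_le_two)) hdistH (hdist t)).trans ?_
    gcongr
    push_cast
    linarith [show (0 : ℝ) ≤ K * C₀ by positivity]

end Composition

/-! ## Array form of networks -/

/-- Activations of a network whose weights and shifts are stored in arrays; `wd i` is the width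
of layer `i`, and entries beyond the widths are ignored. -/
def arrayAct (wd : ℕ → ℕ) (W : ℕ → ℕ → ℕ → ℝ) (v : ℕ → ℕ → ℝ) (x : ℕ → ℝ) : ℕ → ℕ → ℝ
  | 0 => x
  | i + 1 => fun j =>
      max 0 (∑ k ∈ Finset.range (wd i), W i j k * arrayAct wd W v x i k - v (i + 1) j)

/-- The widths of the input layer and the hidden layers of a network with `d` inputs and `w`
units in every hidden layer. -/
def layerWidth (d w i : ℕ) : ℕ := if i = 0 then d else w

/-- The arrays `W` and `v` hold the parameters of a layer with `n` inputs and `w` units, all in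
`[-1,1]`, at most `w` of them nonzero. -/
def IsSparseArray (w n : ℕ) (W : ℕ → ℕ → ℝ) (v : ℕ → ℝ) : Prop :=
  (∀ j k, |W j k| ≤ 1) ∧ (∀ j, |v j| ≤ 1) ∧
    ∑ j ∈ Finset.range w, (indNonzero (v j) + ∑ k ∈ Finset.range n, indNonzero (W j k)) ≤ w

lemma arrayAct_congr (wd : ℕ → ℕ) {W W' : ℕ → ℕ → ℕ → ℝ} {v v' : ℕ → ℕ → ℝ} (x : ℕ → ℝ) (n : ℕ)
    (hW : ∀ i < n, W i = W' i) (hv : ∀ i < n, v (i + 1) = v' (i + 1)) :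
    arrayAct wd W v x n = arrayAct wd W' v' x n := by
  induction n with
  | zero => rfl
  | succ n ih =>
    funext j
    simp only [arrayAct]
    rw [ih (fun i hi => hW i (by omega)) (fun i hi => hv i (by omega)), hW n (by omega),
      hv n (by omega)]

lemma isSparseArray_zero (w n : ℕ) : IsSparseArray w n 0 0 := by
  simp [IsSparseArray, indNonzero_zero]

lemma IsSparseArray.update {w : ℕ} {n : ℕ → ℕ} {W : ℕ → ℕ → ℕ → ℝ} {v : ℕ → ℕ → ℝ}
    (h : ∀ i, IsSparseArray w (n i) (W i) (v (i + 1))) {L : ℕ} {W' : ℕ → ℕ → ℝ} {v' : ℕ → ℝ}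
    (h' : IsSparseArray w (n L) W' v') (i : ℕ) :
    IsSparseArray w (n i) (Function.update W L W' i) (Function.update v (L + 1) v' (i + 1)) := by
  rcases eq_or_ne i L with rfl | hi
  · simpa only [Function.update_self]
  · simpa only [Function.update_of_ne hi, Function.update_of_ne ((add_left_injective 1).ne hi)]
      using h i

lemma sum_range_extend {κ M R : Type*} [Fintype κ] [Zero M] [AddCommMonoid R] {e : κ → ℕ}
    (he : Function.Injective e) {n : ℕ} (hn : ∀ a, e a < n) (f : κ → M) {φ : M → ℕ → R}
    (hφ : ∀ k, φ 0 k = 0) :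
    ∑ k ∈ Finset.range n, φ (Function.extend e f 0 k) k = ∑ a, φ (f a) (e a) := by
  classical
  have hsub : Finset.univ.image e ⊆ Finset.range n :=
    Finset.image_subset_iff.2 fun a _ => Finset.mem_range.2 (hn a)
  rw [← Finset.sum_subset hsub, Finset.sum_image fun a _ b _ h => he h]
  · simp only [he.extend_apply]
  · intro k _ hk
    rw [Function.extend_apply' _ _ _ fun ⟨a, ha⟩ => hk (Finset.mem_image.2 ⟨a, by simp, ha⟩)]
    exact hφ k

lemma abs_extend_zero_le {ι : Type*} (f : ι → ℕ) {g : ι → ℝ} {C : ℝ} (hC : 0 ≤ C)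
    (hg : ∀ a, |g a| ≤ C) (k : ℕ) : |Function.extend f g 0 k| ≤ C := by
  classical
  rw [Function.extend_def]
  split_ifs
  · exact hg _
  · simpa using hC

lemma SparseLayer.exists_array {X κ μ : Type*} [Fintype κ] [Fintype μ] {w n : ℕ} {H : μ → X → ℝ}
    {F : κ → X → ℝ} (h : SparseLayer w H F) {e' : μ → ℕ} (he' : Function.Injective e')
    (hn : ∀ b, e' b < n) :
    ∃ (e : κ → ℕ) (W : ℕ → ℕ → ℝ) (v : ℕ → ℝ), Function.Injective e ∧ (∀ a, e a < w) ∧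
      IsSparseArray w n W v ∧ ∀ (y : ℕ → ℝ) (t : X), (∀ b, y (e' b) = H b t) →
        ∀ a, max 0 (∑ k ∈ Finset.range n, W (e a) k * y k - v (e a)) = F a t := by
  obtain ⟨W, v, hW, hv, hκ, hcount, hF⟩ := h
  let e : κ → ℕ := fun a => Fintype.equivFin κ a
  have he : Function.Injective e := Fin.val_injective.comp (Fintype.equivFin κ).injective
  have hew (a : κ) : e a < w := (Fintype.equivFin κ a).2.trans_le hκ
  let rows : κ → ℕ → ℝ := fun a => Function.extend e' (W a) 0
  refine ⟨e, Function.extend e rows 0, Function.extend e v 0, he, hew,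
    ⟨fun j k => ?_, abs_extend_zero_le e zero_le_one hv, ?_⟩, fun y t hy a => ?_⟩
  · rw [Function.extend_def]
    split_ifs
    · exact abs_extend_zero_le e' zero_le_one (hW _) k
    · simp
  · rw [Finset.sum_add_distrib] at hcount ⊢
    rw [sum_range_extend he hew v (φ := fun c _ => indNonzero c) fun _ => indNonzero_zero,
      sum_range_extend he hew rows (φ := fun c _ => ∑ k ∈ Finset.range n, indNonzero (c k))
        fun _ => by simp [indNonzero_zero]]
    simpa only [rows, sum_range_extend he' hn _ (φ := fun c _ => indNonzero c)
      fun _ => indNonzero_zero] using hcount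
  · rw [hF, he.extend_apply, he.extend_apply,
      sum_range_extend he' hn (W a) (φ := fun c k => c * y k) fun _ => zero_mul _]
    simp only [hy]

lemma SparseNet.exists_array {X : Type*} {d w L : ℕ} {p : Fin d → X → ℝ} {κ : Type} [Fintype κ]
    {F : κ → X → ℝ} (h : SparseNet p w L F) :
    ∃ (e : κ → ℕ) (W : ℕ → ℕ → ℕ → ℝ) (v : ℕ → ℕ → ℝ), Function.Injective e ∧ (∀ a, e a < w) ∧
      (∀ i, IsSparseArray w (layerWidth d w i) (W i) (v (i + 1))) ∧
      ∀ (x : ℕ → ℝ) (t : X), (∀ k : Fin d, x k = p k t) →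
        ∀ a, arrayAct (layerWidth d w) W v x (L + 1) (e a) = F a t := by
  induction L generalizing κ with
  | zero =>
    obtain ⟨e, W, v, he, hew, hsparse, hF⟩ := SparseLayer.exists_array (n := d) h
      Fin.val_injective fun b => b.2
    refine ⟨e, Function.update 0 0 W, Function.update 0 (0 + 1) v, he, hew,
      IsSparseArray.update (fun i => isSparseArray_zero _ _) hsparse, fun x t hx a => ?_⟩
    simpa [arrayAct, layerWidth] using hF x t hx a
  | succ L ih =>
    obtain ⟨μ, _, H, hH, hlayer⟩ := h
    obtain ⟨e', W', v', he', hew', hsparse', hF'⟩ := ih hH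
    obtain ⟨e, W, v, he, hew, hsparse, hF⟩ := hlayer.exists_array he' hew'
    refine ⟨e, Function.update W' (L + 1) W, Function.update v' (L + 1 + 1) v, he, hew,
      IsSparseArray.update hsparse' hsparse, fun x t hx a => ?_⟩
    have hhidden : arrayAct (layerWidth d w) (Function.update W' (L + 1) W)
        (Function.update v' (L + 1 + 1) v) x (L + 1) =
        arrayAct (layerWidth d w) W' v' x (L + 1) :=
      arrayAct_congr _ x (L + 1) (fun i hi => Function.update_of_ne (by omega) _ _)
        fun i hi => Function.update_of_ne (by omega) _ _
    rw [arrayAct, hhidden, Function.update_self, Function.update_self]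
    exact hF _ t (hF' x t hx) a

/-- The network with `L` hidden layers of width `w`, parameters `W`, `v`, and output row `c`. -/
def arrayNet (d w L : ℕ) (W : ℕ → ℕ → ℕ → ℝ) (v : ℕ → ℕ → ℝ) (c : ℕ → ℝ) : ReLUNet d where
  L := L
  width i := if i = L + 1 then 1 else layerWidth d w i
  W i j k := if i = L then c k else W i j k
  v i j := v i j
  h0 := by simp [layerWidth]
  hL := by simp

/-- The number of nonzero weights and shifts, as it is counted in `FNN`. -/
def ReLUNet.numParams {d : ℕ} (net : ReLUNet d) : ℕ :=
  ∑ i ∈ Finset.range (net.L + 1),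
      Nat.card {p : Fin (net.width (i + 1)) × Fin (net.width i) // net.W i p.1 p.2 ≠ 0} +
    ∑ i ∈ Finset.range net.L, Nat.card {j : Fin (net.width (i + 1)) // net.v (i + 1) j ≠ 0}

section ArrayNet

variable {d w L : ℕ} {W : ℕ → ℕ → ℕ → ℝ} {v : ℕ → ℕ → ℝ} {c : ℕ → ℝ}

lemma arrayNet_width {i : ℕ} (hi : i ≤ L) : (arrayNet d w L W v c).width i = layerWidth d w i :=
  if_neg (by omega)

lemma arrayNet_eval (x : Fin d → ℝ) {y : ℕ → ℝ} (hy : ∀ k : Fin d, y k = x k) :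
    (arrayNet d w L W v c).eval x =
      ∑ k ∈ Finset.range (layerWidth d w L), c k * arrayAct (layerWidth d w) W v y L k := by
  set net := arrayNet d w L W v c
  have hlayer : ∀ i ≤ L, ∀ j, net.layer (fun j => x (Fin.cast net.h0 j)) i j =
      ∑ k ∈ Finset.range (layerWidth d w i),
        (if i = L then c k else W i j k) * arrayAct (layerWidth d w) W v y i k := by
    intro i
    induction i with
    | zero =>
      intro hi j
      rw [← arrayNet_width (W := W) (v := v) (c := c) hi, ← Fin.sum_univ_eq_sum_range
        fun k => (if 0 = L then c k else W 0 j k) * arrayAct (layerWidth d w) W v y 0 k]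
      refine Finset.sum_congr rfl fun k _ => ?_
      congr 1
      exact (hy (Fin.cast net.h0 k)).symm
    | succ i ih =>
      intro hi j
      rw [← arrayNet_width (W := W) (v := v) (c := c) hi, ← Fin.sum_univ_eq_sum_range
        fun k => (if i + 1 = L then c k else W (i + 1) j k) *
          arrayAct (layerWidth d w) W v y (i + 1) k]
      refine Finset.sum_congr rfl fun k _ => ?_
      rw [ih (by omega)]
      simp only [if_neg (show i ≠ L by omega)]
      rfl
  refine (hlayer L le_rfl _).trans ?_
  simp only [if_true]

lemma natCard_ne_zero_eq_sum {ι : Type*} [Fintype ι] (A : ι → ℝ) :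
    Nat.card {i // A i ≠ 0} = ∑ i, indNonzero (A i) := by
  classical
  rw [Nat.card_eq_fintype_card, Fintype.card_subtype, Finset.card_filter]
  exact Finset.sum_congr rfl fun i _ => by by_cases h : A i = 0 <;> simp [indNonzero, h]

lemma natCard_array_ne_zero (a b : ℕ) (A : ℕ → ℕ → ℝ) :
    Nat.card {p : Fin a × Fin b // A p.1 p.2 ≠ 0} =
      ∑ j ∈ Finset.range a, ∑ k ∈ Finset.range b, indNonzero (A j k) := by
  rw [natCard_ne_zero_eq_sum fun p : Fin a × Fin b => A p.1 p.2, Fintype.sum_prod_type,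
    ← Fin.sum_univ_eq_sum_range fun j => ∑ k ∈ Finset.range b, indNonzero (A j k)]
  exact Finset.sum_congr rfl fun j _ => Fin.sum_univ_eq_sum_range (fun k => indNonzero (A j k)) b

lemma arrayNet_natCard_weights {i : ℕ} (hi : i < L) :
    Nat.card {p : Fin ((arrayNet d w L W v c).width (i + 1)) ×
      Fin ((arrayNet d w L W v c).width i) // (arrayNet d w L W v c).W i p.1 p.2 ≠ 0} =
      ∑ j ∈ Finset.range w, ∑ k ∈ Finset.range (layerWidth d w i), indNonzero (W i j k) := by
  refine (natCard_array_ne_zero _ _ fun j k => if i = L then c k else W i j k).trans ?_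
  rw [arrayNet_width hi, arrayNet_width hi.le]
  simp [hi.ne, layerWidth]

lemma arrayNet_natCard_shifts {i : ℕ} (hi : i < L) :
    Nat.card {j : Fin ((arrayNet d w L W v c).width (i + 1)) //
      (arrayNet d w L W v c).v (i + 1) j ≠ 0} =
      ∑ j ∈ Finset.range w, indNonzero (v (i + 1) j) := by
  refine (natCard_ne_zero_eq_sum fun j : Fin _ => v (i + 1) j).trans ?_
  rw [Fin.sum_univ_eq_sum_range (fun j => indNonzero (v (i + 1) j)), arrayNet_width hi]
  simp [layerWidth]

lemma arrayNet_natCard_output_le :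
    Nat.card {p : Fin ((arrayNet d w (L + 1) W v c).width (L + 1 + 1)) ×
      Fin ((arrayNet d w (L + 1) W v c).width (L + 1)) //
        (arrayNet d w (L + 1) W v c).W (L + 1) p.1 p.2 ≠ 0} ≤ w := by
  refine (Nat.card_le_card_of_injective _ Subtype.val_injective).trans ?_
  rw [Nat.card_prod, Nat.card_fin, Nat.card_fin, arrayNet_width le_rfl]
  simp [arrayNet, layerWidth]

lemma arrayNet_numParams_le
    (hsparse : ∀ i, IsSparseArray w (layerWidth d w i) (W i) (v (i + 1))) :
    (arrayNet d w (L + 1) W v c).numParams ≤ (L + 2) * w := by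
  change ∑ i ∈ Finset.range (L + 1 + 1), _ + ∑ i ∈ Finset.range (L + 1), _ ≤ _
  rw [Finset.sum_range_succ, add_right_comm, ← Finset.sum_add_distrib,
    show (L + 2) * w = ∑ _i ∈ Finset.range (L + 1), w + w by simp; ring]
  refine add_le_add (Finset.sum_le_sum fun i hi => ?_) arrayNet_natCard_output_le
  rw [arrayNet_natCard_weights (Finset.mem_range.1 hi),
    arrayNet_natCard_shifts (Finset.mem_range.1 hi), add_comm, ← Finset.sum_add_distrib]
  exact (hsparse i).2.2

end ArrayNet

lemma SparseNet.exists_mem_FNN {d w L : ℕ} {κ : Type} [Fintype κ] {F : κ → cube d → ℝ}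
    (h : SparseNet (fun (j : Fin d) (x : cube d) => x.1 j) w L F) {c : κ → ℝ}
    (hc : ∀ a, |c a| ≤ 1) {G N B : ℝ} {S : ℝ≥0∞} (hG : (L : ℝ) + 1 ≤ G) (hN : (w : ℝ) ≤ N)
    (hN1 : 1 ≤ N) (hd : (d : ℝ) ≤ N) (hS : (((L + 2) * w : ℕ) : ℝ≥0∞) ≤ S) (hB : 1 ≤ B) :
    ∃ f ∈ FNN d G N S B ∞, ∀ x : cube d, f x = ∑ a, c a * F a x := by
  obtain ⟨e, W, v, he, hew, hsparse, hF⟩ := h.exists_array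
  set net := arrayNet d w (L + 1) W v (Function.extend e c 0) with hnet
  refine ⟨net.eval, ⟨net, fun x => rfl, by simpa [hnet, arrayNet] using hG, fun i _ => ?_,
    le_trans ?_ hS, fun i _ j k => le_trans ?_ hB, fun i hi _ j => le_trans ?_ hB,
    fun x _ => le_top⟩, fun x => ?_⟩
  · simp only [hnet, arrayNet, layerWidth]
    split_ifs
    · simpa using hN1
    · exact hd
    · exact hN
  · exact_mod_cast arrayNet_numParams_le (c := Function.extend e c 0) hsparse
  · change |if i = L + 1 then Function.extend e c 0 k else W i j k| ≤ 1
    split_ifs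
    · exact abs_extend_zero_le e zero_le_one hc k
    · exact (hsparse i).1 j k
  · obtain ⟨i, rfl⟩ := Nat.exists_eq_add_of_le' hi
    exact (hsparse i).2.1 j
  · set y : ℕ → ℝ := Function.extend Fin.val x.1 0
    have hy (k : Fin d) : y k = x.1 k := Fin.val_injective.extend_apply _ _ _
    rw [hnet, arrayNet_eval x.1 hy, sum_range_extend he (by simpa [layerWidth] using hew) c
      (φ := fun c k => c * arrayAct (layerWidth d w) W v y (L + 1) k) fun _ => zero_mul _]
    exact Finset.sum_congr rfl fun a _ => by rw [hF y x hy]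

/-! ## Approximation of the Bayes classifier -/

lemma abs_sgn (t : ℝ) : |sgn t| = 1 := by
  unfold sgn; split_ifs <;> simp

lemma sgn_mul_of_pos {c : ℝ} (hc : 0 < c) (t : ℝ) : sgn (c * t) = sgn t := by
  simp only [sgn, mul_nonneg_iff_of_pos_left hc]

lemma abs_trunc_le {F : ℝ} (hF : 0 ≤ F) (t : ℝ) : |trunc F t| ≤ F :=
  abs_le.2 ⟨le_min (by linarith) (le_max_left _ _), min_le_left _ _⟩

lemma clip01_sub_clip01_neg (t : ℝ) : clip01 t - clip01 (-t) = trunc 1 t := by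
  unfold clip01 trunc; grind

lemma trunc_one_mul_eq_sgn {M u v δ : ℝ} (hδ : 0 < δ) (hM : 1 ≤ M * δ)
    (h : |u - v| + δ ≤ |v|) : trunc 1 (M * u) = sgn v := by
  have hM0 : 0 < M := pos_of_mul_pos_left (one_pos.trans_le hM) hδ.le
  rcases le_or_gt 0 v with hv | hv
  · have hu : δ ≤ u := by linarith [neg_abs_le (u - v), abs_of_nonneg hv]
    have hMu : 1 ≤ M * u := hM.trans (mul_le_mul_of_nonneg_left hu hM0.le)
    rw [sgn, if_pos hv, trunc, min_eq_left (hMu.trans (le_max_right _ _))]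
  · have hu : u ≤ -δ := by linarith [le_abs_self (u - v), abs_of_neg hv]
    have hMu : M * u ≤ -1 := by linarith [mul_le_mul_of_nonneg_left hu hM0.le]
    rw [sgn, if_neg hv.not_ge, trunc, max_eq_left hMu, min_eq_right (by norm_num)]

lemma sparseNet_clip01_two_pow_mul {X : Type} (z : X → ℝ) {a v : ℝ} (ha : |a| ≤ 1) (hv : |v| ≤ 1)
    (k : ℕ) : SparseNet (fun _ : Unit => z) 6 (k + 4)
      (fun _ : Unit => fun t => clip01 (2 ^ k * (a * z t - v))) := by
  have affine : SparseNet (fun _ : Unit => z) 6 0 fun _ : Unit => fun t => max 0 (a * z t - v) :=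
    SparseLayer.of_dense (fun _ _ => a) (fun _ => v) (fun _ _ => ha) (fun _ => hv) (by simp)
      (by simp)
  have hnet := ((affine.trans (sparseNet_two_pow_mul _ (fun t => le_max_left _ _) k)).trans
    ((sparseNet_clip01 _).mono (by norm_num))).pad (by omega : _ ≤ k + 4)
  convert hnet using 3 with _ t
  rw [clip01, clip01, mul_max_of_nonneg _ _ (by positivity), mul_zero, ← max_assoc, max_self]

lemma SparseNet.exists_mem_FNN_trunc {d w L k : ℕ} {z : cube d → ℝ}
    (h : SparseNet (fun (j : Fin d) (x : cube d) => x.1 j) w L fun _ : Unit => z) (hw : 12 ≤ w)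
    {G N B : ℝ} {S : ℝ≥0∞} (hG : ((L + k + 7 : ℕ) : ℝ) ≤ G) (hN : (w : ℝ) ≤ N)
    (hd : (d : ℝ) ≤ N) (hS : (((L + k + 7) * w : ℕ) : ℝ≥0∞) ≤ S) (hB : 1 ≤ B) :
    ∃ g ∈ FNN d G N S B ∞, ∀ x : cube d, g x = trunc 1 (2 ^ k * (z x - 1 / 2)) := by
  have upper := sparseNet_clip01_two_pow_mul z (a := 1) (v := 1 / 2) (by simp)
    (by rw [abs_of_pos] <;> norm_num) k
  have lower := sparseNet_clip01_two_pow_mul z (a := -1) (v := -(1 / 2)) (by simp)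
    (by rw [abs_neg, abs_of_pos] <;> norm_num) k
  obtain ⟨g, hg, hgz⟩ := (h.trans ((upper.par lower).mono hw)).exists_mem_FNN
    (c := Sum.elim (fun _ => 1) fun _ => -1) (by rintro (a | a) <;> simp)
    (le_trans (by exact_mod_cast (by omega : L + (k + 4) + 1 + 1 ≤ L + k + 7)) hG) hN
    (le_trans (by exact_mod_cast (by omega : 1 ≤ w)) hN) hd
    (le_trans (Nat.cast_le.2 (Nat.mul_le_mul_right _ (by omega))) hS) hB
  refine ⟨g, hg, fun x => ?_⟩
  rw [hgz, ← clip01_sub_clip01_neg]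
  simp only [Fintype.sum_sum_type, Sum.elim_inl, Sum.elim_inr, Finset.univ_unique,
    Finset.sum_singleton]
  ring_nf

lemma one_le_two_pow_ceil_mul {e : ℝ} (ℓ : ℕ) :
    1 ≤ 2 ^ (⌈e⌉₊ * ℓ) * ((2 ^ ℓ : ℝ)⁻¹) ^ e := by
  rw [Real.inv_rpow (by positivity), ← div_eq_mul_inv, one_le_div (by positivity), mul_comm,
    pow_mul, ← Real.rpow_natCast _ ⌈e⌉₊]
  exact Real.rpow_le_rpow_of_exponent_le (one_le_pow₀ one_le_two) (Nat.le_ceil e)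

lemma GCHOM.exists_classifier {β r : ℝ} (hβ : 0 < β) (hr : 0 < r) (dmax dstar q : ℕ) :
    ∃ Cd : ℕ, ∀ K : ℕ, ∃ C : ℕ, 1 ≤ C ∧ ∀ (d : ℕ), ∀ f ∈ GCHOM K dmax dstar β r q d,
      ∀ (ℓ : ℕ) {G N B : ℝ} {S : ℝ≥0∞}, ((Cd * (ℓ + 1) : ℕ) : ℝ) ≤ G →
      ((C * 2 ^ (ℓ * dstar) : ℕ) : ℝ) ≤ N → (d : ℝ) ≤ N →
      (((Cd * (ℓ + 1)) * (C * 2 ^ (ℓ * dstar)) : ℕ) : ℝ≥0∞) ≤ S → 1 ≤ B →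
      ∃ g ∈ FNN d G N S B ∞, (∀ x ∈ cube d, |g x| ≤ 1) ∧ ∀ x ∈ cube d, f x ∈ Icc (0 : ℝ) 1 →
        C * ((2 ^ ℓ : ℝ)⁻¹) ^ (β * min 1 β ^ q) < |2 * f x - 1| → g x = sgn (2 * f x - 1) := by
  obtain ⟨Cd, hCd⟩ := GCHOM.exists_sparseNet hβ hr dmax dstar q
  set e : ℝ := β * min 1 β ^ q
  refine ⟨Cd + ⌈e⌉₊ + 7, fun K => ?_⟩
  obtain ⟨C, hC⟩ := hCd K
  refine ⟨2 * C + 12, by omega, fun d f hf ℓ G N B S hG hN hd hS hB => ?_⟩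
  obtain ⟨z, hnet, -, hz⟩ := hC d f hf ℓ (cube d) (fun j x => x.1 j) fun j x => x.2 j (mem_univ j)
  have hdepth : Cd * (ℓ + 1) + ⌈e⌉₊ * ℓ + 7 ≤ (Cd + ⌈e⌉₊ + 7) * (ℓ + 1) := by nlinarith
  obtain ⟨g, hg, hgz⟩ := (hnet.mono (Nat.mul_le_mul_right _ (by omega))).exists_mem_FNN_trunc
    (le_mul_of_le_of_one_le (by omega : 12 ≤ 2 * C + 12) Nat.one_le_two_pow)
    (le_trans (Nat.cast_le.2 hdepth) hG) hN hd
    (le_trans (Nat.cast_le.2 (Nat.mul_le_mul_right _ hdepth)) hS) hB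
  refine ⟨g, hg, fun x hx => (hgz ⟨x, hx⟩).symm ▸ abs_trunc_le zero_le_one _,
    fun x hx hfx ht => ?_⟩
  set δ : ℝ := ((2 ^ ℓ : ℝ)⁻¹) ^ e
  have hδ0 : 0 < δ := by positivity
  have hzf : |z ⟨x, hx⟩ - f x| ≤ C * δ := by simpa only [clip01_of_mem hfx] using! hz ⟨x, hx⟩
  have hmargin : |2 * f x - 1| = 2 * |f x - 1 / 2| := by
    rw [← abs_two, ← abs_mul, abs_two]; congr 1; ring
  rw [hgz ⟨x, hx⟩, show 2 * f x - 1 = 2 * (f x - 1 / 2) by ring, sgn_mul_of_pos two_pos]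
  refine trunc_one_mul_eq_sgn hδ0 (one_le_two_pow_ceil_mul ℓ) ?_
  rw [sub_sub_sub_cancel_right]
  push_cast at ht
  linarith

/-! ## Discretization of network classes -/

/-- The layer outputs `W_i σ_{v_i} ⋯ W_1 σ_{v_1} W_0 y` of a network with `w` units in every layer,
its parameters packed into one array: `U (i, j, k)` is the weight `(W_i)_{jk}` if `k < w`, and
`U (i, j, w)` is the shift `(v_{i+1})_j`. -/
def packedLayer (w : ℕ) (U : ℕ × ℕ × ℕ → ℝ) (y : ℕ → ℝ) : ℕ → ℕ → ℝ
  | 0 => fun j => ∑ k ∈ Finset.range w, U (0, j, k) * y k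
  | i + 1 => fun j =>
      ∑ k ∈ Finset.range w, U (i + 1, j, k) * max 0 (packedLayer w U y i k - U (i, k, w))

section PackedLayer

variable {w : ℕ} {B η : ℝ} {U V : ℕ × ℕ × ℕ → ℝ} {y : ℕ → ℝ}

lemma abs_sum_range_mul_le {a b : ℕ → ℝ} {Z : ℝ} (ha : ∀ k, |a k| ≤ B) (hb : ∀ k, |b k| ≤ Z) :
    |∑ k ∈ Finset.range w, a k * b k| ≤ w * (B * Z) := by
  refine (Finset.abs_sum_le_sum_abs _ _).trans
    ((Finset.sum_le_card_nsmul _ _ (B * Z) fun k _ => ?_).trans (by simp))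
  rw [abs_mul]
  exact mul_le_mul (ha k) (hb k) (abs_nonneg _) ((abs_nonneg _).trans (ha k))

lemma abs_sum_range_mul_sub_le {a b a' b' : ℕ → ℝ} {Z δ : ℝ} (ha' : ∀ k, |a' k| ≤ B)
    (hb : ∀ k, |b k| ≤ Z) (haa' : ∀ k, |a k - a' k| ≤ η) (hbb' : ∀ k, |b k - b' k| ≤ δ) :
    |∑ k ∈ Finset.range w, a k * b k - ∑ k ∈ Finset.range w, a' k * b' k| ≤
      w * (η * Z) + w * (B * δ) := by
  have hsplit : ∑ k ∈ Finset.range w, a k * b k - ∑ k ∈ Finset.range w, a' k * b' k =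
      ∑ k ∈ Finset.range w, (a k - a' k) * b k + ∑ k ∈ Finset.range w, a' k * (b k - b' k) := by
    rw [← Finset.sum_sub_distrib, ← Finset.sum_add_distrib]
    exact Finset.sum_congr rfl fun k _ => by ring
  rw [hsplit]
  exact (abs_add_le _ _).trans
    (add_le_add (abs_sum_range_mul_le haa' hb) (abs_sum_range_mul_le ha' hbb'))

lemma abs_max_zero_sub_sub_max_zero_sub_le (p q r t : ℝ) :
    |max 0 (p - q) - max 0 (r - t)| ≤ |p - r| + |q - t| := by
  rw [max_comm 0, max_comm 0]
  refine (abs_max_sub_max_le_abs _ _ _).trans ?_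
  rw [show p - q - (r - t) = (p - r) - (q - t) by ring]
  exact abs_sub _ _

lemma abs_max_zero_packedLayer_sub_le (hB : 1 ≤ B) (hU : ∀ p, |U p| ≤ B) (hy : ∀ k, |y k| ≤ 1)
    (i k : ℕ) : |max 0 (packedLayer w U y i k - U (i, k, w))| ≤ ((w + 1) * B) ^ (i + 1) := by
  have act_le (i k : ℕ) (h : |packedLayer w U y i k| ≤ w * (B * ((w + 1) * B) ^ i)) :
      |max 0 (packedLayer w U y i k - U (i, k, w))| ≤ ((w + 1) * B) ^ (i + 1) := by
    have hmax := abs_max_zero_sub_sub_max_zero_sub_le (packedLayer w U y i k) (U (i, k, w)) 0 0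
    simp only [sub_zero, max_self] at hmax
    have hpow : 1 ≤ ((w + 1) * B) ^ i :=
      one_le_pow₀ (one_le_mul_of_one_le_of_one_le (by simp) hB)
    calc _ ≤ w * (B * ((w + 1) * B) ^ i) + B := hmax.trans (add_le_add h (hU _))
      _ ≤ w * (B * ((w + 1) * B) ^ i) + B * ((w + 1) * B) ^ i := by
          gcongr; exact le_mul_of_one_le_right (by linarith) hpow
      _ = ((w + 1) * B) ^ (i + 1) := by ring
  refine act_le i k ?_
  induction i generalizing k with
  | zero => simpa [packedLayer] using abs_sum_range_mul_le (w := w) (fun k' => hU (0, k, k')) hy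
  | succ i ih =>
    exact abs_sum_range_mul_le (fun k' => hU (i + 1, k, k')) fun k' => act_le i k' (ih k')

lemma abs_packedLayer_sub_add_le (hB : 1 ≤ B) (hU : ∀ p, |U p| ≤ B) (hV : ∀ p, |V p| ≤ B)
    (hUV : ∀ p, |U p - V p| ≤ η) (hy : ∀ k, |y k| ≤ 1) (i j : ℕ) :
    |packedLayer w U y i j - packedLayer w V y i j| + η ≤ η * (2 * ((w + 1) * B)) ^ (i + 1) := by
  have hη : 0 ≤ η := (abs_nonneg _).trans (hUV 0)
  set A := (w + 1) * B with hA
  have hw1 : (w : ℝ) + 1 ≤ A := le_mul_of_one_le_right (by positivity) hB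
  have hwB : w * B ≤ A := by rw [hA]; linarith [add_one_mul (w : ℝ) B]
  have hA1 : 1 ≤ 2 * A := by linarith [w.cast_nonneg (α := ℝ)]
  induction i generalizing j with
  | zero =>
    have h := abs_sum_range_mul_sub_le (w := w) (fun k => hV (0, j, k)) hy (fun k => hUV (0, j, k))
      (δ := 0) (b' := y) (by simp)
    calc _ ≤ w * (η * 1) + w * (B * 0) + η := add_le_add_left h _
      _ = η * (w + 1) := by ring
      _ ≤ η * (2 * A) ^ (0 + 1) := by rw [zero_add, pow_one]; gcongr; linarith
  | succ i ih =>
    have h := abs_sum_range_mul_sub_le (w := w) (fun k => hV (i + 1, j, k))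
      (abs_max_zero_packedLayer_sub_le hB hU hy i) (fun k => hUV (i + 1, j, k)) fun k =>
        (abs_max_zero_sub_sub_max_zero_sub_le (packedLayer w U y i k) (U (i, k, w)) _ _).trans
          ((add_le_add_right (hUV (i, k, w)) _).trans (ih k))
    calc _ ≤ w * (η * A ^ (i + 1)) + w * (B * (η * (2 * A) ^ (i + 1))) + η := add_le_add_left h _
      _ ≤ w * (η * (2 * A) ^ (i + 1)) + w * (B * (η * (2 * A) ^ (i + 1))) +
            η * (2 * A) ^ (i + 1) := by
          gcongr
          · linarith
          · exact le_mul_of_one_le_right hη (one_le_pow₀ hA1)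
      _ = (w + 1 + w * B) * (η * (2 * A) ^ (i + 1)) := by ring
      _ ≤ (A + A) * (η * (2 * A) ^ (i + 1)) := by gcongr
      _ = η * (2 * A) ^ (i + 1 + 1) := by ring

lemma measurable_packedLayer {X : Type*} [MeasurableSpace X] {y : X → ℕ → ℝ}
    (hy : ∀ k, Measurable fun x => y x k) (U : ℕ × ℕ × ℕ → ℝ) (i j : ℕ) :
    Measurable fun x => packedLayer w U (y x) i j := by
  induction i generalizing j with
  | zero => exact Finset.measurable_sum _ fun k _ => (hy k).const_mul _
  | succ i ih =>
    exact Finset.measurable_sum _ fun k _ =>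
      (measurable_const.max ((ih k).sub_const _)).const_mul _

end PackedLayer

/-- The parameters of a network with widths at most `w`, packed as in `packedLayer`. -/
def ReLUNet.pack {d : ℕ} (net : ReLUNet d) (w : ℕ) : ℕ × ℕ × ℕ → ℝ := fun (i, j, k) =>
  if hj : i ≤ net.L ∧ j < net.width (i + 1) then
    if hk : k < net.width i then net.W i ⟨j, hj.2⟩ ⟨k, hk⟩
    else if k = w ∧ i < net.L then net.v (i + 1) ⟨j, hj.2⟩ else 0
  else 0

namespace ReLUNet

variable {d w : ℕ} (net : ReLUNet d)

lemma sum_range_pack_mul (hw : ∀ i ≤ net.L + 1, net.width i ≤ w) {i : ℕ} (hi : i ≤ net.L)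
    (j : Fin (net.width (i + 1))) (y : ℕ → ℝ) :
    ∑ k ∈ Finset.range w, net.pack w (i, j, k) * y k =
      ∑ k : Fin (net.width i), net.W i j k * y k := by
  rw [← Finset.sum_subset (Finset.range_subset_range.2 (hw i (by omega))) fun k hk hk' => ?_,
    ← Fin.sum_univ_eq_sum_range (fun k => net.pack w (i, j, k) * y k)]
  · exact Finset.sum_congr rfl fun k _ => by simp [pack, hi]
  · have hkw : k ≠ w := (Finset.mem_range.1 hk).ne
    simp only [Finset.mem_range] at hk'
    simp [pack, hk', hkw]

lemma layer_eq_packedLayer (hw : ∀ i ≤ net.L + 1, net.width i ≤ w) (x : Fin d → ℝ) {i : ℕ}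
    (hi : i ≤ net.L) (j : Fin (net.width (i + 1))) :
    net.layer (fun j => x (Fin.cast net.h0 j)) i j =
      packedLayer w (net.pack w) (Function.extend Fin.val x 0) i j := by
  induction i with
  | zero =>
    refine Eq.trans ?_ (net.sum_range_pack_mul hw hi j _).symm
    exact Finset.sum_congr rfl fun k _ => congrArg _
      (Fin.val_injective.extend_apply x 0 (Fin.cast net.h0 k)).symm
  | succ i ih =>
    refine Eq.trans ?_ (net.sum_range_pack_mul hw hi j _).symm
    refine Finset.sum_congr rfl fun k _ => ?_
    have hshift : net.pack w (i, k, w) = net.v (i + 1) k := by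
      simp [pack, (hw i (by omega)).not_gt, show i ≤ net.L by omega, show i < net.L by omega]
    rw [ih (by omega) k, hshift]

lemma eval_eq_packedLayer (hw : ∀ i ≤ net.L + 1, net.width i ≤ w) (x : Fin d → ℝ) :
    net.eval x = packedLayer w (net.pack w) (Function.extend Fin.val x 0) net.L 0 :=
  net.layer_eq_packedLayer hw x le_rfl _

lemma abs_pack_le {B : ℝ} (hB : 0 ≤ B) (hW : ∀ i ≤ net.L, ∀ j k, |net.W i j k| ≤ B)
    (hv : ∀ i, 1 ≤ i → i ≤ net.L → ∀ j, |net.v i j| ≤ B) (p : ℕ × ℕ × ℕ) :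
    |net.pack w p| ≤ B := by
  simp only [pack]
  split_ifs with hj hk hkw
  · exact hW _ hj.1 _ _
  · exact hv _ (by omega) (by omega) _
  · simpa using hB
  · simpa using hB

lemma support_pack_subset (hw : ∀ i ≤ net.L + 1, net.width i ≤ w) {Lm : ℕ} (hL : net.L ≤ Lm) :
    Function.support (net.pack w) ⊆
      (Finset.range (Lm + 1) ×ˢ Finset.range w ×ˢ Finset.range (w + 1) : Finset _) := by
  rintro ⟨i, j, k⟩ h
  simp only [Function.mem_support, pack] at h
  simp only [Finset.coe_product, Finset.coe_range, mem_prod, mem_Iio]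
  have := hw i
  have := hw (i + 1)
  split_ifs at h <;> first | exact absurd rfl h | omega

lemma ncard_support_pack_le : (Function.support (net.pack w)).ncard ≤ net.numParams := by
  classical
  let Weight := Σ i : Fin (net.L + 1),
    {p : Fin (net.width (i + 1)) × Fin (net.width i) // net.W i p.1 p.2 ≠ 0}
  let Shift := Σ i : Fin net.L, {j : Fin (net.width (i + 1)) // net.v (i + 1) j ≠ 0}
  let pos : Weight ⊕ Shift → ℕ × ℕ × ℕ :=
    Sum.elim (fun t => (t.1, t.2.1.1, t.2.1.2)) fun t => (t.1, t.2.1, w)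
  have hcard : Fintype.card (Weight ⊕ Shift) = net.numParams := by
    simp only [Weight, Shift, numParams, Fintype.card_sum, Fintype.card_sigma,
      Nat.card_eq_fintype_card, Finset.sum_range]
  have hsupport : Function.support (net.pack w) ⊆ Finset.univ.image pos := by
    rintro ⟨i, j, k⟩ h
    simp only [Function.mem_support, pack] at h
    rw [Finset.coe_image, Finset.coe_univ, image_univ]
    split_ifs at h with hj hk hkw
    · exact ⟨Sum.inl ⟨⟨i, by omega⟩, ⟨(⟨j, hj.2⟩, ⟨k, hk⟩), h⟩⟩, rfl⟩
    · exact ⟨Sum.inr ⟨⟨i, hkw.2⟩, ⟨⟨j, hj.2⟩, h⟩⟩, congrArg (fun k => (i, j, k)) hkw.1.symm⟩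
    all_goals exact absurd rfl h
  rw [← hcard, ← Finset.card_univ]
  refine (ncard_le_ncard hsupport (Finset.finite_toSet _)).trans ?_
  rw [ncard_coe_finset]
  exact Finset.card_image_le

end ReLUNet

lemma measurable_extend_zero {ι : Type*} (f : ι → ℕ) (k : ℕ) :
    Measurable fun x : ι → ℝ => Function.extend f x 0 k := by
  classical
  simp only [Function.extend_def]
  split_ifs
  · exact measurable_pi_apply _
  · exact measurable_const

lemma measurable_of_mem_FNN {d : ℕ} {G N B : ℝ} {S Fb : ℝ≥0∞} {f : (Fin d → ℝ) → ℝ}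
    (hf : f ∈ FNN d G N S B Fb) : Measurable f := by
  obtain ⟨net, hnet, -⟩ := hf
  have hw : ∀ i ≤ net.L + 1, net.width i ≤ ∑ i ∈ Finset.range (net.L + 2), net.width i :=
    fun i hi => Finset.single_le_sum (f := net.width) (fun _ _ => Nat.zero_le _)
      (Finset.mem_range.2 (by omega))
  rw [funext fun x => (hnet x).trans (net.eval_eq_packedLayer hw x)]
  exact measurable_packedLayer (measurable_extend_zero _) _ _ _

lemma exists_grid {B η : ℝ} (hB : 0 ≤ B) (hη : 0 < η) :
    ∃ (m : ℕ) (grid : Fin (m + 1) → ℝ), m ≤ 2 * B / η ∧ (∀ k, |grid k| ≤ B) ∧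
      ∀ θ, |θ| ≤ B → ∃ k, |θ - grid k| ≤ η := by
  have hm : (⌊2 * B / η⌋₊ : ℝ) ≤ 2 * B / η := Nat.floor_le (by positivity)
  refine ⟨⌊2 * B / η⌋₊, fun k => -B + k * η, hm, fun k => ?_, fun θ hθ => ?_⟩
  · have hk : (k : ℝ) ≤ 2 * B / η := le_trans (by exact_mod_cast Nat.lt_succ_iff.1 k.2) hm
    rw [le_div_iff₀ hη] at hk
    have : 0 ≤ (k : ℝ) * η := by positivity
    exact abs_le.2 ⟨by linarith, by linarith⟩
  · obtain ⟨hθB, hθB'⟩ := abs_le.1 hθ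
    have hθη : 0 ≤ (θ + B) / η := div_nonneg (by linarith) hη.le
    refine ⟨⟨⌊(θ + B) / η⌋₊, Nat.lt_succ_of_le (Nat.floor_mono (by gcongr; linarith))⟩, ?_⟩
    have hfloor := Nat.floor_le hθη
    have hfloor' := Nat.lt_floor_add_one ((θ + B) / η)
    rw [le_div_iff₀ hη] at hfloor
    rw [div_lt_iff₀ hη] at hfloor'
    exact abs_le.2 ⟨by linarith, by linarith⟩

lemma exists_subset_range_of_ncard_le {I : Type*} {T : Finset I} (hT : T.Nonempty) {A : Set I}
    (hAT : A ⊆ T) {S : ℕ} (hA : A.ncard ≤ S) : ∃ c : Fin S → T, ∀ i ∈ A, ∃ t, (c t : I) = i := by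
  have hfin : A.Finite := T.finite_toSet.subset hAT
  have := hfin.fintype
  have : Nonempty (A ↪ Fin S) := Function.Embedding.nonempty_of_card_le (by
    rwa [Fintype.card_fin, ← Nat.card_eq_fintype_card, Nat.card_coe_set_eq])
  obtain ⟨e⟩ := this
  obtain ⟨i₀, hi₀⟩ := hT
  refine ⟨Function.extend e (fun i => ⟨i, hAT i.2⟩) fun _ => ⟨i₀, hi₀⟩, fun i hi => ⟨e ⟨i, hi⟩, ?_⟩⟩
  rw [e.injective.extend_apply]

lemma exists_finite_cover_sparse {I : Type} {T : Finset I} (hT : T.Nonempty) (S : ℕ) {B η : ℝ}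
    (hB : 0 ≤ B) (hη : 0 < η) :
    ∃ (J : Type) (_ : Fintype J) (V : J → I → ℝ),
      (Fintype.card J : ℝ) ≤ (T.card * (2 * B / η + 1)) ^ S ∧ (∀ j i, |V j i| ≤ B) ∧
      ∀ U : I → ℝ, (∀ i, |U i| ≤ B) → Function.support U ⊆ T → (Function.support U).ncard ≤ S →
        ∃ j, ∀ i, |U i - V j i| ≤ η := by
  classical
  obtain ⟨m, grid, hm, hgridB, hgrid⟩ := exists_grid hB hη
  refine ⟨Fin S → T × Fin (m + 1), inferInstance, fun s i =>
    if h : ∃ t, ((s t).1 : I) = i then grid (s h.choose).2 else 0, ?_, fun s i => ?_,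
    fun U hUB hUT hUS => ?_⟩
  · simp only [Fintype.card_pi, Finset.prod_const, Finset.card_univ, Fintype.card_prod,
      Fintype.card_coe, Fintype.card_fin]
    push_cast
    gcongr
  · dsimp only
    split_ifs
    · exact hgridB _
    · simpa using hB
  · obtain ⟨c, hc⟩ := exists_subset_range_of_ncard_le hT hUT hUS
    choose code hcode using fun t => hgrid _ (hUB (c t))
    refine ⟨fun t => (c t, code t), fun i => ?_⟩
    dsimp only
    split_ifs with h
    · have hdist := hcode h.choose
      rwa [h.choose_spec] at hdist
    · have hUi : U i = 0 := by_contra fun hne => h (hc i hne)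
      simpa [hUi] using hη.le

lemma exists_packedLayer_of_mem_FNN {d w Lm Sm : ℕ} {G N B : ℝ} {S Fb : ℝ≥0∞}
    (hG : G < Lm + 1) (hN : N < w + 1) (hS : S < Sm + 1) (hB : 0 ≤ B) {f : (Fin d → ℝ) → ℝ}
    (hf : f ∈ FNN d G N S B Fb) :
    ∃ L ≤ Lm, ∃ U : ℕ × ℕ × ℕ → ℝ, (∀ p, |U p| ≤ B) ∧
      Function.support U ⊆
        (Finset.range (Lm + 1) ×ˢ Finset.range w ×ˢ Finset.range (w + 1) : Finset _) ∧
      (Function.support U).ncard ≤ Sm ∧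
      ∀ x, f x = packedLayer w U (Function.extend Fin.val x 0) L 0 := by
  obtain ⟨net, hf, hnL, hnw, hnS, hnW, hnv, -⟩ := hf
  have hL : net.L ≤ Lm := Nat.lt_succ_iff.1 (by exact_mod_cast hnL.trans_lt hG)
  have hw : ∀ i ≤ net.L + 1, net.width i ≤ w := fun i hi =>
    Nat.lt_succ_iff.1 (by exact_mod_cast (hnw i hi).trans_lt hN)
  have hparams : net.numParams ≤ Sm := by
    have h : (net.numParams : ℝ≥0∞) < Sm + 1 := by
      simp only [ReLUNet.numParams]
      push_cast
      exact hnS.trans_lt hS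
    exact Nat.lt_succ_iff.1 (by exact_mod_cast h)
  exact ⟨net.L, hL, net.pack w, net.abs_pack_le hB hnW hnv, net.support_pack_subset hw hL,
    net.ncard_support_pack_le.trans hparams,
    fun x => (hf x).trans (net.eval_eq_packedLayer hw x)⟩

lemma exists_finite_cover_FNN (d : ℕ) {w Lm Sm : ℕ} (hw : 1 ≤ w) {G N B ε : ℝ} {S Fb : ℝ≥0∞}
    (hG : G < Lm + 1) (hN : N < w + 1) (hS : S < Sm + 1) (hB : 1 ≤ B) (hε : 0 < ε) :
    ∃ (J : Type) (_ : Fintype J) (F : J → (Fin d → ℝ) → ℝ), (∀ j, Measurable (F j)) ∧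
      (Fintype.card J : ℝ) ≤ (Lm + 1) * ((Lm + 1) * w * (w + 1) *
        (2 * B * (2 * ((w + 1) * B)) ^ (Lm + 1) / ε + 1)) ^ Sm ∧
      ∀ f ∈ FNN d G N S B Fb, ∃ j, ∀ x ∈ cube d, |f x - F j x| ≤ ε := by
  set A : ℝ := 2 * ((w + 1) * B)
  have hA1 : 1 ≤ A := by
    have := one_le_mul_of_one_le_of_one_le (by simp : (1 : ℝ) ≤ w + 1) hB
    linarith
  have hη : 0 < ε / A ^ (Lm + 1) := by positivity
  have hpos : (Finset.range (Lm + 1) ×ˢ Finset.range w ×ˢ Finset.range (w + 1)).Nonempty :=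
    ⟨(0, 0, 0), by simpa using Nat.pos_of_ne_zero (by omega)⟩
  obtain ⟨J, _, V, hJ, hVB, hV⟩ := exists_finite_cover_sparse hpos Sm (by linarith : 0 ≤ B) hη
  refine ⟨Fin (Lm + 1) × J, inferInstance,
    fun p x => packedLayer w (V p.2) (Function.extend Fin.val x 0) p.1 0,
    fun p => measurable_packedLayer (measurable_extend_zero _) _ _ _, ?_, fun f hf => ?_⟩
  · simp only [Finset.card_product, Finset.card_range, div_div_eq_mul_div, ← mul_assoc] at hJ
    rw [Fintype.card_prod, Fintype.card_fin]
    push_cast at hJ ⊢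
    gcongr
  · obtain ⟨L, hL, U, hUB, hUT, hUS, hU⟩ :=
      exists_packedLayer_of_mem_FNN hG hN hS (by linarith) hf
    obtain ⟨j, hj⟩ := hV U hUB hUT hUS
    refine ⟨(⟨L, by omega⟩, j), fun x hx => ?_⟩
    have hx1 (k : ℕ) : |Function.extend Fin.val x 0 k| ≤ 1 :=
      abs_extend_zero_le _ zero_le_one (fun a => by
        rw [abs_of_nonneg (hx a (mem_univ a)).1]; exact (hx a (mem_univ a)).2) k
    rw [hU]
    calc |packedLayer w U _ L 0 - packedLayer w (V j) _ L 0|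
        ≤ ε / A ^ (Lm + 1) * A ^ (L + 1) :=
          (le_add_of_nonneg_right hη.le).trans
            (abs_packedLayer_sub_add_le hB hUB (hVB j) hj hx1 L 0)
      _ ≤ ε / A ^ (Lm + 1) * A ^ (Lm + 1) := by gcongr
      _ = ε := div_mul_cancel₀ _ (by positivity)

/-! ## Integration against the data distribution -/

lemma measurable_sgn : Measurable sgn :=
  Measurable.ite measurableSet_Ici measurable_const measurable_const

lemma measurable_hinge : Measurable hinge := by unfold hinge; fun_prop

lemma measurable_trunc (F : ℝ) : Measurable (trunc F) := by unfold trunc; fun_prop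

lemma measurableSet_cube (d : ℕ) : MeasurableSet (cube d) :=
  MeasurableSet.univ_pi fun _ => measurableSet_Icc

section mixtures

variable {X Y : Type*} [MeasurableSpace X] [MeasurableSpace Y] {μ : Measure X}
  {w : X → ℝ} {φ : X → Y}

lemma measurable_smul_dirac {w : X → ℝ≥0∞} (hw : Measurable w) (hφ : Measurable φ) :
    Measurable fun x => w x • Measure.dirac (φ x) := by
  refine Measure.measurable_of_measurable_coe _ fun s hs => ?_
  simp only [Measure.smul_apply, smul_eq_mul, Measure.dirac_apply' _ hs]
  exact hw.mul ((measurable_one.indicator hs).comp hφ)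

lemma bind_smul_dirac_add_smul_dirac {w₁ w₂ : X → ℝ≥0∞} {φ₁ φ₂ : X → Y} (hw₁ : Measurable w₁)
    (hw₂ : Measurable w₂) (hφ₁ : Measurable φ₁) (hφ₂ : Measurable φ₂) :
    (μ.bind fun x => w₁ x • Measure.dirac (φ₁ x) + w₂ x • Measure.dirac (φ₂ x)) =
      (μ.withDensity w₁).map φ₁ + (μ.withDensity w₂).map φ₂ := by
  have hκ : Measurable fun x => w₁ x • Measure.dirac (φ₁ x) + w₂ x • Measure.dirac (φ₂ x) :=
    (measurable_smul_dirac hw₁ hφ₁).add (measurable_smul_dirac hw₂ hφ₂)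
  ext s hs
  have hmass (w : X → ℝ≥0∞) (φ : X → Y) (x : X) :
      w x * s.indicator 1 (φ x) = (φ ⁻¹' s).indicator w x := by
    by_cases h : φ x ∈ s <;> simp [indicator, h]
  rw [Measure.bind_apply hs hκ.aemeasurable, Measure.add_apply, Measure.map_apply hφ₁ hs,
    Measure.map_apply hφ₂ hs, withDensity_apply _ (hφ₁ hs), withDensity_apply _ (hφ₂ hs),
    ← lintegral_indicator (hφ₁ hs), ← lintegral_indicator (hφ₂ hs),
    ← lintegral_add_left (hw₁.indicator (hφ₁ hs))]
  simp only [Measure.add_apply, Measure.smul_apply, smul_eq_mul, Measure.dirac_apply' _ hs, hmass]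

lemma integrable_map_withDensity_ofReal (hw : Measurable w) (hw0 : ∀ x, 0 ≤ w x)
    (hφ : Measurable φ) {g : Y → ℝ} (hg : Measurable g)
    (h : Integrable (fun x => w x * g (φ x)) μ) :
    Integrable g ((μ.withDensity fun x => ENNReal.ofReal (w x)).map φ) := by
  rw [integrable_map_measure hg.aestronglyMeasurable hφ.aemeasurable,
    integrable_withDensity_iff_integrable_smul' hw.ennreal_ofReal (ae_of_all _ fun _ =>
      ofReal_lt_top)]
  simpa only [toReal_ofReal (hw0 _), smul_eq_mul, Function.comp_def] using h

lemma integral_map_withDensity_ofReal (hw : Measurable w) (hw0 : ∀ x, 0 ≤ w x)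
    (hφ : Measurable φ) {g : Y → ℝ} (hg : Measurable g) :
    ∫ y, g y ∂(μ.withDensity fun x => ENNReal.ofReal (w x)).map φ = ∫ x, w x * g (φ x) ∂μ := by
  rw [integral_map hφ.aemeasurable hg.aestronglyMeasurable,
    integral_withDensity_eq_integral_toReal_smul hw.ennreal_ofReal (ae_of_all _ fun _ =>
      ofReal_lt_top)]
  simp only [toReal_ofReal (hw0 _), smul_eq_mul]

lemma integrable_mul_of_mem_Icc [IsFiniteMeasure μ] (hw : Measurable w)
    (hw01 : ∀ x, w x ∈ Icc (0 : ℝ) 1) {h : X → ℝ} (hh : Measurable h) {C : ℝ}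
    (hC : ∀ x, |h x| ≤ C) : Integrable (fun x => w x * h x) μ :=
  (Integrable.of_bound hh.aestronglyMeasurable C (ae_of_all _ hC)).bdd_mul (c := 1)
    hw.aestronglyMeasurable
    (ae_of_all _ fun x => by rw [Real.norm_of_nonneg (hw01 x).1]; exact (hw01 x).2)

end mixtures

namespace DataDist

variable {d : ℕ} (D : DataDist d)

lemma one_sub_η_mem (x : Fin d → ℝ) : 1 - D.η x ∈ Icc (0 : ℝ) 1 :=
  Icc.mem_iff_one_sub_mem.1 (D.η_mem x)

lemma measurable_one_sub_η : Measurable fun x => 1 - D.η x :=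
  D.η_meas.const_sub 1

lemma P_eq_map_add_map : D.P =
    (D.Q.withDensity fun x => ENNReal.ofReal (D.η x)).map (fun x => (x, (1 : ℝ))) +
      (D.Q.withDensity fun x => ENNReal.ofReal (1 - D.η x)).map (fun x => (x, (-1 : ℝ))) :=
  bind_smul_dirac_add_smul_dirac D.η_meas.ennreal_ofReal D.measurable_one_sub_η.ennreal_ofReal
    measurable_prodMk_right measurable_prodMk_right

/-- The conditional expectation `E[g(X, Y) | X = x]` under the data distribution. -/
def condMean (g : (Fin d → ℝ) × ℝ → ℝ) (x : Fin d → ℝ) : ℝ :=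
  D.η x * g (x, 1) + (1 - D.η x) * g (x, -1)

lemma condMean_mono {g g' : (Fin d → ℝ) × ℝ → ℝ} {x : Fin d → ℝ}
    (h : ∀ y : ℝ, y = 1 ∨ y = -1 → g (x, y) ≤ g' (x, y)) : D.condMean g x ≤ D.condMean g' x :=
  add_le_add (mul_le_mul_of_nonneg_left (h 1 (Or.inl rfl)) (D.η_mem x).1)
    (mul_le_mul_of_nonneg_left (h (-1) (Or.inr rfl)) (D.one_sub_η_mem x).1)

section integral

variable {g : (Fin d → ℝ) × ℝ → ℝ} {C : ℝ}

lemma integrable_η_mul (hg : Measurable g)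
    (hC : ∀ p : (Fin d → ℝ) × ℝ, p.2 = 1 ∨ p.2 = -1 → |g p| ≤ C) :
    Integrable (fun x => D.η x * g (x, 1)) D.Q := by
  have := D.Q_prob
  exact integrable_mul_of_mem_Icc D.η_meas D.η_mem (hg.comp measurable_prodMk_right)
    fun x => hC (x, 1) (Or.inl rfl)

lemma integrable_one_sub_η_mul (hg : Measurable g)
    (hC : ∀ p : (Fin d → ℝ) × ℝ, p.2 = 1 ∨ p.2 = -1 → |g p| ≤ C) :
    Integrable (fun x => (1 - D.η x) * g (x, -1)) D.Q := by
  have := D.Q_prob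
  exact integrable_mul_of_mem_Icc D.measurable_one_sub_η D.one_sub_η_mem
    (hg.comp measurable_prodMk_right) fun x => hC (x, -1) (Or.inr rfl)

lemma integrable_condMean (hg : Measurable g)
    (hC : ∀ p : (Fin d → ℝ) × ℝ, p.2 = 1 ∨ p.2 = -1 → |g p| ≤ C) :
    Integrable (D.condMean g) D.Q :=
  (D.integrable_η_mul hg hC).add (D.integrable_one_sub_η_mul hg hC)

lemma integrable_map_pos_and_neg (hg : Measurable g)
    (hC : ∀ p : (Fin d → ℝ) × ℝ, p.2 = 1 ∨ p.2 = -1 → |g p| ≤ C) :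
    Integrable g ((D.Q.withDensity fun x => ENNReal.ofReal (D.η x)).map fun x => (x, (1 : ℝ))) ∧
      Integrable g
        ((D.Q.withDensity fun x => ENNReal.ofReal (1 - D.η x)).map fun x => (x, (-1 : ℝ))) :=
  ⟨integrable_map_withDensity_ofReal D.η_meas (fun x => (D.η_mem x).1)
      measurable_prodMk_right hg (D.integrable_η_mul hg hC),
    integrable_map_withDensity_ofReal D.measurable_one_sub_η (fun x => (D.one_sub_η_mem x).1)
      measurable_prodMk_right hg (D.integrable_one_sub_η_mul hg hC)⟩

lemma integrable_P (hg : Measurable g)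
    (hC : ∀ p : (Fin d → ℝ) × ℝ, p.2 = 1 ∨ p.2 = -1 → |g p| ≤ C) : Integrable g D.P := by
  obtain ⟨hpos, hneg⟩ := D.integrable_map_pos_and_neg hg hC
  exact D.P_eq_map_add_map ▸ hpos.add_measure hneg

lemma integral_P (hg : Measurable g)
    (hC : ∀ p : (Fin d → ℝ) × ℝ, p.2 = 1 ∨ p.2 = -1 → |g p| ≤ C) :
    ∫ p, g p ∂D.P = ∫ x, D.condMean g x ∂D.Q := by
  obtain ⟨hpos, hneg⟩ := D.integrable_map_pos_and_neg hg hC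
  rw [D.P_eq_map_add_map, integral_add_measure hpos hneg,
    integral_map_withDensity_ofReal D.η_meas (fun x => (D.η_mem x).1) measurable_prodMk_right hg,
    integral_map_withDensity_ofReal D.measurable_one_sub_η (fun x => (D.one_sub_η_mem x).1)
      measurable_prodMk_right hg,
    ← integral_add (D.integrable_η_mul hg hC) (D.integrable_one_sub_η_mul hg hC)]
  rfl

end integral

lemma ae_mem_cube : ∀ᵐ x ∂D.Q, x ∈ cube d := by
  have := D.Q_prob
  exact (mem_ae_iff_prob_eq_one (measurableSet_cube d)).2 D.Q_cube

lemma ae_P_mem_cube_and_label : ∀ᵐ p ∂D.P, p.1 ∈ cube d ∧ (p.2 = 1 ∨ p.2 = -1) := by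
  have hs : MeasurableSet {p : (Fin d → ℝ) × ℝ | p.1 ∈ cube d ∧ (p.2 = 1 ∨ p.2 = -1)} :=
    (measurable_fst (measurableSet_cube d)).inter
      (measurable_snd ((measurableSet_singleton (1 : ℝ)).union (measurableSet_singleton (-1 : ℝ))))
  rw [D.P_eq_map_add_map, ae_add_measure_iff, ae_map_iff (by fun_prop) hs,
    ae_map_iff (by fun_prop) hs]
  constructor
  · refine (withDensity_absolutelyContinuous _ _).ae_le ?_
    filter_upwards [D.ae_mem_cube] with x hx using ⟨hx, Or.inl rfl⟩
  · refine (withDensity_absolutelyContinuous _ _).ae_le ?_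
    filter_upwards [D.ae_mem_cube] with x hx using ⟨hx, Or.inr rfl⟩

instance isProbabilityMeasure_P : IsProbabilityMeasure D.P := by
  have := D.Q_prob
  have hmass (x : Fin d → ℝ) : ENNReal.ofReal (D.η x) + ENNReal.ofReal (1 - D.η x) = 1 := by
    rw [← ENNReal.ofReal_add (D.η_mem x).1 (D.one_sub_η_mem x).1]; simp
  constructor
  rw [D.P_eq_map_add_map, Measure.add_apply, Measure.map_apply (by fun_prop) .univ,
    Measure.map_apply (by fun_prop) .univ, preimage_univ, preimage_univ,
    withDensity_apply _ .univ, withDensity_apply _ .univ, setLIntegral_univ, setLIntegral_univ,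
    ← lintegral_add_left D.η_meas.ennreal_ofReal]
  simp [hmass]

end DataDist

section iid

variable {α : Type*} [MeasurableSpace α] (μ : Measure α)

lemma measurable_finSnoc (n : ℕ) :
    Measurable fun q : (Fin n → α) × α => (Fin.snoc q.1 q.2 : Fin (n + 1) → α) := by
  refine measurable_pi_lambda _ fun i => Fin.lastCases ?_ (fun i => ?_) i
  · simpa using measurable_snd
  · simpa [Function.comp_def] using (measurable_pi_apply i).comp measurable_fst

lemma iid_succ_eq_map_prod [SFinite μ] (n : ℕ) :
    iid μ (n + 1) = ((iid μ n).prod μ).map fun q => Fin.snoc q.1 q.2 := by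
  have hmap (p : Fin n → α) : (μ.map fun a => (Fin.snoc p a : Fin (n + 1) → α)) =
      (μ.map (Prod.mk p)).map fun q => Fin.snoc q.1 q.2 := by
    rw [Measure.map_map (measurable_finSnoc n) measurable_prodMk_left]; rfl
  ext s hs
  rw [iid, Measure.map_apply (measurable_finSnoc n) hs, Measure.prod_apply
    (measurable_finSnoc n hs), Measure.bind_apply hs]
  · simp only [hmap, Measure.map_apply (measurable_finSnoc n) hs,
      Measure.map_apply measurable_prodMk_left (measurable_finSnoc n hs)]
  · simp only [hmap]
    exact ((Measure.measurable_map _ (measurable_finSnoc n)).comp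
      Measurable.map_prodMk_left).aemeasurable

lemma iid_eq_pi [IsProbabilityMeasure μ] (n : ℕ) : iid μ n = Measure.pi fun _ => μ := by
  induction n with
  | zero =>
    rw [Measure.pi_of_empty _ fun i => i.elim0]
    rfl
  | succ n ih =>
    refine (Measure.pi_eq fun s hs => ?_).symm
    have hpre : (fun q : (Fin n → α) × α => (Fin.snoc q.1 q.2 : Fin (n + 1) → α)) ⁻¹' univ.pi s =
        (univ.pi fun i => s i.castSucc) ×ˢ s (Fin.last n) := by
      ext q
      simp [Fin.forall_fin_succ']
    rw [iid_succ_eq_map_prod, Measure.map_apply (measurable_finSnoc n) (MeasurableSet.univ_pi hs),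
      hpre, Measure.prod_prod, ih, Measure.pi_pi, Fin.prod_univ_castSucc]

instance isProbabilityMeasure_iid [IsProbabilityMeasure μ] (n : ℕ) :
    IsProbabilityMeasure (iid μ n) := by
  rw [iid_eq_pi]; infer_instance

end iid

/-! ## Calibration and moment bounds for the hinge loss -/

lemma abs_hinge_sub_hinge_le (a b : ℝ) : |hinge a - hinge b| ≤ |a - b| := by
  unfold hinge
  rw [max_comm 0, max_comm 0, abs_sub_comm a b, ← sub_sub_sub_cancel_left a b 1]
  exact abs_max_sub_max_le_abs _ _ _

lemma abs_trunc_sub_trunc_le (F a b : ℝ) : |trunc F a - trunc F b| ≤ |a - b| := by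
  unfold trunc
  rw [min_comm F, min_comm F, max_comm (-F), max_comm (-F)]
  refine (abs_min_sub_min_le_max _ _ _ _).trans (max_le ?_ (by simp))
  exact abs_max_sub_max_le_abs _ _ _

lemma trunc_of_abs_le {F t : ℝ} (h : |t| ≤ F) : trunc F t = t := by
  rw [trunc, max_eq_right (abs_le.1 h).1, min_eq_right (abs_le.1 h).2]

lemma hinge_mul_trunc_le {y : ℝ} (hy : y = 1 ∨ y = -1) (t : ℝ) :
    hinge (y * trunc 1 t) ≤ hinge (y * t) := by
  unfold hinge trunc
  refine max_le (le_max_left _ _) ?_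
  rcases hy with rfl | rfl
  · rcases le_total 1 t with h | h
    · rw [max_eq_right (by linarith), min_eq_left h]; simp
    · rw [min_eq_right (max_le (by norm_num) h)]
      exact le_max_of_le_right (by linarith [le_max_right (-1) t])
  · rcases le_total t (-1) with h | h
    · rw [max_eq_left h]; exact le_max_of_le_left (by norm_num)
    · rw [max_eq_right h]
      exact le_max_of_le_right (by linarith [min_le_right 1 t])

lemma misclassification_le_add_abs_mul (η a b : ℝ) :
    (if 0 ≤ a then 1 - η else η) ≤
      (if 0 ≤ b then 1 - η else η) + |trunc 1 a - sgn (2 * η - 1)| * |2 * η - 1| := by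
  have hneg (h : a < 0) : trunc 1 a ≤ 0 := (min_le_right _ _).trans (max_le (by norm_num) h.le)
  have hpos (h : 0 ≤ a) : 0 ≤ trunc 1 a := le_min zero_le_one (h.trans (le_max_right _ _))
  have hgap (c : ℝ) : 0 ≤ |trunc 1 a - c| * |2 * η - 1| := by positivity
  unfold sgn
  rcases le_or_gt 0 (2 * η - 1) with hη | hη
  · rw [if_pos hη]
    rcases le_or_gt 0 a with ha | ha
    · rw [if_pos ha]; split_ifs <;> linarith [hgap 1]
    · have hfar : 1 ≤ |trunc 1 a - 1| := le_abs.2 (Or.inr (by linarith [hneg ha]))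
      rw [if_neg ha.not_ge, abs_of_nonneg hη]
      split_ifs <;> nlinarith
  · rw [if_neg hη.not_ge]
    rcases le_or_gt 0 a with ha | ha
    · have hfar : 1 ≤ |trunc 1 a - -1| := le_abs.2 (Or.inl (by linarith [hpos ha]))
      rw [if_pos ha, abs_of_neg hη]
      split_ifs <;> nlinarith
    · rw [if_neg ha.not_ge]; split_ifs <;> linarith [hgap (-1)]

lemma abs_indicator_one_le {β : Type*} (s : Set β) (p : β) : |s.indicator (1 : β → ℝ) p| ≤ 1 := by
  by_cases h : p ∈ s <;> simp [h]

namespace DataDist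

variable {d : ℕ} (D : DataDist d) {f : (Fin d → ℝ) → ℝ}

/-- The Bayes classifier. -/
def bayes (x : Fin d → ℝ) : ℝ := sgn (2 * D.η x - 1)

/-- The excess hinge loss over the Bayes classifier. -/
def hdiff (f : (Fin d → ℝ) → ℝ) (p : (Fin d → ℝ) × ℝ) : ℝ :=
  hinge (p.2 * f p.1) - hinge (p.2 * D.bayes p.1)

/-- The integral `∫ |f - bayes| |2η - 1|`, which for `|f| ≤ 1` is the excess hinge risk of `f`. -/
def gap (f : (Fin d → ℝ) → ℝ) : ℝ := ∫ x, |f x - D.bayes x| * |2 * D.η x - 1| ∂D.Q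

/-- The mass of the low-noise-margin region `|2η - 1| ≤ t` in the Tsybakov condition. -/
def low (t : ℝ) : ℝ := D.Q.real {x | |2 * D.η x - 1| ≤ t}

lemma measurable_bayes : Measurable D.bayes :=
  measurable_sgn.comp ((D.η_meas.const_mul 2).sub_const 1)

lemma measurable_hdiff (hf : Measurable f) : Measurable (D.hdiff f) :=
  (measurable_hinge.comp (measurable_snd.mul (hf.comp measurable_fst))).sub
    (measurable_hinge.comp (measurable_snd.mul (D.measurable_bayes.comp measurable_fst)))

lemma abs_two_mul_sub_one_le (x : Fin d → ℝ) : |2 * D.η x - 1| ≤ 1 := by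
  obtain ⟨h0, h1⟩ := D.η_mem x
  exact abs_le.2 ⟨by linarith, by linarith⟩

lemma abs_sub_bayes_le (hf : ∀ x, |f x| ≤ 1) (x : Fin d → ℝ) : |f x - D.bayes x| ≤ 2 :=
  calc |f x - D.bayes x| ≤ |f x| + |D.bayes x| := abs_sub _ _
    _ ≤ 1 + 1 := add_le_add (hf x) (abs_sgn _).le
    _ = 2 := one_add_one_eq_two

lemma abs_hdiff_le {p : (Fin d → ℝ) × ℝ} (hp : p.2 = 1 ∨ p.2 = -1) :
    |D.hdiff f p| ≤ |f p.1 - D.bayes p.1| := by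
  refine (abs_hinge_sub_hinge_le _ _).trans_eq ?_
  rw [← mul_sub, abs_mul]
  rcases hp with h | h <;> simp [h]

lemma abs_hdiff_le_two (hf : ∀ x, |f x| ≤ 1) (p : (Fin d → ℝ) × ℝ) (hp : p.2 = 1 ∨ p.2 = -1) :
    |D.hdiff f p| ≤ 2 :=
  (D.abs_hdiff_le hp).trans (D.abs_sub_bayes_le hf p.1)

lemma condMean_hdiff (hf : ∀ x, |f x| ≤ 1) (x : Fin d → ℝ) :
    D.condMean (D.hdiff f) x = |f x - D.bayes x| * |2 * D.η x - 1| := by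
  obtain ⟨hle, hge⟩ := abs_le.1 (hf x)
  have hpos : hinge (1 * f x) = 1 - f x := by rw [hinge, max_eq_right] <;> linarith
  have hneg : hinge (-1 * f x) = 1 + f x := by rw [hinge, max_eq_right] <;> linarith
  simp only [condMean, hdiff, bayes]
  rw [hpos, hneg, sgn]
  split_ifs with h
  · rw [abs_of_nonneg h, abs_of_nonpos (by linarith : f x - 1 ≤ 0)]
    norm_num [hinge]; ring
  · rw [abs_of_neg (not_le.1 h), abs_of_nonneg (by linarith : 0 ≤ f x - -1)]
    norm_num [hinge]; ring

lemma integrable_gap (hf : Measurable f) (hf1 : ∀ x, |f x| ≤ 1) :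
    Integrable (fun x => |f x - D.bayes x| * |2 * D.η x - 1|) D.Q :=
  (D.integrable_condMean (D.measurable_hdiff hf) (D.abs_hdiff_le_two hf1)).congr
    (ae_of_all _ (D.condMean_hdiff hf1))

lemma integrable_hdiff (hf : Measurable f) (hf1 : ∀ x, |f x| ≤ 1) :
    Integrable (D.hdiff f) D.P :=
  D.integrable_P (D.measurable_hdiff hf) (D.abs_hdiff_le_two hf1)

lemma integral_hdiff (hf : Measurable f) (hf1 : ∀ x, |f x| ≤ 1) :
    ∫ p, D.hdiff f p ∂D.P = D.gap f := by
  rw [D.integral_P (D.measurable_hdiff hf) (D.abs_hdiff_le_two hf1), gap]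
  simp only [D.condMean_hdiff hf1]

section risk

lemma measurableSet_misclassified (hf : Measurable f) :
    MeasurableSet {p : (Fin d → ℝ) × ℝ | sgn (f p.1) ≠ p.2} :=
  (measurableSet_eq_fun (measurable_sgn.comp (hf.comp measurable_fst)) measurable_snd).compl

lemma condMean_misclassified (x : Fin d → ℝ) :
    D.condMean ({p | sgn (f p.1) ≠ p.2}.indicator 1) x =
      if 0 ≤ f x then 1 - D.η x else D.η x := by
  by_cases hx : 0 ≤ f x <;> norm_num [condMean, indicator, sgn, hx]

lemma integrable_misclassification (hf : Measurable f) :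
    Integrable (fun x => if 0 ≤ f x then 1 - D.η x else D.η x) D.Q :=
  (D.integrable_condMean (measurable_one.indicator (measurableSet_misclassified hf))
    fun p _ => abs_indicator_one_le _ p).congr (ae_of_all _ D.condMean_misclassified)

lemma risk01_P (hf : Measurable f) :
    risk01 D.P f = ∫ x, (if 0 ≤ f x then 1 - D.η x else D.η x) ∂D.Q := by
  have hs := measurableSet_misclassified hf
  calc risk01 D.P f = ∫ p, {p | sgn (f p.1) ≠ p.2}.indicator 1 p ∂D.P :=
        (integral_indicator_one hs).symm
    _ = _ := by
        rw [D.integral_P (measurable_one.indicator hs) fun p _ => abs_indicator_one_le _ p]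
        simp only [D.condMean_misclassified]

instance nonempty_measurable : Nonempty {g : (Fin d → ℝ) → ℝ // Measurable g} :=
  ⟨⟨0, measurable_const⟩⟩

lemma excess01_le_gap (hf : Measurable f) :
    excess01 D.P f ≤ D.gap fun x => trunc 1 (f x) := by
  have hgap : Integrable (fun x => |trunc 1 (f x) - D.bayes x| * |2 * D.η x - 1|) D.Q :=
    D.integrable_gap ((measurable_trunc 1).comp hf) fun x => abs_trunc_le zero_le_one (f x)
  rw [excess01, sub_le_comm]
  refine le_ciInf fun g => ?_
  rw [D.risk01_P hf, D.risk01_P g.2, sub_le_iff_le_add, gap,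
    ← integral_add (D.integrable_misclassification g.2) hgap]
  exact integral_mono (D.integrable_misclassification hf)
    ((D.integrable_misclassification g.2).add hgap)
    fun x => misclassification_le_add_abs_mul (D.η x) (f x) (g.1 x)

lemma excess01_nonneg (hf : Measurable f) : 0 ≤ excess01 D.P f :=
  sub_nonneg.2 <| ciInf_le (f := fun g : {g : (Fin d → ℝ) → ℝ // Measurable g} => risk01 D.P g.1)
    ⟨0, forall_mem_range.2 fun _ => toReal_nonneg⟩ ⟨f, hf⟩

lemma excess01_le_one (f : (Fin d → ℝ) → ℝ) : excess01 D.P f ≤ 1 := by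
  have hrisk : risk01 D.P f ≤ 1 := measureReal_le_one
  have hbayes : 0 ≤ bayes01 D.P := Real.iInf_nonneg fun _ => toReal_nonneg
  rw [excess01]; linarith

end risk

section exp

variable {l : ℝ}

lemma abs_mul_hdiff_le_one (hf1 : ∀ x, |f x| ≤ 1) (hl : 0 < l) (hl2 : l ≤ 1 / 2)
    (p : (Fin d → ℝ) × ℝ) (hp : p.2 = 1 ∨ p.2 = -1) : |-l * D.hdiff f p| ≤ 1 := by
  rw [abs_mul, abs_neg, abs_of_pos hl]
  nlinarith [D.abs_hdiff_le_two hf1 p hp]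

lemma abs_exp_mul_hdiff_le (hf1 : ∀ x, |f x| ≤ 1) (hl : 0 < l) (hl2 : l ≤ 1 / 2)
    (p : (Fin d → ℝ) × ℝ) (hp : p.2 = 1 ∨ p.2 = -1) :
    |Real.exp (-l * D.hdiff f p)| ≤ Real.exp 1 := by
  rw [Real.abs_exp]
  exact Real.exp_le_exp.2 ((le_abs_self _).trans (D.abs_mul_hdiff_le_one hf1 hl hl2 p hp))

lemma integrable_exp_hdiff (hf : Measurable f) (hf1 : ∀ x, |f x| ≤ 1) (hl : 0 < l)
    (hl2 : l ≤ 1 / 2) : Integrable (fun p => Real.exp (-l * D.hdiff f p)) D.P :=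
  D.integrable_P ((D.measurable_hdiff hf).const_mul _).exp (D.abs_exp_mul_hdiff_le hf1 hl hl2)

lemma exp_hdiff_le (hf1 : ∀ x, |f x| ≤ 1) (hl : 0 < l) (hl2 : l ≤ 1 / 2)
    (p : (Fin d → ℝ) × ℝ) (hp : p.2 = 1 ∨ p.2 = -1) :
    Real.exp (-l * D.hdiff f p) ≤
      1 - l * D.hdiff f p + 2 * l ^ 2 * |f p.1 - D.bayes p.1| := by
  have htaylor := (abs_le.1 (Real.abs_exp_sub_one_sub_id_le
    (D.abs_mul_hdiff_le_one hf1 hl hl2 p hp))).2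
  have hsq : D.hdiff f p ^ 2 ≤ 2 * |f p.1 - D.bayes p.1| := by
    rw [← sq_abs, sq]
    exact mul_le_mul (D.abs_hdiff_le_two hf1 p hp) (D.abs_hdiff_le hp) (abs_nonneg _) (by norm_num)
  nlinarith [sq_nonneg l]

lemma sq_mul_abs_sub_bayes_le (hf1 : ∀ x, |f x| ≤ 1) (hl : 0 < l) (x : Fin d → ℝ) :
    2 * l ^ 2 * |f x - D.bayes x| ≤ l / 2 * (|f x - D.bayes x| * |2 * D.η x - 1|) +
      4 * l ^ 2 * {x | |2 * D.η x - 1| ≤ 4 * l}.indicator 1 x := by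
  rcases le_or_gt |2 * D.η x - 1| (4 * l) with hx | hx
  · rw [indicator_of_mem (by exact hx), Pi.one_apply]
    have hgap : 0 ≤ l / 2 * (|f x - D.bayes x| * |2 * D.η x - 1|) := by positivity
    nlinarith [sq_nonneg l, D.abs_sub_bayes_le hf1 x]
  · rw [indicator_of_notMem (by exact hx.not_ge)]
    have hnonneg : 0 ≤ l / 2 * |f x - D.bayes x| := by positivity
    nlinarith

lemma condMean_exp_hdiff_le (hf1 : ∀ x, |f x| ≤ 1) (hl : 0 < l) (hl2 : l ≤ 1 / 2)
    (x : Fin d → ℝ) :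
    D.condMean (fun p => Real.exp (-l * D.hdiff f p)) x ≤
      1 - l / 2 * (|f x - D.bayes x| * |2 * D.η x - 1|) +
        4 * l ^ 2 * {x | |2 * D.η x - 1| ≤ 4 * l}.indicator 1 x :=
  calc D.condMean (fun p => Real.exp (-l * D.hdiff f p)) x
      ≤ D.condMean
          (fun p => 1 - l * D.hdiff f p + 2 * l ^ 2 * |f p.1 - D.bayes p.1|) x :=
        D.condMean_mono fun y hy => D.exp_hdiff_le hf1 hl hl2 (x, y) hy
    _ = 1 - l * D.condMean (D.hdiff f) x + 2 * l ^ 2 * |f x - D.bayes x| := by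
        simp only [condMean]; ring
    _ ≤ _ := by
        rw [D.condMean_hdiff hf1]
        linarith [D.sq_mul_abs_sub_bayes_le hf1 hl x]

lemma integral_exp_hdiff_le (hf : Measurable f) (hf1 : ∀ x, |f x| ≤ 1) (hl : 0 < l)
    (hl2 : l ≤ 1 / 2) :
    ∫ p, Real.exp (-l * D.hdiff f p) ∂D.P ≤
      Real.exp (-(l / 2 * D.gap f) + 4 * l ^ 2 * D.low (4 * l)) := by
  have := D.Q_prob
  have hexp := ((D.measurable_hdiff hf).const_mul (-l)).exp
  have hbound := D.abs_exp_mul_hdiff_le hf1 hl hl2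
  have hlow : MeasurableSet {x | |2 * D.η x - 1| ≤ 4 * l} :=
    measurableSet_le ((D.η_meas.const_mul 2).sub_const 1).abs measurable_const
  have hgap := (D.integrable_gap hf hf1).const_mul (l / 2)
  have hone_sub : Integrable
      (fun x => 1 - l / 2 * (|f x - D.bayes x| * |2 * D.η x - 1|)) D.Q :=
    (integrable_const 1).sub hgap
  have hlow_int : Integrable
      (fun x => 4 * l ^ 2 * {x | |2 * D.η x - 1| ≤ 4 * l}.indicator (1 : (Fin d → ℝ) → ℝ) x) D.Q :=
    ((integrable_const 1).indicator hlow).const_mul (4 * l ^ 2)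
  calc ∫ p, Real.exp (-l * D.hdiff f p) ∂D.P
      = ∫ x, D.condMean (fun p => Real.exp (-l * D.hdiff f p)) x ∂D.Q := D.integral_P hexp hbound
    _ ≤ ∫ x, (1 - l / 2 * (|f x - D.bayes x| * |2 * D.η x - 1|) +
          4 * l ^ 2 * {x | |2 * D.η x - 1| ≤ 4 * l}.indicator 1 x) ∂D.Q :=
        integral_mono (D.integrable_condMean hexp hbound)
          (hone_sub.add hlow_int) (D.condMean_exp_hdiff_le hf1 hl hl2)
    _ = 1 - l / 2 * D.gap f + 4 * l ^ 2 * D.low (4 * l) := by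
        rw [integral_add hone_sub hlow_int,
          integral_sub (integrable_const 1) hgap, integral_const_mul, integral_const_mul,
          integral_indicator_one hlow, integral_const, probReal_univ, one_smul, gap, low]
    _ ≤ _ := by linarith [Real.add_one_le_exp (-(l / 2 * D.gap f) + 4 * l ^ 2 * D.low (4 * l))]

end exp

end DataDist

/-! ## Oracle inequality for empirical hinge risk minimizers -/

section iid

variable {α : Type*} [MeasurableSpace α] {μ : Measure α} [IsProbabilityMeasure μ] {n : ℕ}

lemma ae_iid_forall {p : α → Prop} (hp : ∀ᵐ a ∂μ, p a) : ∀ᵐ ω ∂iid μ n, ∀ i, p (ω i) := by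
  rw [iid_eq_pi]
  exact Filter.eventually_all.2 fun i =>
    (Measure.tendsto_eval_ae_ae (μ := fun _ : Fin n => μ) (i := i)).eventually hp

variable {h : α → ℝ} (hh : Integrable h μ)
include hh

lemma integrable_iid_eval (i : Fin n) : Integrable (fun ω => h (ω i)) (iid μ n) := by
  rw [iid_eq_pi]
  exact integrable_comp_eval (μ := fun _ : Fin n => μ) hh

lemma integrable_iid_sum : Integrable (fun ω => ∑ i, h (ω i)) (iid μ n) :=
  integrable_finsetSum _ fun i _ => integrable_iid_eval hh i

lemma integral_iid_sum : ∫ ω, ∑ i, h (ω i) ∂iid μ n = n * ∫ a, h a ∂μ := by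
  have heval (i : Fin n) : ∫ ω, h (ω i) ∂iid μ n = ∫ a, h a ∂μ := by
    rw [iid_eq_pi]
    exact integral_comp_eval (μ := fun _ : Fin n => μ) hh.aestronglyMeasurable
  rw [integral_finsetSum _ fun i _ => integrable_iid_eval hh i]
  simp only [heval, Finset.sum_const, Finset.card_univ, Fintype.card_fin, nsmul_eq_mul]

end iid

namespace DataDist

variable {d : ℕ} (D : DataDist d)

lemma gap_le_add {f g : (Fin d → ℝ) → ℝ} (hf : Measurable f) (hf1 : ∀ x, |f x| ≤ 1)
    (hg : Measurable g) (hg1 : ∀ x, |g x| ≤ 1) {ε : ℝ} (h : ∀ x ∈ cube d, |f x - g x| ≤ ε) :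
    D.gap f ≤ D.gap g + ε := by
  have := D.Q_prob
  have hgap := D.integrable_gap hg hg1
  calc D.gap f ≤ ∫ x, (|g x - D.bayes x| * |2 * D.η x - 1| + ε) ∂D.Q := by
        refine integral_mono_ae (D.integrable_gap hf hf1) (hgap.add (integrable_const ε)) ?_
        filter_upwards [D.ae_mem_cube] with x hx
        have htri : |f x - D.bayes x| ≤ |g x - D.bayes x| + ε := by
          linarith [abs_sub_le (f x) (g x) (D.bayes x), h x hx]
        have hε := (abs_nonneg _).trans (h x hx)
        nlinarith [D.abs_two_mul_sub_one_le x, abs_nonneg (2 * D.η x - 1)]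
    _ = D.gap g + ε := by
        rw [integral_add hgap (integrable_const ε), integral_const, probReal_univ, one_smul, gap]

section laplace

/-- The exponential rate `l / 2 * gap f - 4 * l ^ 2 * low (4 * l)` at which the Laplace transform
of the empirical excess hinge loss of `f` decays. -/
def expRate (f : (Fin d → ℝ) → ℝ) (l : ℝ) : ℝ := l / 2 * D.gap f - 4 * l ^ 2 * D.low (4 * l)

/-- The exponential moment of the empirical excess hinge loss of `f` at inverse temperature `l`,
normalized to have expectation at most `1`. -/
def expMoment (f : (Fin d → ℝ) → ℝ) (l : ℝ) {n : ℕ} (ω : Fin n → (Fin d → ℝ) × ℝ) : ℝ :=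
  Real.exp (n * D.expRate f l - l * ∑ i, D.hdiff f (ω i))

section expMoment

variable {f : (Fin d → ℝ) → ℝ} {l : ℝ} {n : ℕ}

lemma expMoment_eq_prod (ω : Fin n → (Fin d → ℝ) × ℝ) : D.expMoment f l ω =
    Real.exp (n * D.expRate f l) * ∏ i, Real.exp (-l * D.hdiff f (ω i)) := by
  rw [expMoment, ← Real.exp_sum, ← Real.exp_add, ← Finset.mul_sum, neg_mul, sub_eq_add_neg]

lemma integrable_expMoment (hf : Measurable f) (hf1 : ∀ x, |f x| ≤ 1) (hl : 0 < l)
    (hl2 : l ≤ 1 / 2) : Integrable (D.expMoment f l (n := n)) (iid D.P n) := by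
  simp only [iid_eq_pi, funext D.expMoment_eq_prod]
  exact (Integrable.fintype_prod (f := fun _ p => Real.exp (-l * D.hdiff f p))
    fun _ => D.integrable_exp_hdiff hf hf1 hl hl2).const_mul _

lemma integral_expMoment_le_one (hf : Measurable f) (hf1 : ∀ x, |f x| ≤ 1) (hl : 0 < l)
    (hl2 : l ≤ 1 / 2) : ∫ ω, D.expMoment f l ω ∂iid D.P n ≤ 1 := by
  have hmoment : ∫ p, Real.exp (-l * D.hdiff f p) ∂D.P ≤ Real.exp (-D.expRate f l) :=
    (D.integral_exp_hdiff_le hf hf1 hl hl2).trans_eq (by rw [expRate, neg_sub]; ring_nf)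
  simp only [iid_eq_pi, D.expMoment_eq_prod]
  rw [integral_const_mul,
    integral_fintype_prod_eq_pow (f := fun p => Real.exp (-l * D.hdiff f p)), Fintype.card_fin]
  calc _ ≤ Real.exp (n * D.expRate f l) * Real.exp (-D.expRate f l) ^ n := by gcongr
    _ = 1 := by rw [← Real.exp_nat_mul, ← Real.exp_add, Real.exp_eq_one_iff]; ring

end expMoment

variable {J : Type*} [Fintype J] {g : J → (Fin d → ℝ) → ℝ} {l : ℝ} {n : ℕ}

/-- The tangent line of the logarithm at `card J`, evaluated at the sum `Z` of the exponential
moments of a finite family: an integrable majorant of `log Z`, with expectation at most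
`log (card J)`. -/
def logMajorant (g : J → (Fin d → ℝ) → ℝ) (l : ℝ) {n : ℕ} (ω : Fin n → (Fin d → ℝ) × ℝ) : ℝ :=
  (∑ j, D.expMoment (g j) l ω) / Fintype.card J - 1 + Real.log (Fintype.card J)

section logMajorant

variable (hg : ∀ j, Measurable (g j)) (hg1 : ∀ j x, |g j x| ≤ 1) (hl : 0 < l) (hl2 : l ≤ 1 / 2)
include hg hg1 hl hl2

lemma integrable_sum_expMoment :
    Integrable (fun ω => ∑ j, D.expMoment (g j) l ω) (iid D.P n) :=
  integrable_finsetSum _ fun j _ => D.integrable_expMoment (hg j) (hg1 j) hl hl2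

lemma integral_sum_expMoment_le :
    ∫ ω, ∑ j, D.expMoment (g j) l ω ∂iid D.P n ≤ Fintype.card J := by
  rw [integral_finsetSum _ fun j _ => D.integrable_expMoment (hg j) (hg1 j) hl hl2]
  exact (Finset.sum_le_card_nsmul _ _ 1 fun j _ =>
    D.integral_expMoment_le_one (hg j) (hg1 j) hl hl2).trans (by simp)

lemma integrable_logMajorant : Integrable (D.logMajorant g l (n := n)) (iid D.P n) :=
  (((D.integrable_sum_expMoment hg hg1 hl hl2).div_const _).sub (integrable_const 1)).add
    (integrable_const _)

lemma integral_logMajorant_le [Nonempty J] :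
    ∫ ω, D.logMajorant g l ω ∂iid D.P n ≤ Real.log (Fintype.card J) := by
  have hdiv := (D.integrable_sum_expMoment (n := n) hg hg1 hl hl2).div_const (Fintype.card J : ℝ)
  have hsub : Integrable (fun ω => (∑ j, D.expMoment (g j) l ω) / Fintype.card J - 1)
      (iid D.P n) := hdiv.sub (integrable_const 1)
  simp only [logMajorant]
  rw [integral_add hsub (integrable_const _), integral_sub hdiv (integrable_const 1),
    integral_div]
  simp only [integral_const, probReal_univ, one_smul]
  have hcard : (0 : ℝ) < Fintype.card J := by exact_mod_cast Fintype.card_pos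
  linarith [(div_le_one hcard).2 (D.integral_sum_expMoment_le (n := n) hg hg1 hl hl2)]

end logMajorant

lemma mul_expRate_sub_le_logMajorant [Nonempty J] (ω : Fin n → (Fin d → ℝ) × ℝ) (j : J) :
    n * D.expRate (g j) l - l * ∑ i, D.hdiff (g j) (ω i) ≤ D.logMajorant g l ω := by
  have hcard : (0 : ℝ) < Fintype.card J := by exact_mod_cast Fintype.card_pos
  have hle : D.expMoment (g j) l ω ≤ ∑ j, D.expMoment (g j) l ω :=
    Finset.single_le_sum (f := fun j => D.expMoment (g j) l ω)
      (fun _ _ => (Real.exp_pos _).le) (Finset.mem_univ j)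
  have hpos : 0 < ∑ j, D.expMoment (g j) l ω := (Real.exp_pos _).trans_le hle
  have htangent := Real.log_le_sub_one_of_pos (div_pos hpos hcard)
  rw [Real.log_div hpos.ne' hcard.ne'] at htangent
  rw [logMajorant]
  linarith [(Real.le_log_iff_exp_le hpos).2 hle]

end laplace

section oracle

variable {n : ℕ} {𝓕 : Set ((Fin d → ℝ) → ℝ)} {f₀ : (Fin d → ℝ) → ℝ} {ε l : ℝ}

lemma hinge_mul_trunc_le_add {y a b : ℝ} (hy : y = 1 ∨ y = -1) (hab : |a - b| ≤ ε) :
    hinge (y * trunc 1 b) ≤ hinge (y * a) + ε := by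
  have hy1 : |y| = 1 := by rcases hy with rfl | rfl <;> simp
  have hlip : |hinge (y * trunc 1 b) - hinge (y * trunc 1 a)| ≤ ε :=
    calc _ ≤ |y * trunc 1 b - y * trunc 1 a| := abs_hinge_sub_hinge_le _ _
      _ = |trunc 1 b - trunc 1 a| := by rw [← mul_sub, abs_mul, hy1, one_mul]
      _ ≤ |b - a| := abs_trunc_sub_trunc_le _ _ _
      _ ≤ ε := by rwa [abs_sub_comm]
  linarith [hinge_mul_trunc_le hy a, (abs_le.1 hlip).2]

lemma sum_hdiff_le_of_isERM (hn : 0 < n) {ω : Fin n → (Fin d → ℝ) × ℝ}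
    (hω : ∀ i, (ω i).1 ∈ cube d ∧ ((ω i).2 = 1 ∨ (ω i).2 = -1)) {f g : (Fin d → ℝ) → ℝ}
    (hf : IsERM hinge 𝓕 ω f) (hf₀ : f₀ ∈ 𝓕) (hf₀1 : ∀ x ∈ cube d, |f₀ x| ≤ 1)
    (hfg : ∀ x ∈ cube d, |f x - g x| ≤ ε) :
    ∑ i, D.hdiff (fun x => trunc 1 (g x)) (ω i) ≤
      ∑ i, D.hdiff (fun x => trunc 1 (f₀ x)) (ω i) + n * ε := by
  have hmin : ∑ i, hinge ((ω i).2 * f (ω i).1) ≤ ∑ i, hinge ((ω i).2 * f₀ (ω i).1) :=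
    le_of_mul_le_mul_left (hf.2 f₀ hf₀) (inv_pos.2 (by exact_mod_cast hn))
  have hsum : ∑ i, hinge ((ω i).2 * trunc 1 (g (ω i).1)) ≤
      ∑ i, hinge ((ω i).2 * f (ω i).1) + n * ε :=
    calc _ ≤ ∑ i, (hinge ((ω i).2 * f (ω i).1) + ε) := Finset.sum_le_sum fun i _ =>
          hinge_mul_trunc_le_add (hω i).2 (hfg _ (hω i).1)
      _ = _ := by simp [Finset.sum_add_distrib]
  have htrunc (i : Fin n) : hinge ((ω i).2 * trunc 1 (f₀ (ω i).1)) =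
      hinge ((ω i).2 * f₀ (ω i).1) := by rw [trunc_of_abs_le (hf₀1 _ (hω i).1)]
  simp only [hdiff, Finset.sum_sub_distrib, htrunc]
  linarith

variable {J : Type*} [Fintype J] {F : J → (Fin d → ℝ) → ℝ}

lemma gap_le_of_sum_hdiff_le [Nonempty J] (hn : 0 < n) (hl : 0 < l)
    {ω : Fin n → (Fin d → ℝ) × ℝ} {j : J} {H : ℝ} (h : ∑ i, D.hdiff (F j) (ω i) ≤ H) :
    D.gap (F j) ≤
      8 * l * D.low (4 * l) + 2 / n * H + 2 / (l * n) * D.logMajorant F l ω := by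
  have : (0 : ℝ) < n := by exact_mod_cast hn
  have hexp : n * D.expRate (F j) l - l * H ≤ D.logMajorant F l ω := by
    linarith [D.mul_expRate_sub_le_logMajorant (g := F) (l := l) ω j,
      mul_le_mul_of_nonneg_left h hl.le]
  calc D.gap (F j) = 8 * l * D.low (4 * l) + 2 / n * H +
        2 / (l * n) * (n * D.expRate (F j) l - l * H) := by rw [expRate]; field_simp; ring
    _ ≤ _ := by gcongr

lemma excess01_le_of_isERM [Nonempty J] (hn : 0 < n) (h𝓕 : ∀ f ∈ 𝓕, Measurable f)
    (hF : ∀ j, Measurable (F j)) (hcover : ∀ f ∈ 𝓕, ∃ j, ∀ x ∈ cube d, |f x - F j x| ≤ ε)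
    (hf₀ : f₀ ∈ 𝓕) (hf₀1 : ∀ x ∈ cube d, |f₀ x| ≤ 1) (hl : 0 < l)
    {ω : Fin n → (Fin d → ℝ) × ℝ} (hω : ∀ i, (ω i).1 ∈ cube d ∧ ((ω i).2 = 1 ∨ (ω i).2 = -1))
    {f : (Fin d → ℝ) → ℝ} (hf : IsERM hinge 𝓕 ω f) :
    excess01 D.P f ≤ 3 * ε + 8 * l * D.low (4 * l) +
      2 / n * ∑ i, D.hdiff (fun x => trunc 1 (f₀ x)) (ω i) +
      2 / (l * n) * D.logMajorant (fun j x => trunc 1 (F j x)) l ω := by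
  obtain ⟨j, hj⟩ := hcover f hf.1
  have hgap : D.gap (fun x => trunc 1 (f x)) ≤ D.gap (fun x => trunc 1 (F j x)) + ε :=
    D.gap_le_add ((measurable_trunc 1).comp (h𝓕 f hf.1)) (fun x => abs_trunc_le zero_le_one _)
      ((measurable_trunc 1).comp (hF j)) (fun x => abs_trunc_le zero_le_one _)
      fun x hx => (abs_trunc_sub_trunc_le _ _ _).trans (hj x hx)
  have hnet := D.gap_le_of_sum_hdiff_le (F := fun j x => trunc 1 (F j x)) hn hl
    (D.sum_hdiff_le_of_isERM hn hω hf hf₀ hf₀1 hj)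
  have hε : 2 / (n : ℝ) * (n * ε) = 2 * ε := by
    have : (n : ℝ) ≠ 0 := by exact_mod_cast hn.ne'
    field_simp
  rw [mul_add, hε] at hnet
  linarith [D.excess01_le_gap (h𝓕 f hf.1)]

lemma expectedExcess01_le (hn : 0 < n) (h𝓕 : ∀ f ∈ 𝓕, Measurable f) {A : Estimator d n}
    (hA : ∀ ω, IsERM hinge 𝓕 ω (A ω)) (hF : ∀ j, Measurable (F j))
    (hcover : ∀ f ∈ 𝓕, ∃ j, ∀ x ∈ cube d, |f x - F j x| ≤ ε) (hf₀ : f₀ ∈ 𝓕)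
    (hf₀1 : ∀ x ∈ cube d, |f₀ x| ≤ 1) (hl : 0 < l) (hl2 : l ≤ 1 / 2) :
    expectedExcess01 D.P A ≤ 3 * ε + 8 * l * D.low (4 * l) +
      2 * D.gap (fun x => trunc 1 (f₀ x)) + 2 * Real.log (Fintype.card J) / (l * n) := by
  have : (0 : ℝ) < n := by exact_mod_cast hn
  have : Nonempty J := ⟨(hcover f₀ hf₀).choose⟩
  have hFm (j : J) : Measurable fun x => trunc 1 (F j x) := (measurable_trunc 1).comp (hF j)
  have hF1 (j : J) (x : Fin d → ℝ) : |trunc 1 (F j x)| ≤ 1 := abs_trunc_le zero_le_one _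
  have hf₀m : Measurable fun x => trunc 1 (f₀ x) := (measurable_trunc 1).comp (h𝓕 f₀ hf₀)
  have hf₀t (x : Fin d → ℝ) : |trunc 1 (f₀ x)| ≤ 1 := abs_trunc_le zero_le_one _
  have hdiff_int := D.integrable_hdiff hf₀m hf₀t
  have hsum_int := (integrable_iid_sum (n := n) hdiff_int).const_mul (2 / n)
  have hconst_int := integrable_const (μ := iid D.P n) (3 * ε + 8 * l * D.low (4 * l))
  have hlog_int := (D.integrable_logMajorant (n := n) hFm hF1 hl hl2).const_mul (2 / (l * n))
  calc expectedExcess01 D.P A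
      ≤ ∫ ω, (3 * ε + 8 * l * D.low (4 * l) +
          2 / n * ∑ i, D.hdiff (fun x => trunc 1 (f₀ x)) (ω i) +
          2 / (l * n) * D.logMajorant (fun j x => trunc 1 (F j x)) l ω) ∂iid D.P n := by
        refine integral_mono_of_nonneg (ae_of_all _ fun ω => D.excess01_nonneg (h𝓕 _ (hA ω).1))
          ((hconst_int.add hsum_int).add hlog_int) ?_
        filter_upwards [ae_iid_forall D.ae_P_mem_cube_and_label] with ω hω
        exact D.excess01_le_of_isERM hn h𝓕 hF hcover hf₀ hf₀1 hl hω (hA ω)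
    _ = 3 * ε + 8 * l * D.low (4 * l) + 2 * D.gap (fun x => trunc 1 (f₀ x)) +
          2 / (l * n) * ∫ ω, D.logMajorant (fun j x => trunc 1 (F j x)) l ω ∂iid D.P n := by
        rw [integral_add (by exact hconst_int.add hsum_int) hlog_int,
          integral_add hconst_int hsum_int, integral_const_mul, integral_const_mul,
          integral_iid_sum hdiff_int, D.integral_hdiff hf₀m hf₀t, integral_const, probReal_univ,
          one_smul]
        field_simp
    _ ≤ 3 * ε + 8 * l * D.low (4 * l) + 2 * D.gap (fun x => trunc 1 (f₀ x)) +
          2 / (l * n) * Real.log (Fintype.card J) := by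
        gcongr
        exact D.integral_logMajorant_le hFm hF1 hl hl2
    _ = _ := by rw [div_mul_eq_mul_div]

lemma expectedExcess01_le_one (A : Estimator d n) (hA : ∀ ω, Measurable (A ω)) :
    expectedExcess01 D.P A ≤ 1 :=
  (integral_mono_of_nonneg (ae_of_all _ fun ω => D.excess01_nonneg (hA ω)) (integrable_const 1)
    (ae_of_all _ fun ω => D.excess01_le_one (A ω))).trans (by simp)

end oracle

/-! ## Consequences of the noise condition -/

lemma low_le_one (t : ℝ) : D.low t ≤ 1 := by
  have := D.Q_prob
  exact measureReal_le_one

lemma low_le_of_mem_tsybakov {s α : ℝ} (hs : 0 ≤ s) (hα : 0 ≤ α) {τ : ℝ≥0∞}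
    (hD : D ∈ Tsybakov d (ENNReal.ofReal s) α τ) {t : ℝ} (ht : 0 < t)
    (htτ : ENNReal.ofReal t ≤ τ) : D.low t ≤ α * t ^ s := by
  have hnoise := hD t ht htτ
  rw [rpowE, if_neg ofReal_ne_top, toReal_ofReal hs, ofReal_rpow_of_pos ht,
    ← ofReal_mul hα] at hnoise
  refine toReal_le_of_le_ofReal (by positivity) ((measure_mono_ae ?_).trans hnoise)
  filter_upwards [D.ae_mem_cube] with x hx hxt
  exact ⟨hxt, hx⟩

lemma exists_low_le {s α : ℝ} (hs : 0 ≤ s) (hα : 0 < α) {τ : ℝ≥0∞} (hτ : 0 < τ) :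
    ∃ c : ℝ, 0 < c ∧ ∀ (d : ℕ) (D : DataDist d), D ∈ Tsybakov d (ENNReal.ofReal s) α τ →
      ∀ t, 0 < t → D.low t ≤ c * t ^ s := by
  obtain ⟨u, hu, huτ⟩ : ∃ u : ℝ, 0 < u ∧ ENNReal.ofReal u ≤ τ := by
    refine ⟨(min 1 τ).toReal, toReal_pos (by simp [hτ.ne']) (by simp), ?_⟩
    rw [ofReal_toReal (by simp)]
    exact min_le_right _ _
  refine ⟨α + (u ^ s)⁻¹, by positivity, fun d D hD t ht => ?_⟩
  rcases le_total t u with htu | hut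
  · calc D.low t ≤ α * t ^ s := D.low_le_of_mem_tsybakov hs hα.le hD ht
          ((ofReal_le_ofReal htu).trans huτ)
      _ ≤ _ := by gcongr; exact le_add_of_nonneg_right (by positivity)
  · calc D.low t ≤ 1 := D.low_le_one t
      _ ≤ (u ^ s)⁻¹ * t ^ s := by
        rw [← div_eq_inv_mul, one_le_div (by positivity)]
        exact Real.rpow_le_rpow hu.le hut hs
      _ ≤ _ := by gcongr; exact le_add_of_nonneg_left hα.le

lemma gap_trunc_le {f g : (Fin d → ℝ) → ℝ} (hg : Measurable g) {t : ℝ}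
    (hf : ∀ᵐ x ∂D.Q, D.η x = f x)
    (h : ∀ x ∈ cube d, f x ∈ Icc (0 : ℝ) 1 → t < |2 * f x - 1| → g x = sgn (2 * f x - 1)) :
    D.gap (fun x => trunc 1 (g x)) ≤ 2 * t * D.low t := by
  have := D.Q_prob
  have hg1 (x : Fin d → ℝ) : |trunc 1 (g x)| ≤ 1 := abs_trunc_le zero_le_one _
  have hlow : MeasurableSet {x | |2 * D.η x - 1| ≤ t} :=
    measurableSet_le ((D.η_meas.const_mul 2).sub_const 1).abs measurable_const
  rw [low, ← integral_indicator_one hlow, ← integral_const_mul]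
  refine integral_mono_ae (D.integrable_gap ((measurable_trunc 1).comp hg) hg1)
    (((integrable_const 1).indicator hlow).const_mul _) ?_
  filter_upwards [D.ae_mem_cube, hf] with x hx hfx
  rcases le_or_gt |2 * D.η x - 1| t with hxt | hxt
  · rw [indicator_of_mem (by exact hxt), Pi.one_apply, mul_one]
    exact mul_le_mul (D.abs_sub_bayes_le hg1 x) hxt (abs_nonneg _) (by norm_num)
  · have hgx : trunc 1 (g x) = D.bayes x := by
      rw [h x hx (hfx ▸ D.η_mem x) (hfx ▸ hxt), bayes, hfx, trunc_of_abs_le (abs_sgn _).le]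
    rw [indicator_of_notMem (by exact hxt.not_ge), hgx]
    simp

end DataDist

/-! ## Entropy of the network class at sample size `n` -/

lemma cover_card_le_pow {B n Y : ℝ} {Lm w Sm : ℕ} (hB : 0 ≤ B) (hn : 0 ≤ n) (hY : 2 ≤ Y)
    (hL : (Lm : ℝ) + 1 ≤ Y) (hw : (w : ℝ) + 1 ≤ Y) (hBn : 2 * B * n ≤ Y)
    (hwB : 2 * ((w + 1) * B) ≤ Y) :
    ((Lm : ℝ) + 1) * ((Lm + 1) * w * (w + 1) *
      (2 * B * (2 * ((w + 1) * B)) ^ (Lm + 1) / n⁻¹ + 1)) ^ Sm ≤ Y ^ (1 + (Lm + 6) * Sm) := by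
  have hweights : 2 * B * (2 * ((w + 1) * B)) ^ (Lm + 1) / n⁻¹ + 1 ≤ Y ^ (Lm + 3) :=
    calc 2 * B * (2 * ((w + 1) * B)) ^ (Lm + 1) / n⁻¹ + 1
        = 2 * B * n * (2 * ((w + 1) * B)) ^ (Lm + 1) + 1 := by rw [div_inv_eq_mul, mul_right_comm]
      _ ≤ Y * Y ^ (Lm + 1) + Y ^ (Lm + 2) := by gcongr; exact one_le_pow₀ (by linarith)
      _ = 2 * Y ^ (Lm + 2) := by ring
      _ ≤ Y * Y ^ (Lm + 2) := by gcongr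
      _ = _ := by ring
  have hw' : (w : ℝ) ≤ Y := by linarith
  calc _ ≤ Y * (Y * Y * Y * Y ^ (Lm + 3)) ^ Sm := by gcongr
    _ = Y * (Y ^ (Lm + 6)) ^ Sm := by ring
    _ = _ := by rw [← pow_mul, ← pow_succ', add_comm]

/-- The constant in the bound `entropyConst b ν * (U * log n ^ 3)` for the metric entropy, at
resolution `1 / n`, of networks with depth at most `b * log n`, widths at most `b * U`, at most
`b * log n * U` nonzero parameters, and parameters of size at most `b * n ^ ν`. -/
def entropyConst (b ν : ℝ) : ℝ :=
  (1 + (b + 6) * b) * (Real.log (4 * (b + 1) ^ 2) + 2 + ν)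

section entropy

variable {b ν : ℝ} (hb : 0 < b)

include hb

lemma log_four_mul_sq_nonneg : 0 ≤ Real.log (4 * (b + 1) ^ 2) := Real.log_nonneg (by nlinarith)

lemma entropyConst_nonneg (hν : 0 ≤ ν) : 0 ≤ entropyConst b ν := by
  have := log_four_mul_sq_nonneg hb
  unfold entropyConst
  positivity

lemma log_four_mul_sq_mul_rpow_le {m : ℝ} (hm : 0 < m) (hlog : 1 ≤ Real.log m) :
    Real.log (4 * (b + 1) ^ 2 * m ^ 2 * m ^ ν) ≤
      (Real.log (4 * (b + 1) ^ 2) + 2 + ν) * Real.log m := by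
  rw [Real.log_mul (by positivity) (by positivity), Real.log_mul (by positivity) (by positivity),
    Real.log_pow, Real.log_rpow hm]
  have := le_mul_of_one_le_right (log_four_mul_sq_nonneg hb) hlog
  push_cast
  linarith

lemma one_add_add_six_mul_le {U Λ x y : ℝ} (hΛ : 1 ≤ Λ) (hU : 1 ≤ U) (hx : x ≤ b * Λ) (hy0 : 0 ≤ y)
    (hy : y ≤ b * Λ * U) : 1 + (x + 6) * y ≤ (1 + (b + 6) * b) * (U * Λ ^ 2) := by
  have hx6 : x + 6 ≤ (b + 6) * Λ := by linarith
  have hxy : (x + 6) * y ≤ ((b + 6) * Λ) * (b * Λ * U) := by gcongr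
  have hUΛ : 1 ≤ U * Λ ^ 2 := one_le_mul_of_one_le_of_one_le hU (one_le_pow₀ hΛ)
  linarith

lemma log_cover_card_le {B U : ℝ} {n Lm w Sm : ℕ} (hν : 0 ≤ ν) (hlog : 1 ≤ Real.log n)
    (hn : 1 ≤ n) (hU : 1 ≤ U) (hUn : U ≤ n) (hLm : (Lm : ℝ) ≤ b * Real.log n)
    (hw1 : 1 ≤ w) (hw : (w : ℝ) ≤ b * U) (hB1 : 1 ≤ B) (hB : B ≤ b * (n : ℝ) ^ ν)
    (hSm : (Sm : ℝ) ≤ b * Real.log n * U) :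
    Real.log ((Lm + 1) * ((Lm + 1) * w * (w + 1) *
      (2 * B * (2 * ((w + 1) * B)) ^ (Lm + 1) / (n : ℝ)⁻¹ + 1)) ^ Sm) ≤
      entropyConst b ν * (U * Real.log n ^ 3) := by
  have hn1 : (1 : ℝ) ≤ n := by exact_mod_cast hn
  have hn0 : (0 : ℝ) < n := one_pos.trans_le hn1
  have hw0 : (0 : ℝ) < w := by exact_mod_cast hw1
  have hLn : Real.log n ≤ n := Real.log_le_self hn0.le
  have hnν : 1 ≤ (n : ℝ) ^ ν := Real.one_le_rpow hn1 hν
  obtain ⟨Q, hQ⟩ : ∃ Q : ℝ, Q = (b + 1) * n := ⟨_, rfl⟩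
  obtain ⟨R, hR⟩ : ∃ R : ℝ, R = Q * (n : ℝ) ^ ν := ⟨_, rfl⟩
  have hLQ : (Lm : ℝ) + 1 ≤ Q := by nlinarith
  have hwQ : (w : ℝ) + 1 ≤ Q := by nlinarith
  have hBR : B * n ≤ R := by
    calc B * n ≤ (b + 1) * (n : ℝ) ^ ν * n := by gcongr; linarith
      _ = R := by rw [hR, hQ]; ring
  have hQ1 : 1 ≤ Q := by linarith
  have hR1 : 1 ≤ R := by nlinarith
  have hBR' : B ≤ R := (le_mul_of_one_le_right (by linarith) hn1).trans hBR
  have hQR : Q ≤ Q * R := le_mul_of_one_le_right (by linarith) hR1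
  have hRQ : R ≤ Q * R := le_mul_of_one_le_left (by linarith) hQ1
  have hwB : (w + 1) * B ≤ Q * R := by gcongr
  have hY : 4 * (Q * R) = 4 * (b + 1) ^ 2 * n ^ 2 * (n : ℝ) ^ ν := by rw [hR, hQ]; ring
  have hpow := cover_card_le_pow (Lm := Lm) (w := w) (Sm := Sm) (B := B) (n := n) (Y := 4 * (Q * R))
    (by linarith) hn0.le (by linarith) (by linarith) (by linarith) (by linarith) (by linarith)
  calc _ ≤ Real.log ((4 * (Q * R)) ^ (1 + (Lm + 6) * Sm)) :=
        Real.log_le_log (by positivity) hpow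
    _ = (1 + ((Lm : ℝ) + 6) * Sm) * Real.log (4 * (Q * R)) := by rw [Real.log_pow]; push_cast; ring
    _ ≤ ((1 + (b + 6) * b) * (U * Real.log n ^ 2)) *
          ((Real.log (4 * (b + 1) ^ 2) + 2 + ν) * Real.log n) := by
        gcongr
        · exact Real.log_nonneg (by linarith)
        · exact one_add_add_six_mul_le hb hlog hU hLm (Nat.cast_nonneg _) hSm
        · rw [hY]
          exact log_four_mul_sq_mul_rpow_le hb hn0 hlog
    _ = _ := by rw [entropyConst]; ring

end entropy

/-! ## The resolution and the margin at sample size `n` -/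

/-- The resolution `(n / log³ n) ^ (1 / (p + (s + 2) e))`, which balances approximation and
estimation error. In these terms the network sizes are of order `scale p s e n ^ p`. -/
def scale (p : ℕ) (s e : ℝ) (n : ℕ) : ℝ :=
  ((n : ℝ) / Real.log n ^ 3) ^ (1 / (p + (s + 2) * e))

/-- The margin `scale⁻ᵉ` of `|2η - 1|` beyond which networks of the balanced size classify
correctly. -/
def margin (p : ℕ) (s e : ℝ) (n : ℕ) : ℝ := (scale p s e n ^ e)⁻¹

lemma one_le_log {x : ℝ} (hx : 3 ≤ x) : 1 ≤ Real.log x := by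
  rw [Real.le_log_iff_exp_le (by linarith)]
  linarith [Real.exp_one_lt_d9]

lemma margin_le_one {p : ℕ} {s e : ℝ} {n : ℕ} (he : 0 < e) (h1 : 1 ≤ scale p s e n) :
    margin p s e n ≤ 1 :=
  inv_le_one_of_one_le₀ (Real.one_le_rpow h1 he.le)

section scale

variable {p : ℕ} {s e : ℝ} {n : ℕ} (hn : 3 ≤ n)

include hn

lemma one_le_log_natCast : 1 ≤ Real.log n := one_le_log (by exact_mod_cast hn)

lemma div_log_pow_pos : 0 < (n : ℝ) / Real.log n ^ 3 := by
  have := one_le_log_natCast hn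
  have : (0 : ℝ) < n := by exact_mod_cast (by omega : 0 < n)
  positivity

lemma scale_pos : 0 < scale p s e n := Real.rpow_pos_of_pos (div_log_pow_pos hn) _

lemma margin_pos : 0 < margin p s e n := inv_pos.2 (Real.rpow_pos_of_pos (scale_pos hn) _)

lemma scale_rpow (y : ℝ) :
    scale p s e n ^ y = ((n : ℝ) / Real.log n ^ 3) ^ (y / (p + (s + 2) * e)) := by
  rw [scale, ← Real.rpow_mul (div_log_pow_pos hn).le, one_div_mul_eq_div]

lemma scale_pow :
    scale p s e n ^ p = ((n : ℝ) / Real.log n ^ 3) ^ ((p : ℝ) / (p + (s + 2) * e)) := by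
  rw [← scale_rpow hn, Real.rpow_natCast]

lemma margin_rpow (y : ℝ) : margin p s e n ^ y = (scale p s e n ^ (y * e))⁻¹ := by
  rw [margin, Real.inv_rpow (Real.rpow_pos_of_pos (scale_pos hn) _).le,
    ← Real.rpow_mul (scale_pos hn).le, mul_comm]

lemma margin_rpow_eq (y : ℝ) :
    margin p s e n ^ y = (Real.log n ^ 3 / n) ^ (y * e / (p + (s + 2) * e)) := by
  rw [margin_rpow hn, scale_rpow hn, ← Real.inv_rpow (div_log_pow_pos hn).le, inv_div]

lemma natCast_mul_margin (hs : 0 ≤ s) (he : 0 < e) :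
    n * (margin p s e n ^ (s + 1) * margin p s e n) = scale p s e n ^ p * Real.log n ^ 3 := by
  have hu := scale_pos (p := p) (s := s) (e := e) hn
  have hn_eq : (n : ℝ) = scale p s e n ^ p * scale p s e n ^ ((s + 2) * e) * Real.log n ^ 3 := by
    have hlog := one_le_log_natCast hn
    rw [← Real.rpow_natCast, ← Real.rpow_add hu, scale_rpow hn,
      div_self (by positivity), Real.rpow_one]
    field_simp
  rw [← Real.rpow_add_one (margin_pos hn).ne', margin_rpow hn, add_assoc, one_add_one_eq_two]
  nth_rewrite 1 [hn_eq]
  have := (Real.rpow_pos_of_pos hu ((s + 2) * e)).ne'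
  field_simp

variable (hs : 0 ≤ s) (he : 0 < e) (h1 : 1 ≤ scale p s e n)

include hs he h1

lemma scale_pow_le : scale p s e n ^ p ≤ n := by
  have hv := margin_pos (p := p) (s := s) (e := e) hn
  have hv1 := margin_le_one he h1
  calc scale p s e n ^ p ≤ scale p s e n ^ p * Real.log n ^ 3 :=
        le_mul_of_one_le_right (by positivity) (one_le_pow₀ (one_le_log_natCast hn))
    _ = n * (margin p s e n ^ (s + 1) * margin p s e n) := (natCast_mul_margin hn hs he).symm
    _ ≤ n := mul_le_of_le_one_right (Nat.cast_nonneg n)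
        (mul_le_one₀ (Real.rpow_le_one hv.le hv1 (by linarith)) hv.le hv1)

lemma scale_le (hp : 0 < p) : scale p s e n ≤ n :=
  (le_self_pow₀ h1 hp.ne').trans (scale_pow_le hn hs he h1)

end scale

lemma one_le_rpow_mul_margin_rpow {p n : ℕ} {s e δ y : ℝ} (hn : 3 ≤ n) (he : 0 ≤ e) (hδ : 0 < δ)
    (hy : 0 ≤ y) (h : δ * scale p s e n ≤ 1) :
    1 ≤ ((1 / δ) ^ e) ^ y * margin p s e n ^ y := by
  have hu := scale_pos (p := p) (s := s) (e := e) hn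
  rw [← Real.mul_rpow (by positivity) (margin_pos hn).le]
  refine Real.one_le_rpow ?_ hy
  rw [margin, ← div_eq_mul_inv, one_le_div (by positivity)]
  refine Real.rpow_le_rpow hu.le ?_ he
  rwa [le_div_iff₀ hδ, mul_comm]

/-! ## Approximation at a prescribed resolution -/

lemma natCast_add_one_le_three_mul_log {n ℓ : ℕ} (hn : 3 ≤ n) (h : (2 : ℝ) ^ ℓ ≤ n) :
    (ℓ : ℝ) + 1 ≤ 3 * Real.log n := by
  have hlog := Real.log_le_log (by positivity) h
  rw [Real.log_pow] at hlog
  have hhalf : (ℓ : ℝ) * (1 / 2) ≤ ℓ * Real.log 2 := by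
    gcongr
    linarith [Real.log_two_gt_d9]
  linarith [one_le_log_natCast hn]

lemma two_pow_mul_le {δ u : ℝ} {ℓ p : ℕ} (hδ : 0 ≤ δ) (hδ1 : δ ≤ 1) (hu : 0 ≤ u) (hp : 0 < p)
    (h : (2 : ℝ) ^ ℓ ≤ δ * u) : (2 : ℝ) ^ (ℓ * p) ≤ δ * u ^ p :=
  calc (2 : ℝ) ^ (ℓ * p) ≤ (δ * u) ^ p := by rw [pow_mul]; gcongr
    _ = δ ^ p * u ^ p := mul_pow _ _ _
    _ ≤ δ * u ^ p := by gcongr; exact pow_le_of_le_one hδ hδ1 hp.ne'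

lemma inv_two_pow_rpow_le {δ u e : ℝ} {ℓ : ℕ} (hδ : 0 < δ) (hu : 0 < u) (he : 0 ≤ e)
    (h : δ * u < 2 ^ (ℓ + 1)) : ((2 ^ ℓ : ℝ)⁻¹) ^ e ≤ (2 / δ) ^ e * (u ^ e)⁻¹ := by
  rw [← Real.inv_rpow hu.le, ← Real.mul_rpow (by positivity) (by positivity)]
  refine Real.rpow_le_rpow (by positivity) ?_ he
  rw [← div_eq_mul_inv, div_div, inv_le_comm₀ (by positivity) (by positivity), inv_div]
  rw [pow_succ] at h
  linarith

lemma GCHOM.exists_classifier_at_scale {β r : ℝ} (hβ : 0 < β) (hr : 0 < r) (dmax : ℕ)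
    {dstar : ℕ} (hdstar : 0 < dstar) (q : ℕ) :
    ∃ c₃ : ℝ, 0 < c₃ ∧ ∀ (K : ℕ) (a : ℝ), 0 < a → ∃ δ T : ℝ, (0 < δ ∧ δ ≤ 1) ∧ 0 < T ∧
      ∀ (d : ℕ), ∀ f ∈ GCHOM K dmax dstar β r q d, ∀ {n : ℕ} {u G N B : ℝ} {S : ℝ≥0∞},
      3 ≤ n → 1 < δ * u → u ≤ n → c₃ * Real.log n ≤ G → a * u ^ dstar ≤ N → (d : ℝ) ≤ N →
      ENNReal.ofReal (a * Real.log n * u ^ dstar) ≤ S → 1 ≤ B →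
      ∃ g ∈ FNN d G N S B ∞, (∀ x ∈ cube d, |g x| ≤ 1) ∧ ∀ x ∈ cube d, f x ∈ Icc (0 : ℝ) 1 →
        T * (u ^ (β * min 1 β ^ q))⁻¹ < |2 * f x - 1| → g x = sgn (2 * f x - 1) := by
  obtain ⟨Cd, hCd⟩ := GCHOM.exists_classifier hβ hr dmax dstar q
  refine ⟨3 * Cd + 1, by positivity, fun K a ha => ?_⟩
  obtain ⟨C, hC1, hC⟩ := hCd K
  have : (0 : ℝ) < C := by exact_mod_cast hC1
  set e : ℝ := β * min 1 β ^ q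
  obtain ⟨δ, hδ, hδ1, hδa⟩ : ∃ δ : ℝ, 0 < δ ∧ δ ≤ 1 ∧ δ ≤ a / ((3 * Cd + 1) * C) :=
    ⟨min 1 (a / ((3 * Cd + 1) * C)), lt_min one_pos (by positivity), min_le_left _ _,
      min_le_right _ _⟩
  rw [le_div_iff₀ (by positivity)] at hδa
  refine ⟨δ, C * (2 / δ) ^ e, ⟨hδ, hδ1⟩, by positivity,
    fun d f hf n u G N B S hn hδu hun hG hN hd hS hB => ?_⟩
  obtain ⟨ℓ, hℓ, hℓ'⟩ := exists_nat_pow_near hδu.le one_lt_two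
  have hu : 0 < u := pos_of_mul_pos_right (one_pos.trans hδu) hδ.le
  have hlog : (ℓ : ℝ) + 1 ≤ 3 * Real.log n := natCast_add_one_le_three_mul_log hn
    (hℓ.trans ((mul_le_of_le_one_left hu.le hδ1).trans hun))
  have hlog1 := one_le_log_natCast hn
  have hdepth : (Cd : ℝ) * (ℓ + 1) ≤ (3 * Cd + 1) * Real.log n := by
    linarith [mul_le_mul_of_nonneg_left hlog (Nat.cast_nonneg (α := ℝ) Cd)]
  have hwidth : (3 * Cd + 1) * (C * (2 : ℝ) ^ (ℓ * dstar)) ≤ a * u ^ dstar :=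
    calc _ ≤ (3 * Cd + 1) * (C * (δ * u ^ dstar)) := by
          gcongr
          exact two_pow_mul_le hδ.le hδ1 hu.le hdstar hℓ
      _ = δ * ((3 * Cd + 1) * C) * u ^ dstar := by ring
      _ ≤ _ := by gcongr
  have hsize : (Cd : ℝ) * (ℓ + 1) * (C * 2 ^ (ℓ * dstar)) ≤ a * Real.log n * u ^ dstar :=
    calc _ ≤ (3 * Cd + 1) * Real.log n * (C * 2 ^ (ℓ * dstar)) := by gcongr
      _ = Real.log n * ((3 * Cd + 1) * (C * (2 : ℝ) ^ (ℓ * dstar))) := by ring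
      _ ≤ Real.log n * (a * u ^ dstar) := by gcongr
      _ = _ := by ring
  have hCd0 : (0 : ℝ) ≤ Cd * (C * 2 ^ (ℓ * dstar)) := by positivity
  obtain ⟨g, hg, hg1, hgsgn⟩ := hC d f hf ℓ (G := G) (N := N) (by push_cast; linarith)
    (by push_cast; linarith) hd
    (le_trans (by rw [← ofReal_natCast]; exact ofReal_le_ofReal (by push_cast; exact hsize)) hS) hB
  refine ⟨g, hg, hg1, fun x hx hfx ht => hgsgn x hx hfx (lt_of_le_of_lt ?_ ht)⟩
  rw [mul_assoc]
  gcongr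
  exact inv_two_pow_rpow_le hδ hu (by positivity) hℓ'

/-! ## Balancing the error terms -/

lemma le_width_of_mem_FNN {d : ℕ} {G N B : ℝ} {S Fb : ℝ≥0∞} {f : (Fin d → ℝ) → ℝ}
    (hf : f ∈ FNN d G N S B Fb) : (d : ℝ) ≤ N := by
  obtain ⟨net, -, -, hN, -⟩ := hf
  simpa only [net.h0] using hN 0 (Nat.zero_le _)

lemma exists_cover_FNN_log_card_le (d : ℕ) {n : ℕ} {b ν U G N B : ℝ} {S Fb : ℝ≥0∞} (hn : 3 ≤ n)
    (hb : 0 < b) (hν : 0 ≤ ν) (hU : 1 ≤ U) (hUn : U ≤ n) (hG0 : 0 ≤ G)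
    (hG : G ≤ b * Real.log n) (hN1 : 1 ≤ N) (hN : N ≤ b * U) (hB1 : 1 ≤ B)
    (hB : B ≤ b * (n : ℝ) ^ ν) (hS : S ≤ ENNReal.ofReal (b * Real.log n * U)) :
    ∃ J : Type, ∃ _ : Fintype J, ∃ F : J → (Fin d → ℝ) → ℝ, (∀ j, Measurable (F j)) ∧
      Real.log (Fintype.card J) ≤ entropyConst b ν * (U * Real.log n ^ 3) ∧
      ∀ f ∈ FNN d G N S B Fb, ∃ j, ∀ x ∈ cube d, |f x - F j x| ≤ (n : ℝ)⁻¹ := by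
  have hlog := one_le_log_natCast hn
  have hn0 : (0 : ℝ) < n := by exact_mod_cast (by omega : 0 < n)
  have hw : 1 ≤ ⌊N⌋₊ := Nat.le_floor (by exact_mod_cast hN1)
  have hS' : S < (⌊b * Real.log n * U⌋₊ : ℝ≥0∞) + 1 := by
    refine hS.trans_lt ?_
    rw [← ofReal_natCast, ← ofReal_one, ← ofReal_add (by positivity) zero_le_one]
    exact (ofReal_lt_ofReal_iff (by positivity)).2 (Nat.lt_floor_add_one _)
  obtain ⟨J, hJ, F, hF, hcard, hcover⟩ := exists_finite_cover_FNN d (Fb := Fb) hw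
    (Nat.lt_floor_add_one G) (Nat.lt_floor_add_one N) hS' hB1 (inv_pos.2 hn0)
  refine ⟨J, hJ, F, hF, ?_, hcover⟩
  rcases isEmpty_or_nonempty J with _ | _
  · have := entropyConst_nonneg hb hν
    rw [Fintype.card_eq_zero, Nat.cast_zero, Real.log_zero]
    positivity
  · refine (Real.log_le_log (by exact_mod_cast Fintype.card_pos) hcard).trans ?_
    exact log_cover_card_le hb hν hlog (by omega) hU hUn ((Nat.floor_le hG0).trans hG) hw
      ((Nat.floor_le (by linarith)).trans hN) hB1 hB (Nat.floor_le (by positivity))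

/-- The constant in front of `margin ^ (s + 1)` in the excess risk bound, for a noise constant `c`,
an approximation threshold `T * margin` and an entropy constant `κ`. -/
def riskConst (s c T κ : ℝ) : ℝ := 3 + 2 * c * 2 ^ (s + 1) + 4 * c * T ^ (s + 1) + 4 * κ

lemma riskConst_pos {s c T κ : ℝ} (hc : 0 < c) (hT : 0 < T) (hκ : 0 ≤ κ) :
    0 < riskConst s c T κ := by
  unfold riskConst
  positivity

namespace DataDist

variable {d : ℕ} (D : DataDist d)

lemma mul_low_le {c s t : ℝ} (ht : 0 < t) (hlow : D.low t ≤ c * t ^ s) :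
    t * D.low t ≤ c * t ^ (s + 1) :=
  calc t * D.low t ≤ t * (c * t ^ s) := by gcongr
    _ = _ := by rw [Real.rpow_add_one ht.ne']; ring

lemma sum_errors_le {n v s c T κ γ H : ℝ} (hn : 0 < n) (hv : 0 < v) (hT : 0 < T)
    (hlow : ∀ t, 0 < t → D.low t ≤ c * t ^ s) (hvn : 1 ≤ n * v ^ (s + 1))
    (hγ : γ ≤ 2 * (T * v) * D.low (T * v)) (hH : H ≤ κ * (n * (v ^ (s + 1) * v))) :
    3 * n⁻¹ + 8 * (v / 2) * D.low (4 * (v / 2)) + 2 * γ + 2 * H / (v / 2 * n) ≤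
      riskConst s c T κ * v ^ (s + 1) := by
  have hres : n⁻¹ ≤ v ^ (s + 1) := (inv_le_iff_one_le_mul₀' hn).2 hvn
  have hnoise : 2 * v * D.low (2 * v) ≤ c * 2 ^ (s + 1) * v ^ (s + 1) := by
    rw [mul_assoc c, ← Real.mul_rpow zero_le_two hv.le]
    exact D.mul_low_le (by positivity) (hlow _ (by positivity))
  have happrox : T * v * D.low (T * v) ≤ c * T ^ (s + 1) * v ^ (s + 1) := by
    rw [mul_assoc c, ← Real.mul_rpow hT.le hv.le]
    exact D.mul_low_le (by positivity) (hlow _ (by positivity))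
  have hentropy : 2 * H / (v / 2 * n) ≤ 4 * κ * v ^ (s + 1) := by
    rw [div_le_iff₀ (by positivity)]
    linarith
  have hscale : 4 * (v / 2) = 2 * v := by ring
  rw [riskConst, hscale]
  linarith

lemma expectedExcess01_le_margin {n p : ℕ} {s e c b ν T G N B : ℝ} {S : ℝ≥0∞}
    {A : Estimator d n} {f g : (Fin d → ℝ) → ℝ} (hn : 3 ≤ n) (hs : 0 ≤ s) (he : 0 < e)
    (hb : 0 < b) (hν : 0 ≤ ν) (hT : 0 < T) (hscale : 1 ≤ scale p s e n) (hG0 : 0 ≤ G)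
    (hG : G ≤ b * Real.log n) (hN1 : 1 ≤ N) (hN : N ≤ b * scale p s e n ^ p) (hB1 : 1 ≤ B)
    (hB : B ≤ b * (n : ℝ) ^ ν)
    (hS : S ≤ ENNReal.ofReal (b * Real.log n * scale p s e n ^ p))
    (hA : ∀ ω, IsERM hinge (FNN d G N S B ∞) ω (A ω))
    (hlow : ∀ t, 0 < t → D.low t ≤ c * t ^ s) (hf : ∀ᵐ x ∂D.Q, D.η x = f x)
    (hg : g ∈ FNN d G N S B ∞) (hg1 : ∀ x ∈ cube d, |g x| ≤ 1)
    (hgf : ∀ x ∈ cube d, f x ∈ Icc (0 : ℝ) 1 → T * margin p s e n < |2 * f x - 1| →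
      g x = sgn (2 * f x - 1)) :
    expectedExcess01 D.P A ≤
      riskConst s c T (entropyConst b ν) * margin p s e n ^ (s + 1) := by
  have hn0 : (0 : ℝ) < n := by exact_mod_cast (by omega : 0 < n)
  have hlog : 1 ≤ Real.log n := one_le_log_natCast hn
  have hv : 0 < margin p s e n := margin_pos hn
  have hv1 : margin p s e n ≤ 1 := margin_le_one he hscale
  have hU : 1 ≤ scale p s e n ^ p := one_le_pow₀ hscale
  have hbalance := natCast_mul_margin (p := p) hn hs he
  have hvn : 1 ≤ n * margin p s e n ^ (s + 1) :=
    calc 1 ≤ scale p s e n ^ p * Real.log n ^ 3 :=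
          one_le_mul_of_one_le_of_one_le hU (one_le_pow₀ hlog)
      _ = n * (margin p s e n ^ (s + 1) * margin p s e n) := hbalance.symm
      _ ≤ _ := by gcongr; exact mul_le_of_le_one_right (by positivity) hv1
  have hmeas : ∀ h ∈ FNN d G N S B ∞, Measurable h := fun h hh => measurable_of_mem_FNN hh
  obtain ⟨J, _, F, hF, hcard, hcover⟩ := exists_cover_FNN_log_card_le d (Fb := ∞) hn hb hν hU
    (scale_pow_le hn hs he hscale) hG0 hG hN1 hN hB1 hB hS
  rw [← hbalance] at hcard
  exact (D.expectedExcess01_le (by omega) hmeas hA hF hcover hg hg1 (half_pos hv)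
    (by linarith)).trans
    (D.sum_errors_le hn0 hv hT hlow hvn (D.gap_trunc_le (hmeas g hg) hf hgf) hcard)

end DataDist

/-- Theorem 3.1 : rates for hinge-loss ReLU DNN classifiers, `s < ∞`. -/
theorem statement_2
    (dmax dstar q : ℕ) (hdmax : 0 < dmax) (hdstar : 0 < dstar)
    (β r : ℝ) (hβ : 0 < β) (hr : 0 < r) :
    ∃ c3 : ℝ, 0 < c3 ∧
      ∀ (K : ℕ), 0 < K → ∀ (τ : ℝ≥0∞), 0 < τ → ∀ (s : ℝ), 0 ≤ s → ∀ (a : ℝ), 0 < a →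
      ∃ c1 : ℝ, 3 ≤ c1 ∧
        ∀ (d : ℕ), 0 < d → ∀ (α : ℝ), 0 < α → ∀ (ν : ℝ), 0 ≤ ν → ∀ (b : ℝ), 0 < b →
        ∃ c2 : ℝ, 0 < c2 ∧
          ∀ (n : ℕ) (G N B : ℝ) (S : ℝ≥0∞),
            0 < G → 1 ≤ N → 0 < S → 0 < B →
            dstar ≤ d → dstar * q ≤ K * q → ¬(α < 1 ∧ 1 ≤ τ) →
            c1 ≤ (n : ℝ) →
            c3 * Real.log n ≤ G → G ≤ b * Real.log n →
            a * ((n : ℝ) / Real.log n ^ 3) ^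
                ((dstar : ℝ) / ((dstar : ℝ) + (s + 2) * (β * min 1 β ^ q))) ≤ N →
            N ≤ b * ((n : ℝ) / Real.log n ^ 3) ^
                ((dstar : ℝ) / ((dstar : ℝ) + (s + 2) * (β * min 1 β ^ q))) →
            1 ≤ B → B ≤ b * (n : ℝ) ^ ν →
            ENNReal.ofReal (a * Real.log n * ((n : ℝ) / Real.log n ^ 3) ^
                ((dstar : ℝ) / ((dstar : ℝ) + (s + 2) * (β * min 1 β ^ q)))) ≤ S →
            S ≤ ENNReal.ofReal (b * Real.log n * ((n : ℝ) / Real.log n ^ 3) ^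
                ((dstar : ℝ) / ((dstar : ℝ) + (s + 2) * (β * min 1 β ^ q)))) →
            ∀ A : Estimator d n, A.Meas → (∀ ω, IsERM hinge (FNN d G N S B ∞) ω (A ω)) →
            (⨆ D : ↥(HCHOM d q K dstar dmax β r ∩ Tsybakov d (ENNReal.ofReal s) α τ),
                expectedExcess01 D.1.P A) ≤
              c2 * (Real.log n ^ 3 / n) ^
                ((s + 1) * (β * min 1 β ^ q) /
                  ((dstar : ℝ) + (s + 2) * (β * min 1 β ^ q))) := by
  obtain ⟨c₃, hc₃, hnet⟩ := GCHOM.exists_classifier_at_scale hβ hr dmax hdstar q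
  refine ⟨c₃, hc₃, fun K _ τ hτ s hs a ha => ⟨3, le_rfl, fun d _ α hα ν hν b hb => ?_⟩⟩
  obtain ⟨δ, T, ⟨hδ, hδ1⟩, hT, hnet⟩ := hnet K a ha
  obtain ⟨c, hc, hlow⟩ := DataDist.exists_low_le hs hα hτ
  have hrisk := riskConst_pos (s := s) hc hT (entropyConst_nonneg hb hν)
  set e : ℝ := β * min 1 β ^ q
  have he : 0 < e := by positivity
  refine ⟨((1 / δ) ^ e) ^ (s + 1) + riskConst s c T (entropyConst b ν), by positivity, ?_⟩
  intro n G N B S hG0 hN1 _ _ _ _ _ hn hG hG' hN hN' hB hB' hS hS' A _ hA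
  have hn3 : 3 ≤ n := by exact_mod_cast hn
  have hv : 0 < margin dstar s e n := margin_pos hn3
  rw [← scale_pow hn3] at hN hN' hS hS'
  rw [← margin_rpow_eq hn3, add_mul]
  refine Real.iSup_le (fun ⟨D, ⟨f, hf, hfη⟩, hD⟩ => ?_) (by positivity)
  rcases le_or_gt (δ * scale dstar s e n) 1 with hsmall | hbig
  · exact (D.expectedExcess01_le_one A fun ω => measurable_of_mem_FNN (hA ω).1).trans
      ((one_le_rpow_mul_margin_rpow hn3 he.le hδ (by positivity) hsmall).trans
        (le_add_of_nonneg_right (by positivity)))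
  · have hscale := hbig.le.trans (mul_le_of_le_one_left (scale_pos hn3).le hδ1)
    obtain ⟨g, hg, hg1, hgf⟩ := hnet d f hf hn3 hbig (scale_le hn3 hs he hscale hdstar) hG hN
      (le_width_of_mem_FNN (hA fun _ => 0).1) hS hB
    exact (D.expectedExcess01_le_margin hn3 hs he hb hν hT hscale hG0.le hG' hN1 hN' hB hB' hS' hA
      (hlow d D hD) hfη hg hg1 hgf).trans (le_add_of_nonneg_left (by positivity))

end ZZS
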